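/- Let R be a commutative Noetherian ring of finite Krull dimension d, let B = R[X_1,…,X_m,Y_1^{±1},…,Y_n^{±1}] be a Laurent polynomial ring over R, let f ∈ R[Y] be a monic polynomial in one further variable Y, and let A = B[Y, f^{-1}] be the localization of B[Y] at the powers of f. Then every finitely generated projective A-module of constant rank ≥ d+1 has a unimodular element. -/

import Mathlib

open MvPolynomial TensorProduct

noncomputable section

/-- The submonoid of the polynomial ring `R[X_1,…,X_m,Y_1,…,Y_n]` generated by the
`Y`-variables; inverting it produces the Laurent polynomial ring
`B = R[X_1,…,X_m,Y_1^{±1},…,Y_n^{±1}]`. -/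
def Ymonoid (R : Type*) [CommRing R] (m n : ℕ) :
    Submonoid (MvPolynomial (Fin m ⊕ Fin n) R) :=
  Submonoid.closure (Set.range fun j : Fin n => (X (Sum.inr j) : MvPolynomial (Fin m ⊕ Fin n) R))

universe u


/-! ### Part 1: matrices of polynomials -/

open Matrix in
theorem SD.taylor_expand {A : Type*} [CommRing A] {ι : Type*} [Fintype ι] [DecidableEq ι]
    (G : Matrix ι ι (Polynomial A)) (x : A) :
    (Polynomial.taylorAlgHom x).toRingHom.mapMatrix G =
      (G.map fun p => Polynomial.C (p.eval x)) +
       (Polynomial.X : Polynomial A) • (G.map fun p => (Polynomial.taylor x p).divX) := by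
  ext1 i j
  simp only [RingHom.mapMatrix_apply, Matrix.map_apply, Matrix.add_apply, Matrix.smul_apply,
    smul_eq_mul]
  have := Polynomial.X_mul_divX_add (Polynomial.taylor x (G i j))
  rw [Polynomial.taylor_coeff_zero] at this
  rw [add_comm]
  exact this.symm

theorem SD.lemL {A : Type*} [CommRing A] {ι : Type*} [Fintype ι] [DecidableEq ι]
    (G H : Matrix ι ι (Polynomial A)) (c : A)
    (h1 : G * H = (Polynomial.C c) • 1) (h2 : H * G = (Polynomial.C c) • 1) (x y : A) :
    ∃ K K' : Matrix ι ι A, K + K' + y • (K * K') = 0 ∧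
      (1 + y • K) * G.map (Polynomial.eval x) = G.map (Polynomial.eval (x + c * y)) := by
  set G0 := G.map (Polynomial.eval x) with hG0
  set H0 := H.map (Polynomial.eval x) with hH0
  set D := G.map fun p => (Polynomial.taylor x p).divX with hD
  set D' := H.map fun p => (Polynomial.taylor x p).divX with hD'
  have e0 : H0 * G0 = c • 1 := by
    have := congrArg (Polynomial.evalRingHom x).mapMatrix h2
    rw [map_mul] at this
    refine this.trans ?_
    ext i j
    rcases eq_or_ne i j with rfl | h <;> simp [Matrix.one_apply, *]
  have e0' : G0 * H0 = c • 1 := by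
    have := congrArg (Polynomial.evalRingHom x).mapMatrix h1
    rw [map_mul] at this
    refine this.trans ?_
    ext i j
    rcases eq_or_ne i j with rfl | h <;> simp [Matrix.one_apply, *]
  have e1 : ((Polynomial.C (R := A)).mapMatrix G0 + (Polynomial.X : Polynomial A) • D) *
      ((Polynomial.C (R := A)).mapMatrix H0 + (Polynomial.X : Polynomial A) • D')
      = (Polynomial.C c) • 1 := by
    have := congrArg (Polynomial.taylorAlgHom x).toRingHom.mapMatrix h1
    rw [map_mul, SD.taylor_expand, SD.taylor_expand] at this
    refine Eq.trans this ?_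
    ext1 i j
    rcases eq_or_ne i j with rfl | h <;> simp [Matrix.one_apply, *]
  have e2 : D * (Polynomial.C (R := A)).mapMatrix H0 + (Polynomial.C (R := A)).mapMatrix G0 * D'
      + (Polynomial.X : Polynomial A) • (D * D') = 0 := by
    have e3 : (Polynomial.C (R := A)).mapMatrix G0 * (Polynomial.C (R := A)).mapMatrix H0 =
        (Polynomial.C c) • 1 := by
      rw [← map_mul, e0']
      ext1 i j
      rcases eq_or_ne i j with rfl | h <;> simp [Matrix.one_apply, *]
    have e4 : (Polynomial.X : Polynomial A) • (D * (Polynomial.C (R := A)).mapMatrix H0 +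
      (Polynomial.C (R := A)).mapMatrix G0 * D' + (Polynomial.X : Polynomial A) • (D * D')) = 0 := by
      rw [← sub_eq_zero.2 (e1.trans e3.symm)]
      simp only [mul_add, add_mul, Matrix.smul_mul, Matrix.mul_smul, smul_add]
      abel
    ext1 i j
    have := congrFun (congrFun e4 i) j
    rw [Matrix.smul_apply, smul_eq_mul, Matrix.zero_apply, Polynomial.X_mul] at this
    exact (Polynomial.monic_X.mul_left_eq_zero_iff).1 this
  set d := (Polynomial.evalRingHom (c * y)).mapMatrix D with hd
  set d' := (Polynomial.evalRingHom (c * y)).mapMatrix D' with hd'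
  have e5 : d * H0 + G0 * d' + (c * y) • (d * d') = 0 := by
    have := congrArg (Polynomial.evalRingHom (c * y)).mapMatrix e2
    simp only [map_add, map_mul, map_zero] at this
    refine Eq.trans ?_ this
    rw [hd, hd']
    congr 1
    · congr 2
      · ext; simp
      · ext; simp
    · rw [← map_mul]
      ext; simp
  refine ⟨d * H0, G0 * d', ?_, ?_⟩
  · rw [← e5]
    congr 1
    rw [Matrix.mul_assoc, ← Matrix.mul_assoc H0, e0]
    simp [smul_smul, mul_comm]
  · rw [add_mul, one_mul, Matrix.smul_mul, Matrix.mul_assoc, e0]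
    ext i j
    have := congrArg (Polynomial.eval (c * y)) (Polynomial.X_mul_divX_add (Polynomial.taylor x (G i j)))
    rw [Polynomial.taylor_coeff_zero, Polynomial.taylor_eval] at this
    rw [add_comm x, Matrix.map_apply, ← this]
    simp [hG0, hd, hD]
    ring

/-- Two vectors in the same orbit. -/
def SD.GLEq {A : Type*} [CommRing A] {ι : Type*} [Fintype ι] [DecidableEq ι] (v w : ι → A) : Prop :=
  ∃ M : (Matrix ι ι A)ˣ, M.1.mulVec v = w

theorem SD.GLEq.refl {A : Type*} [CommRing A] {ι : Type*} [Fintype ι] [DecidableEq ι] (v : ι → A) :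
    SD.GLEq v v := ⟨1, by simp⟩

theorem SD.GLEq.symm {A : Type*} [CommRing A] {ι : Type*} [Fintype ι] [DecidableEq ι] {v w : ι → A}
    (h : SD.GLEq v w) : SD.GLEq w v := by
  obtain ⟨M, rfl⟩ := h
  exact ⟨M⁻¹, by simp [Matrix.mulVec_mulVec]⟩

theorem SD.GLEq.trans {A : Type*} [CommRing A] {ι : Type*} [Fintype ι] [DecidableEq ι]
    {u v w : ι → A} (h : SD.GLEq u v) (h' : SD.GLEq v w) : SD.GLEq u w := by
  obtain ⟨M, rfl⟩ := h
  obtain ⟨N, rfl⟩ := h'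
  exact ⟨N * M, by simp [Matrix.mulVec_mulVec]⟩


theorem SD.GLEq.of_comp {A : Type*} [CommRing A] {ι ι' : Type*} [Fintype ι] [DecidableEq ι]
    [Fintype ι'] [DecidableEq ι'] (e : ι' ≃ ι)
    {v w : ι → A} (h : SD.GLEq (v ∘ e) (w ∘ e)) : SD.GLEq v w := by
  obtain ⟨M, h⟩ := h
  refine ⟨Units.map (Matrix.reindexAlgEquiv A A e).toMonoidHom M, ?_⟩
  have : (Matrix.reindexAlgEquiv A A e M.1).mulVec v = w := by
    simp only [Matrix.coe_reindexAlgEquiv]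
    rw [Matrix.reindex_apply, Matrix.submatrix_mulVec_equiv]
    simp only [Equiv.symm_symm, h]
    ext; simp
  exact this

theorem SD.suslin_aux {S : Type*} [CommRing S] {κ : Type*} [Fintype κ] [DecidableEq κ]
    (f : Fin 2 ⊕ κ → Polynomial S) (g1 g2 : Polynomial S) (c : S)
    (h : f (Sum.inl 0) * g1 + f (Sum.inl 1) * g2 = Polynomial.C c) (x y : S) :
    SD.GLEq (fun i => (f i).eval x) (fun i => (f i).eval (x + c * y)) := by
  let N : Matrix (Fin 2) (Fin 2) (Polynomial S) := !![f (Sum.inl 0), -g2; f (Sum.inl 1), g1]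
  let N' : Matrix (Fin 2) (Fin 2) (Polynomial S) := !![g1, g2; -f (Sum.inl 1), f (Sum.inl 0)]
  let F : Matrix κ (Fin 2) (Polynomial S) := Matrix.of fun k j => if j = 0 then f (Sum.inr k) else 0
  have hN : N * N' = Polynomial.C c • 1 := by
    ext1 i j; fin_cases i <;> fin_cases j <;> simp [N, N', ← h] <;> ring
  have hN' : N' * N = Polynomial.C c • 1 := by
    ext1 i j; fin_cases i <;> fin_cases j <;> simp [N, N', ← h] <;> ring
  obtain ⟨K, K', h1, h2⟩ := SD.lemL (Matrix.fromBlocks N 0 F 1)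
    (Matrix.fromBlocks N' 0 (-(F * N')) (Polynomial.C c • 1)) c (by
      rw [Matrix.fromBlocks_multiply, ← Matrix.fromBlocks_one, Matrix.fromBlocks_smul]
      simp [hN]) (by
      rw [Matrix.fromBlocks_multiply, ← Matrix.fromBlocks_one, Matrix.fromBlocks_smul]
      simp [hN', Matrix.mul_assoc]) x y
  have h3 : (1 + y • K) * (1 + y • K') = 1 := by
    have : (1 + y • K) * (1 + y • K') = 1 + y • (K + K' + y • (K * K')) := by
      simp only [mul_add, add_mul, smul_add, Matrix.smul_mul, Matrix.mul_smul, one_mul, mul_one]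
      abel
    rw [this, h1]; simp
  refine ⟨⟨1 + y • K, 1 + y • K', h3, mul_eq_one_comm.1 h3⟩, ?_⟩
  have h4 : ∀ z : S, (fun i => (f i).eval z) =
    (Matrix.map (Matrix.fromBlocks N 0 F (1 : Matrix κ κ _)) (Polynomial.eval z)).col (Sum.inl 0) := by
    intro z
    ext i
    rcases i with i | i
    · fin_cases i <;> simp [N]
    · simp [F]
  rw [h4, h4, ← h2]
  ext i
  simp [Matrix.mulVec, dotProduct, Matrix.mul_apply]

theorem SD.suslin {S : Type*} [CommRing S] {A : Type*} [CommRing A] [Algebra S A]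
    {ι : Type*} [Fintype ι] [DecidableEq ι]
    (f : ι → Polynomial S) {i j : ι} (hij : i ≠ j) (g1 g2 : Polynomial S) (c : S)
    (h : f i * g1 + f j * g2 = Polynomial.C c) (x y : A) :
    SD.GLEq (fun i => Polynomial.aeval x (f i))
      (fun i => Polynomial.aeval (x + algebraMap S A c * y) (f i)) := by
  let e0 : Fin 2 → ι := ![i, j]
  have he0 : Function.Injective e0 := by
    intro a b; fin_cases a <;> fin_cases b <;> simp [e0, hij, hij.symm]
  classical
  let e : Fin 2 ⊕ ((Set.range e0)ᶜ : Set ι) ≃ ι :=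
    (Equiv.sumCongr (Equiv.ofInjective e0 he0) (Equiv.refl _)).trans (Equiv.Set.sumCompl _)
  apply SD.GLEq.of_comp e
  have := SD.suslin_aux (fun k => (f (e k)).map (algebraMap S A)) (g1.map (algebraMap S A))
    (g2.map (algebraMap S A)) (algebraMap S A c) (by
      have h0 : e (Sum.inl 0) = i := rfl
      have h1 : e (Sum.inl 1) = j := rfl
      rw [h0, h1, ← Polynomial.map_mul, ← Polynomial.map_mul, ← Polynomial.map_add, h,
        Polynomial.map_C]) x y
  simpa [Polynomial.eval_map_algebraMap, Function.comp_def] using this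

/-- coset avoidance in a PID -/
theorem SD.coset_avoid {k : Type*} [CommRing k] [IsDomain k] [IsPrincipalIdealRing k] (a b h : k) (hh : h ≠ 0)
    (hab : ∃ x y z, x * a + y * b + z * h = 1) : ∃ c, IsCoprime (a + c * b) h := by
  classical
  let s := (UniqueFactorizationMonoid.factors h).filter (fun p => ¬ p ∣ a)
  refine ⟨s.prod, ?_⟩
  rw [isCoprime_comm]
  refine isCoprime_of_prime_dvd (by simp [hh]) ?_
  intro p hp hph hpa
  obtain ⟨q, hq, hpq⟩ := UniqueFactorizationMonoid.exists_mem_factors_of_dvd hh hp.irreducible hph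
  by_cases hpa' : p ∣ a
  · have h1 : p ∣ s.prod * b := (dvd_add_right hpa').1 hpa
    rcases hp.dvd_or_dvd h1 with h2 | h2
    · obtain ⟨q', hq', h3⟩ := hp.exists_mem_multiset_dvd h2
      rw [Multiset.mem_filter] at hq'
      have h4 := UniqueFactorizationMonoid.irreducible_of_factor _ hq'.1
      have := (Irreducible.associated_of_dvd hp.irreducible h4 h3)
      exact hq'.2 (this.symm.dvd.trans hpa')
    · obtain ⟨x, y, z, e⟩ := hab
      apply hp.not_isUnit
      apply isUnit_of_dvd_one
      rw [← e]
      exact dvd_add (dvd_add (hpa'.mul_left _) (h2.mul_left _)) (hph.mul_left _)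
  · apply hpa'
    have h1 : p ∣ s.prod := by
      refine hpq.dvd.trans (Multiset.dvd_prod ?_)
      rw [Multiset.mem_filter]
      exact ⟨hq, fun h => hpa' (hpq.dvd.trans h)⟩
    exact (dvd_add_left (h1.mul_right b)).1 hpa

/-- the ideal-theoretic step -/
theorem SD.res_step {S : Type*} [CommRing S] (m : Ideal S) [m.IsMaximal] (f g : Polynomial S)
    (D : ℕ) (hD : f.natDegree ≤ D) (hc : f.coeff D ∉ m)
    (hco : IsCoprime (f.map (Ideal.Quotient.mk m)) (g.map (Ideal.Quotient.mk m))) :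
    ∃ c ∉ m, ∃ p q, f * p + g * q = Polynomial.C c := by
  let _ := Ideal.Quotient.field m
  set φ := Ideal.Quotient.mk m
  by_cases hD0 : D = 0
  · subst hD0
    refine ⟨f.coeff 0, hc, 1, 0, ?_⟩
    rw [mul_one, mul_zero, add_zero]
    exact Polynomial.eq_C_of_natDegree_le_zero hD
  obtain ⟨p, q, -, -, h⟩ := Polynomial.exists_mul_add_mul_eq_C_resultant f g hD le_rfl (Or.inl hD0)
  refine ⟨_, ?_, p, q, h⟩
  have hfc : (f.map φ).coeff D ≠ 0 := by
    rw [Polynomial.coeff_map]; exact fun h => hc (Ideal.Quotient.eq_zero_iff_mem.1 h)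
  have hfd : (f.map φ).natDegree = D := le_antisymm (Polynomial.natDegree_map_le.trans hD)
    (Polynomial.le_natDegree_of_ne_zero hfc)
  intro hmem
  rw [← Ideal.Quotient.eq_zero_iff_mem, ← Polynomial.resultant_map_map] at hmem
  obtain ⟨k, hk⟩ := Nat.exists_eq_add_of_le (Polynomial.natDegree_map_le (p := g) (f := φ))
  rw [hk, Polynomial.resultant_add_right_deg _ _ _ _ k le_rfl] at hmem
  rw [mul_eq_zero] at hmem
  rcases hmem with h | h
  · exact pow_ne_zero _ hfc h
  · rw [← hfd] at h
    rw [Polynomial.resultant_eq_zero_iff] at h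
    exact h.2 hco


def SD.elem {A : Type*} [CommRing A] {ι : Type*} [Fintype ι] [DecidableEq ι] (u w : ι → A)
    (h : w ⬝ᵥ u = 0) : (Matrix ι ι A)ˣ where
  val := 1 + Matrix.vecMulVec u w
  inv := 1 - Matrix.vecMulVec u w
  val_inv := by
    have : Matrix.vecMulVec u w * Matrix.vecMulVec u w = 0 := by
      rw [Matrix.vecMulVec_mul_vecMulVec, h]; simp
    simp [mul_sub, add_mul, this]
  inv_val := by
    have : Matrix.vecMulVec u w * Matrix.vecMulVec u w = 0 := by
      rw [Matrix.vecMulVec_mul_vecMulVec, h]; simp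
    simp [mul_add, sub_mul, this]

theorem SD.elem_mulVec {A : Type*} [CommRing A] {ι : Type*} [Fintype ι] [DecidableEq ι] (u w v : ι → A)
    (h : w ⬝ᵥ u = 0) : (SD.elem u w h).1.mulVec v = v + (w ⬝ᵥ v) • u := by
  change (1 + Matrix.vecMulVec u w).mulVec v = _
  rw [Matrix.add_mulVec, Matrix.one_mulVec, Matrix.vecMulVec_mulVec]
  simp

theorem SD.HL_local {S : Type*} [CommRing S] {ι : Type*} [Fintype ι] [DecidableEq ι] [Nontrivial ι]
    (f : ι → Polynomial S) (hum : ∃ g : ι → Polynomial S, ∑ i, g i * f i = 1)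
    (m : Ideal S) [m.IsMaximal] (j : ι) (D : ℕ) (hD : (f j).natDegree ≤ D) (hj : (f j).coeff D ∉ m) :
    ∃ c ∉ m, ∀ x y : Polynomial S, SD.GLEq (fun i => Polynomial.aeval x (f i))
      (fun i => Polynomial.aeval (x + Polynomial.C c * y) (f i)) := by
  obtain ⟨g, hg⟩ := hum
  obtain ⟨i, hij⟩ := exists_ne j
  let φ := Ideal.Quotient.mk m
  let _ := Ideal.Quotient.field m
  let w : ι → Polynomial S := fun l => if l = i ∨ l = j then 0 else g l
  have hsum : g i * f i + w ⬝ᵥ f + g j * f j = 1 := by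
    rw [← hg, dotProduct, ← Finset.add_sum_erase Finset.univ _ (Finset.mem_univ i),
      ← Finset.add_sum_erase (Finset.univ.erase i) (a := j) _ (by simp [hij.symm]),
      ← Finset.add_sum_erase Finset.univ _ (Finset.mem_univ i),
      ← Finset.add_sum_erase (Finset.univ.erase i) (a := j) _ (by simp [hij.symm])]
    have : ∑ x ∈ (Finset.univ.erase i).erase j, w x * f x =
        ∑ x ∈ (Finset.univ.erase i).erase j, g x * f x := by
      refine Finset.sum_congr rfl fun l hl => ?_
      simp only [Finset.mem_erase, Finset.mem_univ, and_true] at hl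
      simp [w, hl.1, hl.2]
    rw [this]
    simp [w]
    ring
  obtain ⟨c', hc'⟩ := SD.coset_avoid ((f i).map φ) ((w ⬝ᵥ f).map φ) ((f j).map φ) (by
    intro h
    have := congrArg (fun p => p.coeff D) h
    simp only [Polynomial.coeff_map, Polynomial.coeff_zero] at this
    exact hj (Ideal.Quotient.eq_zero_iff_mem.1 this)) ⟨(g i).map φ, 1, (g j).map φ, by
      simpa using congrArg (Polynomial.map φ) hsum⟩
  obtain ⟨c, rfl⟩ := Polynomial.map_surjective φ Ideal.Quotient.mk_surjective c'
  rw [← Polynomial.map_mul, ← Polynomial.map_add, isCoprime_comm] at hc'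
  obtain ⟨r, hr, p, q, hpq⟩ := SD.res_step m _ _ D hD hj hc'
  refine ⟨r, hr, ?_⟩
  have hwi : (c • w) ⬝ᵥ Pi.single i 1 = 0 := by simp [w]
  let f' : ι → Polynomial S := f + ((c • w) ⬝ᵥ f) • (Pi.single i 1)
  have hf'i : f' i = f i + c * (w ⬝ᵥ f) := by simp [f']
  have hf'j : f' j = f j := by simp [f', hij.symm]
  have key : ∀ x : Polynomial S, SD.GLEq (fun i => Polynomial.aeval x (f i))
      (fun i => Polynomial.aeval x (f' i)) := by
    intro x
    refine ⟨SD.elem (Pi.single i 1) (fun l => Polynomial.aeval x (c * w l)) (by simp [w]), ?_⟩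
    rw [SD.elem_mulVec]
    ext1 l
    simp only [f', Pi.add_apply, Pi.smul_apply, smul_eq_mul, map_add, map_mul, dotProduct, map_sum]
    congr 2
    rcases eq_or_ne l i with rfl | h <;> simp [*]
  intro x y
  refine (key x).trans (SD.GLEq.trans ?_ (key _).symm)
  exact SD.suslin f' hij.symm p q r (by rw [hf'i, hf'j, hpq]) x y

theorem SD.HL {S : Type*} [CommRing S] {ι : Type*} [Fintype ι] [DecidableEq ι] [Nontrivial ι]
    (f : ι → Polynomial S) (hum : ∃ g : ι → Polynomial S, ∑ i, g i * f i = 1)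
    (hm : ∀ m : Ideal S, m.IsMaximal →
      ∃ (j : ι) (D : ℕ), (f j).natDegree ≤ D ∧ (f j).coeff D ∉ m) :
    ∃ α : (Matrix ι ι (Polynomial S))ˣ, (Polynomial.evalRingHom 0).mapMatrix α.1 = 1 ∧
      f = α.1.mulVec (fun i => Polynomial.C ((f i).eval 0)) := by
  let I : Ideal S :=
    { carrier := {c | ∀ x y : Polynomial S, SD.GLEq (fun i => Polynomial.aeval x (f i))
        (fun i => Polynomial.aeval (x + Polynomial.C c * y) (f i))}
      zero_mem' := by
        intro x y
        simpa using SD.GLEq.refl _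
      add_mem' := by
        intro a b ha hb x y
        have := (ha x y).trans (hb _ y)
        rw [add_assoc, ← add_mul, ← Polynomial.C_add] at this
        exact this
      smul_mem' := by
        intro c a ha x y
        have := ha x (Polynomial.C c * y)
        rw [← mul_assoc, ← Polynomial.C_mul, mul_comm a c] at this
        exact this }
  have hI : (1 : S) ∈ I := by
    rw [← Ideal.eq_top_iff_one]
    by_contra hne
    obtain ⟨m, hmm, hle⟩ := Ideal.exists_le_maximal I hne
    obtain ⟨j, D, hD, hj⟩ := hm m hmm
    obtain ⟨c, hc, h⟩ := SD.HL_local f hum m j D hD hj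
    exact hc (hle h)
  obtain ⟨α, hα⟩ := hI 0 Polynomial.X
  have e0 : ∀ i, Polynomial.aeval (0 : Polynomial S) (f i) = Polynomial.C ((f i).eval 0) := by
    intro i
    rw [← Polynomial.C_0, Polynomial.aeval_def, Polynomial.algebraMap_eq, Polynomial.eval₂_hom]
  simp only [Polynomial.C_1, one_mul, zero_add, Polynomial.aeval_X_left_apply, e0] at hα
  set f0 : ι → S := fun i => (f i).eval 0 with hf0
  let α0 : (Matrix ι ι S)ˣ := Units.map (Polynomial.evalRingHom (0:S)).mapMatrix.toMonoidHom α
  let α0' : (Matrix ι ι (Polynomial S))ˣ := Units.map (Polynomial.C (R := S)).mapMatrix.toMonoidHom α0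
  have h0 : α0.1.mulVec f0 = f0 := by
    have := congrArg (fun v : ι → Polynomial S => fun i => (v i).eval 0) hα
    refine Eq.trans ?_ this
    ext i
    simp [α0, Matrix.mulVec, dotProduct, hf0, Polynomial.eval_finsetSum]
  have h0' : α0'.1.mulVec (fun i => Polynomial.C (f0 i)) = fun i => Polynomial.C (f0 i) := by
    conv_rhs => rw [← h0]
    ext1 i
    simp [α0', Matrix.mulVec, dotProduct]
  have h0'' : (α0'⁻¹).1.mulVec (fun i => Polynomial.C (f0 i)) = fun i => Polynomial.C (f0 i) := by
    conv_lhs => rw [← h0', Matrix.mulVec_mulVec, Units.inv_mul, Matrix.one_mulVec]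
  refine ⟨α * α0'⁻¹, ?_, ?_⟩
  · have : Units.map (Polynomial.evalRingHom (0:S)).mapMatrix.toMonoidHom (α * α0'⁻¹) = 1 := by
      rw [map_mul, map_inv]
      have : Units.map (Polynomial.evalRingHom (0:S)).mapMatrix.toMonoidHom α0' = α0 := by
        ext i j
        simp [α0', α0]
      rw [this]
      exact mul_inv_cancel _
    exact congrArg Units.val this
  · rw [Units.val_mul, ← Matrix.mulVec_mulVec, h0'', hα]


theorem SD.row_poly {S : Type*} [CommRing S] {ι : Type*} [Fintype ι] [DecidableEq ι] [Nontrivial ι]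
    (w : ι → Polynomial S) (hum : ∃ g : ι → Polynomial S, ∑ i, g i * w i = 1) (i0 : ι) (D : ℕ)
    (hle : ∀ i, (w i).natDegree ≤ D) (h0 : (w i0).coeff D = 1) (hi : ∀ i ≠ i0, (w i).coeff D = 0) :
    ∃ α β : (Matrix ι ι (Polynomial S))ˣ, (Polynomial.evalRingHom 0).mapMatrix α.1 = 1 ∧
      (Polynomial.evalRingHom 0).mapMatrix β.1 = 1 ∧
      w = α.1.mulVec (fun i => Polynomial.C ((w i).eval 0)) ∧
      (fun i => (w i).eval 1) = ((Polynomial.evalRingHom 1).mapMatrix β.1).mulVec (Pi.single i0 1) := by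
  obtain ⟨α, hα0, hα⟩ := SD.HL w hum (fun m hm => ⟨i0, D, hle i0, by
    rw [h0]; exact fun h => hm.ne_top ((Ideal.eq_top_iff_one _).2 h)⟩)
  let w' : ι → Polynomial S := fun i => (w i).reflect D
  have hw'0 : (fun i => (w' i).eval 0) = Pi.single i0 1 := by
    ext i
    rw [← Polynomial.coeff_zero_eq_eval_zero, Polynomial.coeff_reflect, Polynomial.revAt_zero]
    rcases eq_or_ne i i0 with rfl | h
    · simp [h0]
    · simp [hi i h, h]
  have hw'D : ∀ i, (w' i).coeff D = (w i).eval 0 := by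
    intro i
    rw [← Polynomial.coeff_zero_eq_eval_zero, Polynomial.coeff_reflect, Polynomial.revAt_le le_rfl,
      Nat.sub_self]
  have hum' : ∃ g : ι → Polynomial S, ∑ i, g i * w' i = 1 := by
    have hX : Ideal.span (Set.range w') = ⊤ := by
      obtain ⟨g, hg⟩ := hum
      let N := Finset.univ.sup (fun i => (g i).natDegree)
      have h1 : ∑ i, (g i).reflect N * w' i = Polynomial.X ^ (N + D) := by
        have h2 : ∀ s : Finset ι, (∑ i ∈ s, g i * w i).reflect (N + D) =
            ∑ i ∈ s, (g i).reflect N * w' i := by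
          intro s
          induction s using Finset.induction_on with
          | empty => simp
          | insert a s ha ih =>
            rw [Finset.sum_insert ha, Finset.sum_insert ha, Polynomial.reflect_add, ih,
              Polynomial.reflect_mul _ _ (Finset.le_sup (f := fun i => (g i).natDegree) (Finset.mem_univ a)) (hle a)]
        rw [← h2, hg, Polynomial.reflect_one]
      have h3 : Polynomial.X ^ (N + D) ∈ Ideal.span (Set.range w') := by
        rw [← h1]
        exact Ideal.sum_mem _ fun i _ => Ideal.mul_mem_left _ _ (Ideal.subset_span ⟨i, rfl⟩)
      have h4 : IsCoprime (Polynomial.X : Polynomial S) (w' i0) := by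
        refine ⟨-(w' i0).divX, 1, ?_⟩
        have h5 : (w' i0).coeff 0 = 1 := by
          have := congrFun hw'0 i0
          rwa [Pi.single_eq_same, ← Polynomial.coeff_zero_eq_eval_zero] at this
        have h6 := Polynomial.divX_mul_X_add (w' i0)
        rw [h5] at h6
        rw [one_mul]
        nth_rw 2 [← h6]
        simp
      obtain ⟨a, b, hab⟩ := (IsCoprime.pow_left (m := N + D) h4)
      rw [Ideal.eq_top_iff_one, ← hab]
      exact Ideal.add_mem _ (Ideal.mul_mem_left _ _ h3)
        (Ideal.mul_mem_left _ _ (Ideal.subset_span ⟨i0, rfl⟩))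
    have := (Ideal.eq_top_iff_one _).1 hX
    exact (Ideal.mem_span_range_iff_exists_fun).1 this
  obtain ⟨β, hβ0, hβ⟩ := SD.HL w' hum' (by
    intro m hm
    by_contra hcon
    push Not at hcon
    obtain ⟨g, hg⟩ := hum
    apply hm.ne_top
    rw [Ideal.eq_top_iff_one]
    have := congrArg (Polynomial.eval 0) hg
    rw [Polynomial.eval_one] at this
    rw [← this, Polynomial.eval_finsetSum]
    refine Ideal.sum_mem _ fun i _ => ?_
    rw [Polynomial.eval_mul, ← hw'D]
    refine Ideal.mul_mem_left _ _ (hcon i D ?_)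
    exact (Polynomial.natDegree_reflect_le).trans (by simp [hle i]))
  refine ⟨α, β, hα0, hβ0, hα, ?_⟩
  rw [← hw'0]
  have h7 : (fun i => (w i).eval 1) = fun i => (w' i).eval 1 := by
    ext i
    let _ : Invertible (1 : S) := invertibleOne
    have := Polynomial.eval₂_reflect_mul_pow (RingHom.id S) 1 D (w i) (hle i)
    simp only [invOf_one, one_pow, mul_one] at this
    exact this.symm
  rw [h7]
  conv_lhs => rw [hβ]
  ext i
  have := RingHom.map_mulVec (Polynomial.evalRingHom (1:S)) β.1 (fun i => Polynomial.C ((w' i).eval 0)) i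
  refine this.trans ?_
  rw [RingHom.mapMatrix_apply]
  congr 1
  ext; simp

theorem SD.row {S A : Type*} [CommRing S] [CommRing A] [Algebra (Polynomial S) A]
    {ι : Type*} [Fintype ι] [DecidableEq ι] [Nontrivial ι]
    (f : Polynomial S) [IsLocalization.Away f A] (v : ι → A) (hum : ∃ g : ι → A, ∑ i, g i * v i = 1)
    (i0 : ι) (c : A) (hc : IsUnit c) (g0 : Polynomial S) (hg0 : g0.Monic) (hco : IsCoprime g0 f)
    (hv : v i0 = c * algebraMap _ A g0) :
    ∃ γ : (Matrix ι ι (Polynomial A))ˣ, (Polynomial.evalRingHom 0).mapMatrix γ.1 = 1 ∧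
     v = ((Polynomial.evalRingHom 1).mapMatrix γ.1).mulVec (Pi.single i0 c) := by
  rcases subsingleton_or_nontrivial S with hS | hS
  · have : Subsingleton A := RingHom.codomain_trivial (algebraMap (Polynomial S) A)
    exact ⟨1, Subsingleton.elim _ _, Subsingleton.elim _ _⟩
  obtain ⟨c', hcc'⟩ := hc.exists_left_inv
  set ρ := algebraMap (Polynomial S) A with hρ
  have hex : ∀ i, ∃ (e : A) (h : Polynomial S), i ≠ i0 →
      (h.degree < g0.degree ∧ c' * v i = ρ h + e * ρ g0) := by
    intro i
    obtain ⟨⟨p, ⟨_, k, rfl⟩⟩, hp⟩ := IsLocalization.surj (Submonoid.powers f) (c' * v i)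
    simp only at hp
    obtain ⟨a, b, hab⟩ := hco.pow_right (n := k)
    have h1 : c' * v i = ρ (b * p) + (c' * v i * ρ a) * ρ g0 := by
      rw [map_mul, ← hp]
      have := congrArg ρ hab
      simp only [map_add, map_mul, map_one] at this
      linear_combination (-(c' * v i)) * this
    refine ⟨c' * v i * ρ a + ρ ((b * p) /ₘ g0), (b * p) %ₘ g0, fun _ => ⟨Polynomial.degree_modByMonic_lt _ hg0, ?_⟩⟩
    rw [add_mul, ← map_mul, add_left_comm, ← map_add, mul_comm _ g0, Polynomial.modByMonic_add_div, add_comm]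
    exact h1
  choose e h heh using hex
  let w : ι → Polynomial S := fun i => if i = i0 then g0 else h i
  let e' : ι → A := fun i => if i = i0 then 0 else e i
  have hw : ∀ i, c' * v i = ρ (w i) + e' i * ρ (w i0) := by
    intro i
    rcases eq_or_ne i i0 with rfl | hi
    · simp only [w, e', if_true, hv, zero_mul, add_zero]
      rw [← mul_assoc, hcc', one_mul]
    · simpa [w, e', hi] using (heh i hi).2
  have humw : ∃ g : ι → Polynomial S, ∑ i, g i * w i = 1 := by
    suffices hX : Ideal.span (Set.range w) = ⊤ from
      (Ideal.mem_span_range_iff_exists_fun).1 ((Ideal.eq_top_iff_one _).1 hX)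
    have h1 : ρ 1 ∈ (Ideal.span (Set.range w)).map ρ := by
      obtain ⟨g, hg⟩ := hum
      have hm : ∀ i, ρ (w i) ∈ (Ideal.span (Set.range w)).map ρ := fun i =>
        Ideal.mem_map_of_mem _ (Ideal.subset_span ⟨i, rfl⟩)
      have : ρ 1 = ∑ i, c * g i * (c' * v i) := by
        rw [map_one, ← hg]
        refine Finset.sum_congr rfl fun i _ => ?_
        linear_combination (-(g i * v i)) * hcc'
      rw [this]
      refine Ideal.sum_mem _ fun i _ => Ideal.mul_mem_left _ _ ?_
      rw [hw]
      exact Ideal.add_mem _ (hm i) (Ideal.mul_mem_left _ _ (hm i0))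
    rw [hρ, IsLocalization.algebraMap_mem_map_algebraMap_iff (Submonoid.powers f)] at h1
    obtain ⟨_, ⟨k, rfl⟩, hk⟩ := h1
    rw [mul_one] at hk
    obtain ⟨a, b, hab⟩ := hco.pow_right (n := k)
    rw [Ideal.eq_top_iff_one, ← hab]
    refine Ideal.add_mem _ (Ideal.mul_mem_left _ _ (Ideal.subset_span ⟨i0, by simp [w]⟩)) (Ideal.mul_mem_left _ _ hk)
  obtain ⟨α, β, hα0, hβ0, hα, hβ⟩ := SD.row_poly w humw i0 g0.natDegree (by
    intro i
    by_cases hi : i = i0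
    · simp [w, hi]
    · simp only [w, hi, if_false]
      exact Polynomial.natDegree_le_natDegree (heh i hi).1.le) (by simpa [w] using hg0.leadingCoeff) (by
    intro i hi
    simp only [w, hi, if_false]
    apply Polynomial.coeff_eq_zero_of_degree_lt
    rw [← Polynomial.degree_eq_natDegree hg0.ne_zero]
    exact (heh i hi).1)
  let σ : S →+* A := ρ.comp Polynomial.C
  let h1 : Polynomial S →+* Polynomial A :=
    Polynomial.eval₂RingHom ((Polynomial.C).comp σ) (Polynomial.C (ρ Polynomial.X) * Polynomial.X)
  let h2 : Polynomial S →+* Polynomial A := Polynomial.mapRingHom σ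
  let ev0 : Polynomial A →+* A := Polynomial.evalRingHom 0
  let ev1 : Polynomial A →+* A := Polynomial.evalRingHom 1
  have c1 : ev1.comp h1 = ρ := by
    apply Polynomial.ringHom_ext
    · intro a; simp [ev1, h1, σ]
    · simp [ev1, h1]
  have c2 : ev1.comp h2 = σ.comp (Polynomial.evalRingHom 1) := by
    apply Polynomial.ringHom_ext
    · intro a; simp [ev1, h2]
    · simp [ev1, h2]
  have c3 : ev0.comp h1 = σ.comp (Polynomial.evalRingHom 0) := by
    apply Polynomial.ringHom_ext
    · intro a; simp [ev0, h1]
    · simp [ev0, h1]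
  have c4 : ev0.comp h2 = σ.comp (Polynomial.evalRingHom 0) := by
    apply Polynomial.ringHom_ext
    · intro a; simp [ev0, h2]
    · simp [ev0, h2]
  let E : (Matrix ι ι (Polynomial A))ˣ := SD.elem (fun i => Polynomial.C (e' i) * Polynomial.X)
    (Pi.single i0 1) (by simp [e'])
  have mp0 : ∀ {h : Polynomial S →+* Polynomial A}, ev0.comp h = σ.comp (Polynomial.evalRingHom 0) →
    ∀ M : (Matrix ι ι (Polynomial S))ˣ, (Polynomial.evalRingHom 0).mapMatrix M.1 = 1 →
      Units.map ev0.mapMatrix.toMonoidHom (Units.map h.mapMatrix.toMonoidHom M) = 1 := by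
    intro h hh M hM
    ext1
    change ev0.mapMatrix (h.mapMatrix M.1) = 1
    have : ev0.mapMatrix (h.mapMatrix M.1) = σ.mapMatrix ((Polynomial.evalRingHom 0).mapMatrix M.1) := by
      ext i j
      exact congrArg (fun g => g (M.1 i j)) hh
    rw [this, hM, map_one]
  have E0 : Units.map ev0.mapMatrix.toMonoidHom E = 1 := by
    ext i j
    simp [E, SD.elem, ev0, Matrix.vecMulVec]
    rcases eq_or_ne i j with rfl | h <;> simp [*]
  let γ := E * (Units.map h1.mapMatrix.toMonoidHom α * ((Units.map h2.mapMatrix.toMonoidHom α)⁻¹ * Units.map h2.mapMatrix.toMonoidHom β))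
  refine ⟨γ, ?_, ?_⟩
  · have : Units.map ev0.mapMatrix.toMonoidHom γ = 1 := by
      simp only [γ]
      rw [map_mul, map_mul, map_mul, map_inv, mp0 c3 α hα0, mp0 c4 α hα0, mp0 c4 β hβ0, E0]
      simp
    exact congrArg Units.val this
  · have step1 : ((ev1.comp h2).mapMatrix β.1).mulVec (Pi.single i0 c) = c • (fun i => σ ((w i).eval 1)) := by
      have : (Pi.single i0 c : ι → A) = c • (σ ∘ Pi.single i0 (1 : S)) := by
        ext i
        rcases eq_or_ne i i0 with rfl | hi <;> simp [*]
      rw [c2, this, Matrix.mulVec_smul]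
      congr 1
      ext i
      rw [congrFun hβ i]
      exact (RingHom.map_mulVec σ _ _ i).symm
    have step2' : ((ev1.comp h2).mapMatrix α.1).mulVec (fun i => σ ((w i).eval 0)) = (fun i => σ ((w i).eval 1)) := by
      ext i
      have := congrFun hα i
      conv_rhs => rw [this]
      have h5 := RingHom.map_mulVec (ev1.comp h2) α.1 (fun i => Polynomial.C ((w i).eval 0)) i
      have h6 : ∀ p, (ev1.comp h2) p = σ (p.eval 1) := fun p => by rw [c2]; rfl
      rw [← h6]
      rw [h5]
      congr 1
      simp [Function.comp_def, ev1, h2]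
    have step2 : ((Units.map ev1.mapMatrix.toMonoidHom (Units.map h2.mapMatrix.toMonoidHom α))⁻¹).1.mulVec (fun i => σ ((w i).eval 1)) = (fun i => σ ((w i).eval 0)) := by
      rw [← step2']
      rw [Matrix.mulVec_mulVec]
      have : ((Units.map ev1.mapMatrix.toMonoidHom (Units.map h2.mapMatrix.toMonoidHom α))⁻¹).1 * (ev1.comp h2).mapMatrix α.1 = 1 :=
        Units.inv_mul (Units.map ev1.mapMatrix.toMonoidHom (Units.map h2.mapMatrix.toMonoidHom α))
      rw [this, Matrix.one_mulVec]
    have step3 : ((ev1.comp h1).mapMatrix α.1).mulVec (fun i => σ ((w i).eval 0)) = fun i => ρ (w i) := by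
      ext i
      conv_rhs => rw [hα]
      rw [c1]
      exact (RingHom.map_mulVec ρ _ _ i).symm
    have step4 : (ev1.mapMatrix E.1).mulVec (fun i => ρ (w i)) = c' • v := by
      have : Polynomial.evalRingHom 1 = ev1 := rfl
      ext i
      have h5 := RingHom.map_mulVec ev1 E.1 (fun i => Polynomial.C (ρ (w i))) i
      have h6 : (ev1 ∘ fun i => Polynomial.C (ρ (w i))) = fun i => ρ (w i) := by
        ext; simp [ev1]
      rw [h6] at h5
      refine h5.symm.trans ?_
      rw [SD.elem_mulVec]
      simp [ev1, hw]
      ring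
    have final : (Units.map ev1.mapMatrix.toMonoidHom γ).1.mulVec (Pi.single i0 c) = v := by
      simp only [γ, map_mul, map_inv, Units.val_mul]
      rw [← Matrix.mulVec_mulVec, ← Matrix.mulVec_mulVec, ← Matrix.mulVec_mulVec]
      erw [step1]
      rw [Matrix.mulVec_smul, step2, Matrix.mulVec_smul]
      erw [step3]
      rw [Matrix.mulVec_smul]
      erw [step4]
      rw [smul_smul, mul_comm c, hcc', one_smul]
    exact final.symm


attribute [local instance] Polynomial.algebra in
theorem SD.away_poly {A B : Type*} [CommRing A] [CommRing B] [Algebra A B] (q : A)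
    [h : IsLocalization.Away q B] : IsLocalization.Away (Polynomial.C q) (Polynomial B) := by
  have := Polynomial.isLocalization (Submonoid.powers q) B
  rw [Submonoid.map_powers] at this
  exact this

theorem SD.away_clr {A B : Type*} [CommRing A] [CommRing B] [Algebra A B] (q : A)
    [h : IsLocalization.Away q B] {κ : Type*} [Finite κ] (b : κ → B) :
    ∃ (N : ℕ) (a : κ → A), ∀ i, algebraMap A B (a i) = algebraMap A B q ^ N * b i := by
  obtain ⟨⟨_, N, rfl⟩, hN⟩ := IsLocalization.exist_integer_multiples_of_finite (Submonoid.powers q) b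
  choose a ha using hN
  exact ⟨N, a, fun i => by rw [ha i]; simp [Submonoid.smul_def, Algebra.smul_def]⟩

theorem SD.away_zero {A B : Type*} [CommRing A] [CommRing B] [Algebra A B] (q : A)
    [h : IsLocalization.Away q B] {κ : Type*} [Finite κ] (a : κ → A)
    (ha : ∀ i, algebraMap A B (a i) = 0) : ∃ N : ℕ, ∀ i, q ^ N * a i = 0 := by
  have : ∀ i, ∃ N : ℕ, q ^ N * a i = 0 := by
    intro i
    obtain ⟨⟨_, N, rfl⟩, hN⟩ := (IsLocalization.map_eq_zero_iff (Submonoid.powers q) B _).1 (ha i)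
    exact ⟨N, hN⟩
  choose N hN using this
  cases nonempty_fintype κ
  refine ⟨Finset.univ.sup N, fun i => ?_⟩
  obtain ⟨k, hk⟩ := Nat.exists_eq_add_of_le (Finset.le_sup (f := N) (Finset.mem_univ i))
  rw [hk, pow_add, mul_right_comm, hN, zero_mul]

attribute [local instance] Polynomial.algebra in
theorem SD.patch_clr {A B : Type*} [CommRing A] [CommRing B] [Algebra A B] (q : A)
    [h : IsLocalization.Away q B] {ι : Type*} [Fintype ι] [DecidableEq ι]
    (γ : (Matrix ι ι (Polynomial B))ˣ) (hγ : (Polynomial.evalRingHom 0).mapMatrix γ.1 = 1) :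
    ∃ (M : ℕ) (G H : Matrix ι ι (Polynomial A)), G * H = Polynomial.C (q ^ (2 * M)) • 1 ∧
      H * G = Polynomial.C (q ^ (2 * M)) • 1 ∧
      G.map (Polynomial.eval 0) = q ^ M • 1 ∧
      (Polynomial.mapRingHom (algebraMap A B)).mapMatrix G =
        Polynomial.C (algebraMap A B q ^ M) • γ.1 := by
  have := SD.away_poly (B := B) q
  set ρ := Polynomial.mapRingHom (algebraMap A B) with hρ
  have hρ' : algebraMap (Polynomial A) (Polynomial B) = ρ := rfl
  obtain ⟨M, a, ha⟩ := SD.away_clr (B := Polynomial B) (Polynomial.C q)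
    (fun k : (ι × ι) ⊕ (ι × ι) => k.elim (fun k => γ.1 k.1 k.2) (fun k => (γ⁻¹).1 k.1 k.2))
  have hCq : ∀ n, ρ (Polynomial.C q) ^ n = Polynomial.C (algebraMap A B q ^ n) := by
    intro n; simp [hρ]
  rw [hρ'] at ha
  simp only [hCq] at ha
  let G0 : Matrix ι ι (Polynomial A) := Matrix.of fun i j => a (Sum.inl (i, j))
  let H0 : Matrix ι ι (Polynomial A) := Matrix.of fun i j => a (Sum.inr (i, j))
  have hG0 : ρ.mapMatrix G0 = Polynomial.C (algebraMap A B q ^ M) • γ.1 := by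
    ext1 i j; simpa [G0] using ha (Sum.inl (i, j))
  have hH0 : ρ.mapMatrix H0 = Polynomial.C (algebraMap A B q ^ M) • (γ⁻¹).1 := by
    ext1 i j; simpa [H0] using ha (Sum.inr (i, j))
  have e1 : ρ.mapMatrix (G0 * H0 - Polynomial.C (q ^ (2 * M)) • 1) = 0 := by
    rw [map_sub, map_mul, hG0, hH0, Matrix.smul_mul, Matrix.mul_smul, Units.mul_inv, smul_smul,
      ← Polynomial.C_mul, ← pow_add, ← two_mul, sub_eq_zero]
    ext1 i j
    rcases eq_or_ne i j with rfl | h <;> simp [hρ, *]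
  have e2 : ρ.mapMatrix (H0 * G0 - Polynomial.C (q ^ (2 * M)) • 1) = 0 := by
    rw [map_sub, map_mul, hG0, hH0, Matrix.smul_mul, Matrix.mul_smul, Units.inv_mul, smul_smul,
      ← Polynomial.C_mul, ← pow_add, ← two_mul, sub_eq_zero]
    ext1 i j
    rcases eq_or_ne i j with rfl | h <;> simp [hρ, *]
  have e3 : (algebraMap A B).mapMatrix (G0.map (Polynomial.eval 0) - q ^ M • 1) = 0 := by
    rw [map_sub]
    have : (algebraMap A B).mapMatrix (G0.map (Polynomial.eval 0)) =
        (Polynomial.evalRingHom 0).mapMatrix (ρ.mapMatrix G0) := by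
      ext i j
      simp [hρ, Polynomial.eval_map, ← Polynomial.coeff_zero_eq_eval_zero, Polynomial.eval₂_at_zero]
    rw [this, hG0]
    have : (Polynomial.evalRingHom 0).mapMatrix (Polynomial.C (algebraMap A B q ^ M) • γ.1) =
      algebraMap A B q ^ M • (Polynomial.evalRingHom 0).mapMatrix γ.1 := by
      ext i j; simp
    rw [this, hγ, sub_eq_zero]
    ext i j
    rcases eq_or_ne i j with rfl | h <;> simp [*]
  obtain ⟨N1, h1⟩ := SD.away_zero (B := Polynomial B) (Polynomial.C q) (κ := ι × ι)
    (fun k => (G0 * H0 - Polynomial.C (q ^ (2 * M)) • 1) k.1 k.2)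
    (fun k => congrFun (congrFun e1 k.1) k.2)
  obtain ⟨N2, h2⟩ := SD.away_zero (B := Polynomial B) (Polynomial.C q) (κ := ι × ι)
    (fun k => (H0 * G0 - Polynomial.C (q ^ (2 * M)) • 1) k.1 k.2)
    (fun k => congrFun (congrFun e2 k.1) k.2)
  obtain ⟨N3, h3⟩ := SD.away_zero (B := B) q (κ := ι × ι)
    (fun k => (G0.map (Polynomial.eval 0) - q ^ M • 1) k.1 k.2)
    (fun k => congrFun (congrFun e3 k.1) k.2)
  have h1' : Polynomial.C q ^ N1 • (G0 * H0) = Polynomial.C q ^ N1 • (Polynomial.C (q ^ (2 * M)) • 1) := by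
    rw [← sub_eq_zero, ← smul_sub]; ext1 i j; exact h1 (i, j)
  have h2' : Polynomial.C q ^ N2 • (H0 * G0) = Polynomial.C q ^ N2 • (Polynomial.C (q ^ (2 * M)) • 1) := by
    rw [← sub_eq_zero, ← smul_sub]; ext1 i j; exact h2 (i, j)
  have h3' : q ^ N3 • (G0.map (Polynomial.eval 0)) = q ^ N3 • (q ^ M • 1) := by
    rw [← sub_eq_zero, ← smul_sub]; ext1 i j; exact h3 (i, j)
  refine ⟨M + (N1 + N2 + N3), Polynomial.C q ^ (N1 + N2 + N3) • G0,
    Polynomial.C q ^ (N1 + N2 + N3) • H0, ?_, ?_, ?_, ?_⟩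
  · rw [Matrix.smul_mul, Matrix.mul_smul, smul_smul]
    rw [show Polynomial.C q ^ (N1 + N2 + N3) * Polynomial.C q ^ (N1 + N2 + N3) =
      (Polynomial.C q ^ (N1 + N2 + N3) * Polynomial.C q ^ (N2 + N3)) * Polynomial.C q ^ N1 by ring,
      mul_smul, h1', smul_smul, smul_smul]
    congr 1
    simp only [map_pow]
    ring
  · rw [Matrix.smul_mul, Matrix.mul_smul, smul_smul]
    rw [show Polynomial.C q ^ (N1 + N2 + N3) * Polynomial.C q ^ (N1 + N2 + N3) =
      (Polynomial.C q ^ (N1 + N2 + N3) * Polynomial.C q ^ (N1 + N3)) * Polynomial.C q ^ N2 by ring,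
      mul_smul, h2', smul_smul, smul_smul]
    congr 1
    simp only [map_pow]
    ring
  · have : (Polynomial.C q ^ (N1 + N2 + N3) • G0).map (Polynomial.eval 0) =
      q ^ (N1 + N2) • (q ^ N3 • G0.map (Polynomial.eval 0)) := by
      ext i j; simp; ring
    rw [this, h3', smul_smul, smul_smul]
    congr 1
    ring
  · have : ρ.mapMatrix (Polynomial.C q ^ (N1 + N2 + N3) • G0) =
      Polynomial.C (algebraMap A B q ^ (N1 + N2 + N3)) • ρ.mapMatrix G0 := by
      ext1 i j; simp [hρ]
    rw [this, hG0, smul_smul]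
    congr 1
    simp only [map_pow]
    ring


theorem SD.eval_map_mat {A B : Type*} [CommRing A] [CommRing B] (h : A →+* B) {ι : Type*} [Fintype ι]
    [DecidableEq ι] (G : Matrix ι ι (Polynomial A)) (x : A) :
    ((Polynomial.mapRingHom h).mapMatrix G).map (Polynomial.eval (h x)) =
      h.mapMatrix (G.map (Polynomial.eval x)) := by
  ext i j
  simp [Polynomial.eval_map, Polynomial.eval₂_hom]

theorem SD.mapMatrix_smul {A E : Type*} [CommRing A] [CommRing E] {ι : Type*} [Fintype ι] [DecidableEq ι] (h : A →+* E) (c : A)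
    (M : Matrix ι ι A) : h.mapMatrix (c • M) = h c • h.mapMatrix M := by
  ext i j; simp

theorem SD.mp1 {A E : Type*} [CommRing A] [CommRing E] {ι : Type*} [Fintype ι] [DecidableEq ι] (h : A →+* E) (c : A) :
    (Polynomial.mapRingHom h).mapMatrix (Polynomial.C c • (1 : Matrix ι ι _)) = Polynomial.C (h c) • 1 := by
  ext1 i j
  rcases eq_or_ne i j with rfl | h <;> simp [*]

theorem SD.split {A B As At : Type*} [CommRing A] [CommRing B] [Algebra A B] (s t : A)
    (hst : IsCoprime s t) [IsLocalization.Away (s * t) B] [CommRing As] [CommRing At] [Algebra A As]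
    [Algebra A At] [IsLocalization.Away s As] [IsLocalization.Away t At]
    (js : As →ₐ[A] B) (jt : At →ₐ[A] B)
    {ι : Type*} [Fintype ι] [DecidableEq ι]
    (γ : (Matrix ι ι (Polynomial B))ˣ) (hγ : (Polynomial.evalRingHom 0).mapMatrix γ.1 = 1) :
    ∃ (δ : (Matrix ι ι As)ˣ) (κ κ' : Matrix ι ι At), κ' + κ + algebraMap A At s • (κ' * κ) = 0 ∧
      (1 + algebraMap A B s • jt.toRingHom.mapMatrix κ') * js.toRingHom.mapMatrix δ.1 =
        (Polynomial.evalRingHom 1).mapMatrix γ.1 := by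
  obtain ⟨M, G, H, hGH, hHG, hG0, hGγ⟩ := SD.patch_clr (s * t) γ hγ
  obtain ⟨a', b', hab⟩ := hst.pow (m := 2 * M + 1) (n := 2 * M)
  have hqu : IsUnit (algebraMap A B (s * t) ^ M) := (IsLocalization.Away.algebraMap_isUnit (s * t)).pow _
  have hsu : IsUnit (algebraMap A As s ^ (2 * M)) := (IsLocalization.Away.algebraMap_isUnit s).pow _
  have htu : IsUnit (algebraMap A At t ^ (2 * M)) := (IsLocalization.Away.algebraMap_isUnit t).pow _
  obtain ⟨is, his⟩ := hsu.exists_left_inv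
  obtain ⟨it, hit⟩ := htu.exists_left_inv
  set x0 : A := t ^ (2 * M) * b' with hx0
  -- over As
  obtain ⟨K, K', hK, hKG⟩ := SD.lemL ((Polynomial.mapRingHom (algebraMap A As)).mapMatrix G)
    ((Polynomial.mapRingHom (algebraMap A As)).mapMatrix H) (algebraMap A As ((s * t) ^ (2 * M)))
    (by rw [← map_mul, hGH, SD.mp1]) (by rw [← map_mul, hHG, SD.mp1]) (algebraMap A As 0) (is * algebraMap A As b')
  have hx : algebraMap A As 0 + algebraMap A As ((s * t) ^ (2 * M)) * (is * algebraMap A As b') =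
      algebraMap A As x0 := by
    simp only [map_zero, hx0, map_mul, map_pow, mul_pow]
    linear_combination (algebraMap A As t ^ (2 * M) * algebraMap A As b') * his
  rw [hx, SD.eval_map_mat, SD.eval_map_mat, hG0] at hKG
  set ys := is * algebraMap A As b'
  have hδ : (1 + ys • K) * (1 + ys • K') = 1 := by
    have : (1 + ys • K) * (1 + ys • K') = 1 + ys • (K + K' + ys • (K * K')) := by
      simp only [mul_add, add_mul, smul_add, Matrix.smul_mul, Matrix.mul_smul, one_mul, mul_one]
      abel
    rw [this, hK]; simp
  -- over At
  obtain ⟨L, L', hL, hLG⟩ := SD.lemL ((Polynomial.mapRingHom (algebraMap A At)).mapMatrix G)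
    ((Polynomial.mapRingHom (algebraMap A At)).mapMatrix H) (algebraMap A At ((s * t) ^ (2 * M)))
    (by rw [← map_mul, hGH, SD.mp1]) (by rw [← map_mul, hHG, SD.mp1]) (algebraMap A At x0)
    (algebraMap A At s * (it * algebraMap A At a'))
  have hx1 : algebraMap A At x0 + algebraMap A At ((s * t) ^ (2 * M)) *
      (algebraMap A At s * (it * algebraMap A At a')) = algebraMap A At 1 := by
    rw [← hab]
    simp only [hx0, map_mul, map_pow, mul_pow, map_add]
    linear_combination (algebraMap A At s ^ (2 * M + 1) * algebraMap A At a') * hit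
  rw [hx1, SD.eval_map_mat, SD.eval_map_mat] at hLG
  set z := it * algebraMap A At a' with hz
  -- in B
  have hB : ∀ x : A, (algebraMap A B).mapMatrix (G.map (Polynomial.eval x)) =
      algebraMap A B (s * t) ^ M • (Polynomial.evalRingHom (algebraMap A B x)).mapMatrix γ.1 := by
    intro x
    rw [← SD.eval_map_mat, hGγ]
    ext i j
    simp
  have cs : ∀ N : Matrix ι ι A, js.toRingHom.mapMatrix ((algebraMap A As).mapMatrix N) = (algebraMap A B).mapMatrix N := by
    intro N; ext i j; simp
  have ct : ∀ N : Matrix ι ι A, jt.toRingHom.mapMatrix ((algebraMap A At).mapMatrix N) = (algebraMap A B).mapMatrix N := by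
    intro N; ext i j; simp
  have f1 : js.toRingHom.mapMatrix (1 + ys • K) = (Polynomial.evalRingHom (algebraMap A B x0)).mapMatrix γ.1 := by
    have := congrArg js.toRingHom.mapMatrix hKG
    rw [map_mul, cs, cs, hB] at this
    have e : (algebraMap A B).mapMatrix ((s * t) ^ M • (1 : Matrix ι ι A)) = algebraMap A B (s * t) ^ M • 1 := by
      ext i j
      rcases eq_or_ne i j with rfl | h <;> simp [*]
    rw [e, Matrix.mul_smul, Matrix.mul_one] at this
    exact hqu.smul_left_cancel.1 this
  have f2 : jt.toRingHom.mapMatrix (1 + (algebraMap A At s * z) • L) * (Polynomial.evalRingHom (algebraMap A B x0)).mapMatrix γ.1 = (Polynomial.evalRingHom 1).mapMatrix γ.1 := by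
    have := congrArg jt.toRingHom.mapMatrix hLG
    rw [map_mul, ct, ct, hB, hB, Matrix.mul_smul, map_one] at this
    exact hqu.smul_left_cancel.1 this
  refine ⟨⟨1 + ys • K, 1 + ys • K', hδ, mul_eq_one_comm.1 hδ⟩, z • L', z • L, ?_, ?_⟩
  · have : z • L + z • L' + algebraMap A At s • (z • L * z • L') = z • (L + L' + (algebraMap A At s * z) • (L * L')) := by
      simp only [Matrix.smul_mul, Matrix.mul_smul, smul_add, smul_smul]
      congr 2
      ring
    rw [this, hL, smul_zero]
  · rw [f1, ← f2]
    congr 1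
    rw [map_add, map_one]
    congr 1
    ext i j
    simp [mul_assoc]

/-- an `s`-basis -/
structure SD.SBasis {A P : Type*} [CommRing A] [AddCommGroup P] [Module A P] (s : A) (ι : Type*)
    [Fintype ι] [DecidableEq ι] where
  p : ι → P
  φ : ι → (P →ₗ[A] A)
  pair : ∀ i j, φ i (p j) = if i = j then s else 0
  sum : ∀ x, ∑ i, φ i x • p i = s • x

theorem SD.patch {A B P : Type*} [CommRing A] [CommRing B] [Algebra A B] [AddCommGroup P] [Module A P]
    (s t : A) (hst : IsCoprime s t) [IsLocalization.Away (s * t) B]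
    {ι : Type*} [Fintype ι] [DecidableEq ι] (b : SD.SBasis (P := P) s ι) (p : P) (ψ : P →ₗ[A] A)
    (hψ : ψ p = t) (c c1 : A) (N : ℕ) (hc : c * c1 = s ^ N) (i0 : ι)
    (γ : (Matrix ι ι (Polynomial B))ˣ) (hγ : (Polynomial.evalRingHom 0).mapMatrix γ.1 = 1)
    (hv : (fun i => algebraMap A B (b.φ i p)) =
      ((Polynomial.evalRingHom 1).mapMatrix γ.1).mulVec (Pi.single i0 (algebraMap A B c))) :
    ∃ (x : P) (θ : P →ₗ[A] A), θ x = 1 := by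
  let As := Localization.Away s
  let At := Localization.Away t
  have hB : IsUnit (algebraMap A B s * algebraMap A B t) := by
    rw [← map_mul]; exact IsLocalization.Away.algebraMap_isUnit (s * t)
  let js : As →ₐ[A] B := IsLocalization.liftAlgHom (M := Submonoid.powers s) (f := Algebra.ofId A B) (by
    rintro ⟨_, n, rfl⟩
    rw [map_pow]
    exact (isUnit_of_mul_isUnit_left hB).pow n)
  let jt : At →ₐ[A] B := IsLocalization.liftAlgHom (M := Submonoid.powers t) (f := Algebra.ofId A B) (by
    rintro ⟨_, n, rfl⟩
    rw [map_pow]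
    exact (isUnit_of_mul_isUnit_right hB).pow n)
  obtain ⟨δ, κ, κ', hκ, hδ⟩ := SD.split s t hst js jt γ hγ
  have hsu : ∀ N, IsUnit (algebraMap A As s ^ N) := fun N => (IsLocalization.Away.algebraMap_isUnit s).pow N
  have htu : ∀ N, IsUnit (algebraMap A At t ^ N) := fun N => (IsLocalization.Away.algebraMap_isUnit t).pow N
  -- the `t` side
  obtain ⟨k, a, ha⟩ := SD.away_clr (B := At) t
    (fun k : (ι × ι) ⊕ (ι × ι) => k.elim (fun k => κ k.1 k.2) (fun k => κ' k.1 k.2))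
  obtain ⟨Kn, hKn⟩ : ∃ Kn : Matrix ι ι A, (algebraMap A At).mapMatrix Kn = algebraMap A At t ^ k • κ := by
    refine ⟨Matrix.of fun i j => a (Sum.inl (i, j)), ?_⟩
    ext i j; simpa using ha (Sum.inl (i, j))
  obtain ⟨Kn', hKn'⟩ : ∃ Kn' : Matrix ι ι A, (algebraMap A At).mapMatrix Kn' = algebraMap A At t ^ k • κ' := by
    refine ⟨Matrix.of fun i j => a (Sum.inr (i, j)), ?_⟩
    ext i j; simpa using ha (Sum.inr (i, j))
  set v : ι → A := fun i => b.φ i p with hv'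
  let n : P := t ^ k • p + ∑ i, (Kn.mulVec v) i • b.p i
  have hφn : (fun i => b.φ i n) = t ^ k • v + s • Kn.mulVec v := by
    ext i
    simp [n, b.pair, hv', mul_comm s]
  have hn : ∃ (ψ' : P →ₗ[A] A) (l : ℕ), ψ' n = t ^ l := by
    let q : ι → A := fun i => ψ (b.p i)
    let ψ0 : P →ₗ[A] A := t ^ k • ψ + ∑ j, (Matrix.vecMul q Kn') j • b.φ j
    have h1 : ψ0 n = t ^ (2 * k) * t + (t ^ k * (q ⬝ᵥ Kn.mulVec v) + t ^ k * (q ⬝ᵥ Kn'.mulVec v) +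
        s * (q ⬝ᵥ (Kn' * Kn).mulVec v)) := by
      have h2 : ψ n = t ^ k * t + q ⬝ᵥ Kn.mulVec v := by
        simp [n, hψ, q, dotProduct, mul_comm]
      have h3 : (∑ j, (Matrix.vecMul q Kn') j • b.φ j) n = Matrix.vecMul q Kn' ⬝ᵥ (fun i => b.φ i n) := by
        simp [dotProduct, LinearMap.sum_apply]
      change t ^ k * ψ n + (∑ j, (Matrix.vecMul q Kn') j • b.φ j) n = _
      rw [h2, h3, hφn, dotProduct_add, dotProduct_smul, dotProduct_smul, ← Matrix.dotProduct_mulVec,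
        ← Matrix.dotProduct_mulVec, Matrix.mulVec_mulVec]
      simp only [smul_eq_mul]
      ring
    have h4 : (algebraMap A At).mapMatrix (t ^ k • Kn + t ^ k • Kn' + s • (Kn' * Kn)) = 0 := by
      have : (algebraMap A At).mapMatrix (t ^ k • Kn + t ^ k • Kn' + s • (Kn' * Kn)) =
        algebraMap A At t ^ k • (algebraMap A At).mapMatrix Kn + algebraMap A At t ^ k • (algebraMap A At).mapMatrix Kn' +
         algebraMap A At s • ((algebraMap A At).mapMatrix Kn' * (algebraMap A At).mapMatrix Kn) := by
        rw [map_add, map_add, ← map_mul (algebraMap A At).mapMatrix, SD.mapMatrix_smul, SD.mapMatrix_smul,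
          SD.mapMatrix_smul, map_pow]
      rw [this, hKn, hKn']
      have : algebraMap A At t ^ k • algebraMap A At t ^ k • κ + algebraMap A At t ^ k • algebraMap A At t ^ k • κ' +
        algebraMap A At s • (algebraMap A At t ^ k • κ' * algebraMap A At t ^ k • κ) =
          (algebraMap A At t ^ k * algebraMap A At t ^ k) • (κ' + κ + algebraMap A At s • (κ' * κ)) := by
        simp only [Matrix.smul_mul, Matrix.mul_smul, smul_add, smul_smul]
        rw [add_comm (_ • κ)]
        congr 2
        ring
      rw [this, hκ, smul_zero]
    obtain ⟨N1, hN1⟩ := SD.away_zero (B := At) t (κ := ι × ι)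
      (fun k' => (t ^ k • Kn + t ^ k • Kn' + s • (Kn' * Kn)) k'.1 k'.2)
      (fun k' => congrFun (congrFun h4 k'.1) k'.2)
    have h5 : t ^ N1 • (t ^ k • Kn + t ^ k • Kn' + s • (Kn' * Kn)) = 0 := by
      ext i j; exact hN1 (i, j)
    have h6 := congrArg (fun M : Matrix ι ι A => q ⬝ᵥ M.mulVec v) h5
    simp only [Matrix.smul_mulVec, Matrix.add_mulVec, dotProduct_smul, dotProduct_add, smul_eq_mul,
      Matrix.zero_mulVec, dotProduct_zero] at h6
    refine ⟨t ^ N1 • ψ0, N1 + (2 * k + 1), ?_⟩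
    rw [LinearMap.smul_apply, h1, smul_eq_mul]
    linear_combination h6
  -- the `s` side
  obtain ⟨l, U, hU⟩ := SD.away_clr (B := As) s (δ.1.mulVec (Pi.single i0 (algebraMap A As c)))
  let m : P := ∑ i, U i • b.p i
  have hφm : (fun i => b.φ i m) = s • U := by
    ext i
    simp [m, b.pair, mul_comm s]
  have hm : ∃ (χ : P →ₗ[A] A) (l : ℕ), χ m = s ^ l := by
    obtain ⟨l2, W, hW⟩ := SD.away_clr (B := As) s (fun j => (δ⁻¹).1 i0 j)
    have h1 : algebraMap A As (W ⬝ᵥ U) = algebraMap A As (s ^ (l2 + l) * c) := by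
      have : algebraMap A As (W ⬝ᵥ U) = (algebraMap A As ∘ W) ⬝ᵥ (algebraMap A As ∘ U) := by
        simp [dotProduct]
      rw [this]
      have h2 : (algebraMap A As ∘ W) = algebraMap A As s ^ l2 • (fun j => (δ⁻¹).1 i0 j) := funext hW
      have h3 : (algebraMap A As ∘ U) = algebraMap A As s ^ l • (δ.1.mulVec (Pi.single i0 (algebraMap A As c))) := funext hU
      rw [h2, h3, smul_dotProduct, dotProduct_smul]
      have h4 : (fun j => (δ⁻¹).1 i0 j) ⬝ᵥ (δ.1.mulVec (Pi.single i0 (algebraMap A As c))) = algebraMap A As c := by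
        have : (δ⁻¹).1.mulVec (δ.1.mulVec (Pi.single i0 (algebraMap A As c))) = Pi.single i0 (algebraMap A As c) := by
          rw [Matrix.mulVec_mulVec, Units.inv_mul, Matrix.one_mulVec]
        have := congrFun this i0
        rwa [Pi.single_eq_same] at this
      rw [h4]
      simp only [smul_eq_mul, map_mul, map_pow, pow_add]
      ring
    obtain ⟨N2, hN2⟩ := SD.away_zero (B := As) s (κ := Unit) (fun _ => W ⬝ᵥ U - s ^ (l2 + l) * c) (fun _ => by
      rw [map_sub, h1, sub_self])
    have hN2 := hN2 ()
    refine ⟨(c1 * s ^ N2) • ∑ j, W j • b.φ j, N2 + (l2 + l) + N + 1, ?_⟩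
    have h5 : (∑ j, W j • b.φ j) m = W ⬝ᵥ (fun i => b.φ i m) := by
      simp [dotProduct, LinearMap.sum_apply]
    rw [LinearMap.smul_apply, h5, hφm, dotProduct_smul]
    simp only [smul_eq_mul]
    linear_combination (s * c1) * hN2 + (s * s ^ N2 * s ^ (l2 + l)) * hc
  -- comparison
  have hcmp : ∀ i, algebraMap A B (s ^ (l + 1) * b.φ i n - t ^ k * b.φ i m) = 0 := by
    have h1 : (fun i => algebraMap A B (b.φ i n)) = algebraMap A B t ^ k • ((1 + algebraMap A B s • jt.toRingHom.mapMatrix κ).mulVec (fun i => algebraMap A B (v i))) := by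
      have h2 : (fun i => algebraMap A B (b.φ i n)) = fun i => algebraMap A B ((t ^ k • v + s • Kn.mulVec v) i) := by
        rw [← hφn]
      rw [h2]
      have h3 : (algebraMap A B).mapMatrix Kn = algebraMap A B t ^ k • jt.toRingHom.mapMatrix κ := by
        have := congrArg jt.toRingHom.mapMatrix hKn
        have e1 : jt.toRingHom.mapMatrix ((algebraMap A At).mapMatrix Kn) = (algebraMap A B).mapMatrix Kn := by
          ext i j; simp
        rw [← e1, this]
        ext i j; simp
      rw [Matrix.add_mulVec, Matrix.one_mulVec, Matrix.smul_mulVec, smul_add, smul_smul, mul_comm (_ ^ k), mul_smul,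
        ← Matrix.smul_mulVec (algebraMap A B t ^ k), ← h3]
      ext i
      have := RingHom.map_mulVec (algebraMap A B) Kn v i
      simp only [Pi.add_apply, Pi.smul_apply, smul_eq_mul, map_add, map_mul, map_pow, this]
      rfl
    have hone : (1 + algebraMap A B s • jt.toRingHom.mapMatrix κ) * (1 + algebraMap A B s • jt.toRingHom.mapMatrix κ') = 1 := by
      apply mul_eq_one_comm.1
      have := congrArg jt.toRingHom.mapMatrix hκ
      rw [map_zero] at this
      have e : (1 + algebraMap A B s • jt.toRingHom.mapMatrix κ') * (1 + algebraMap A B s • jt.toRingHom.mapMatrix κ) =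
         1 + algebraMap A B s • jt.toRingHom.mapMatrix (κ' + κ + algebraMap A At s • (κ' * κ)) := by
        rw [map_add, map_add]
        have e3 : jt.toRingHom.mapMatrix (algebraMap A At s • (κ' * κ)) = algebraMap A B s • (jt.toRingHom.mapMatrix κ' * jt.toRingHom.mapMatrix κ) := by
          rw [← map_mul jt.toRingHom.mapMatrix, SD.mapMatrix_smul]
          congr 1
          exact jt.commutes s
        rw [e3]
        simp only [mul_add, add_mul, smul_add, Matrix.smul_mul, Matrix.mul_smul, one_mul, mul_one]
        abel
      rw [e, this, smul_zero, add_zero]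
    rw [hv, Matrix.mulVec_mulVec, ← hδ, ← mul_assoc, hone, one_mul] at h1
    have h4 : (fun i => algebraMap A B (U i)) = algebraMap A B s ^ l • ((js.toRingHom.mapMatrix δ.1).mulVec (Pi.single i0 (algebraMap A B c))) := by
      ext i
      have := congrArg js (hU i)
      rw [js.commutes] at this
      rw [this, map_mul, map_pow, js.commutes]
      have h5 := RingHom.map_mulVec js.toRingHom δ.1 (Pi.single i0 (algebraMap A As c)) i
      have h6 : (js.toRingHom ∘ Pi.single i0 (algebraMap A As c)) = Pi.single i0 (algebraMap A B c) := by
        ext j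
        rcases eq_or_ne j i0 with rfl | h <;> simp [*]
      rw [h6] at h5
      exact congrArg _ h5
    intro i
    have h5 := congrFun h1 i
    have h6 := congrFun h4 i
    have h7 := congrFun hφm i
    simp only [Pi.smul_apply, smul_eq_mul] at h5 h6 h7
    rw [map_sub, map_mul, map_mul, h5, h7, map_mul, h6]
    simp only [map_pow]
    ring
  obtain ⟨N3, hN3⟩ := SD.away_zero (B := B) (s * t) (fun i => s ^ (l + 1) * b.φ i n - t ^ k * b.φ i m) hcmp
  have hrel : s ^ (N3 + l + 2) • (t ^ N3 • n) = t ^ (k + N3) • (s ^ (N3 + 1) • m) := by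
    have h1 : s • ((s * t) ^ N3 • (s ^ (l + 1) • n - t ^ k • m)) = 0 := by
      rw [← b.sum]
      refine Finset.sum_eq_zero fun i _ => ?_
      have := hN3 i
      simp only [map_smul, map_sub, smul_eq_mul]
      rw [this, zero_smul]
    rw [← sub_eq_zero, ← h1]
    simp only [smul_sub, smul_smul]
    congr 2 <;> ring
  obtain ⟨α, β, hαβ⟩ := hst.pow (m := N3 + l + 2) (n := k + N3)
  obtain ⟨ψ', l1, hψ'⟩ := hn
  obtain ⟨χ, l2, hχ⟩ := hm
  let x : P := α • (s ^ (N3 + 1) • m) + β • (t ^ N3 • n)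
  have hx1 : t ^ (k + N3) • x = t ^ N3 • n := by
    have : t ^ (k + N3) • x = (α * s ^ (N3 + l + 2) + β * t ^ (k + N3)) • (t ^ N3 • n) := by
      simp only [x]
      rw [smul_add, smul_comm (t ^ (k + N3)) α, ← hrel, add_smul]
      simp only [smul_smul]
      congr 2 <;> ring
    rw [this, hαβ, one_smul]
  have hx2 : s ^ (N3 + l + 2) • x = s ^ (N3 + 1) • m := by
    have : s ^ (N3 + l + 2) • x = (α * s ^ (N3 + l + 2) + β * t ^ (k + N3)) • (s ^ (N3 + 1) • m) := by
      simp only [x]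
      rw [smul_add, smul_comm (s ^ (N3 + l + 2)) β, hrel, add_smul]
      simp only [smul_smul]
      congr 2 <;> ring
    rw [this, hαβ, one_smul]
  obtain ⟨α', β', hαβ'⟩ := hst.pow (m := N3 + 1 + l2) (n := N3 + l1)
  refine ⟨x, (α' * s ^ (N3 + l + 2)) • χ + (β' * t ^ (k + N3)) • ψ', ?_⟩
  have h1 := congrArg ψ' hx1
  have h2 := congrArg χ hx2
  simp only [map_smul, smul_eq_mul, hψ', hχ] at h1 h2
  simp only [LinearMap.add_apply, LinearMap.smul_apply, smul_eq_mul]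
  rw [← hαβ']
  linear_combination α' * h2 + β' * h1


theorem SD.lead_mul {D : Type*} [CommRing D] (I J K : Ideal (Polynomial D)) (h : I * J ≤ K) :
    I.leadingCoeff * J.leadingCoeff ≤ K.leadingCoeff := by
  rw [Ideal.mul_le]
  intro a ha b hb
  rw [Ideal.mem_leadingCoeff] at ha hb
  obtain ⟨F, hF, rfl⟩ := ha
  obtain ⟨G, hG, rfl⟩ := hb
  by_cases h0 : F.leadingCoeff * G.leadingCoeff = 0
  · rw [h0]; exact zero_mem _
  · rw [Ideal.mem_leadingCoeff]
    exact ⟨F * G, h (Ideal.mul_mem_mul hF hG), Polynomial.leadingCoeff_mul' h0⟩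

theorem SD.lead_prime {D : Type*} [CommRing D] [IsNoetherianRing D] (p : Ideal D) [hp : p.IsPrime]
    (I : Ideal (Polynomial D)) (hI : I.leadingCoeff ≤ p) :
    ∃ q : Ideal (Polynomial D), q.IsPrime ∧ I ≤ q ∧ q.leadingCoeff ≤ p := by
  induction I using IsNoetherian.induction with
  | hgt I ih =>
    change Ideal (Polynomial D) at I
    replace ih : ∀ J : Ideal (Polynomial D), I < J → J.leadingCoeff ≤ p →
      ∃ q : Ideal (Polynomial D), q.IsPrime ∧ J ≤ q ∧ q.leadingCoeff ≤ p := ih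
    by_cases hpr : Ideal.IsPrime I
    · exact ⟨I, hpr, le_rfl, hI⟩
    have hne : I ≠ ⊤ := by
      rintro rfl
      apply hp.ne_top
      rw [Ideal.eq_top_iff_one]
      apply hI
      rw [Ideal.mem_leadingCoeff]
      exact ⟨1, trivial, by simp⟩
    rw [Ideal.isPrime_iff] at hpr
    push Not at hpr
    obtain ⟨a, b, hab, ha, hb⟩ := hpr hne
    have h1 : (I ⊔ Ideal.span {a}).leadingCoeff * (I ⊔ Ideal.span {b}).leadingCoeff ≤ p := by
      refine (SD.lead_mul _ _ I ?_).trans hI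
      rw [Ideal.sup_mul, Ideal.mul_sup (Ideal.span {a}), Ideal.span_singleton_mul_span_singleton]
      refine sup_le Ideal.mul_le_left (sup_le Ideal.mul_le_right ?_)
      rwa [Ideal.span_singleton_le_iff_mem]
    have h2 : ∀ c ∉ I, I < I ⊔ Ideal.span {c} := by
      intro c hc
      refine lt_of_le_of_ne le_sup_left fun h => hc ?_
      rw [h]
      exact Ideal.mem_sup_right (Ideal.mem_span_singleton_self c)
    rcases hp.mul_le.1 h1 with h | h
    · obtain ⟨q, h3, h4, h5⟩ := ih _ (h2 a ha) h
      exact ⟨q, h3, le_sup_left.trans h4, h5⟩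
    · obtain ⟨q, h3, h4, h5⟩ := ih _ (h2 b hb) h
      exact ⟨q, h3, le_sup_left.trans h4, h5⟩

attribute [local instance] Polynomial.algebra Polynomial.isLocalization in
theorem SD.height_le_add_one {D : Type*} [CommRing D] [IsNoetherianRing D] (p : Ideal D)
    (P : Ideal (Polynomial D)) [P.IsPrime] [P.LiesOver p] : P.height ≤ p.height + 1 := by
  have : p.IsPrime := by rw [P.over_def p]; infer_instance
  let Rₚ := Localization.AtPrime p
  set p' : Ideal Rₚ := p.map (algebraMap D Rₚ) with p'_def
  have : p'.IsMaximal := by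
    rw [p'_def, Localization.AtPrime.map_eq_maximalIdeal]
    exact IsLocalRing.maximalIdeal.isMaximal Rₚ
  let P' : Ideal (Polynomial Rₚ) := P.map (algebraMap (Polynomial D) (Polynomial Rₚ))
  have disj : Disjoint (p.primeCompl.map Polynomial.C : Set (Polynomial D)) P := by
    refine Set.disjoint_left.mpr fun a ⟨b, hb⟩ ha ↦ hb.1 ?_
    rwa [SetLike.mem_coe, Ideal.LiesOver.over (P := P) (p := p), Ideal.mem_comap, Polynomial.algebraMap_eq, hb.2]
  have hP' : P'.IsPrime := IsLocalization.isPrime_of_isPrime_disjoint (p.primeCompl.map Polynomial.C) _ P ‹_› disj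
  obtain ⟨M, hM, hPM⟩ := Ideal.exists_le_maximal P' hP'.ne_top
  have : P'.LiesOver p' := IsLocalization.liesOver_of_isPrime_of_disjoint p.primeCompl _ _ disj
  have : M.LiesOver p' := by
    constructor
    refine Ideal.IsMaximal.eq_of_le ‹p'.IsMaximal› ?_ ?_
    · have : (M.under Rₚ).IsPrime := inferInstance
      exact this.ne_top
    · rw [P'.over_def p']
      exact Ideal.comap_mono hPM
  have eq1 : p.height = p'.height := by
    rw [IsLocalization.height_map_of_disjoint p.primeCompl]
    exact Disjoint.symm <| Set.disjoint_left.mpr fun _ a b ↦ b a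
  have eq2 : P.height = P'.height := by
    rw [IsLocalization.height_map_of_disjoint (Submonoid.map Polynomial.C <| p.primeCompl) _ disj]
  rw [eq1, eq2, ← Polynomial.height_eq_height_add_one p' M]
  exact Ideal.height_mono hPM

theorem SD.height_lead_aux {D : Type*} [CommRing D] [IsNoetherianRing D] (p : Ideal D) [hp : p.IsPrime]
    (q : Ideal (Polynomial D)) [hq : q.IsPrime] (hqp : q.leadingCoeff ≤ p) : q.height ≤ p.height := by
  set p0 : Ideal D := q.comap Polynomial.C with hp0
  have : p0.IsPrime := inferInstance
  have hlo : q.LiesOver p0 := ⟨rfl⟩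
  have h0 : p0 ≤ q.leadingCoeff := by
    intro a ha
    rw [Ideal.mem_leadingCoeff]
    exact ⟨Polynomial.C a, ha, by simp⟩
  by_cases hle : q ≤ p0.map Polynomial.C
  · have e : q = p0.map Polynomial.C := le_antisymm hle Ideal.map_comap_le
    have h1 := Ideal.height_le_height_add_of_liesOver p0 q
    have h2 : (q.map (Ideal.Quotient.mk <| p0.map (algebraMap D (Polynomial D)))).height = 0 := by
      have e2 : (p0.map (algebraMap D (Polynomial D))) = q := e.symm
      rw [e2, Ideal.map_quotient_self]
      exact Ideal.height_bot
    rw [h2, add_zero] at h1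
    exact h1.trans (Ideal.height_mono (h0.trans hqp))
  · have h3 : p0 < p := by
      refine lt_of_le_of_ne (h0.trans hqp) fun he => hle fun F hF => ?_
      rw [Ideal.mem_map_C_iff]
      have key : ∀ n, ∀ F ∈ q, F.natDegree < n → ∀ k, F.coeff k ∈ p0 := by
        intro n
        induction n with
        | zero => intro F _ h; omega
        | succ n ih =>
          intro F hF hd k
          have hl : F.coeff F.natDegree ∈ p0 := by
            rw [he]; apply hqp
            rw [Ideal.mem_leadingCoeff]
            exact ⟨F, hF, rfl⟩
          have hm : Polynomial.monomial F.natDegree F.leadingCoeff ∈ q := by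
            rw [← Polynomial.C_mul_X_pow_eq_monomial]
            exact Ideal.mul_mem_right _ _ hl
          by_cases hn : F.natDegree = 0
          · rcases Nat.eq_zero_or_pos k with rfl | hk
            · rw [hn] at hl; exact hl
            · rw [Polynomial.coeff_eq_zero_of_natDegree_lt (by omega)]; exact zero_mem _
          have := ih F.eraseLead (by
            rw [← Polynomial.self_sub_monomial_natDegree_leadingCoeff]
            exact sub_mem hF hm) (by have := F.eraseLead_natDegree_le; omega) k
          by_cases hk : k = F.natDegree
          · rw [hk]; exact hl
          · rwa [Polynomial.eraseLead_coeff_of_ne _ hk] at this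
      exact key _ F hF (Nat.lt_succ_self _)
    exact (SD.height_le_add_one p0 q).trans (Ideal.height_add_one_le_of_lt_of_isPrime h3)

theorem SD.height_lead {D : Type*} [CommRing D] [IsNoetherianRing D] (I : Ideal (Polynomial D)) :
    I.height ≤ I.leadingCoeff.height := by
  rw [I.leadingCoeff.height_eq_inf_minimalPrimes]
  refine le_iInf₂ fun p hp => ?_
  have := hp.1.1
  obtain ⟨q, h1, h2, h3⟩ := SD.lead_prime p I hp.1.2
  exact (Ideal.height_mono h2).trans (SD.height_lead_aux p q h3)

theorem SD.base_height {R C : Type*} [CommRing R] [IsNoetherianRing R] [CommRing C] [Algebra (Polynomial R) C]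
    (f : Polynomial R) (hf : f.Monic) [IsLocalization.Away f C] (d : ℕ) (hd : ringKrullDim R ≤ d) (I : Ideal C)
    (hI : (d + 1 : ℕ) ≤ I.height) :
    ∃ g ∈ I.comap (algebraMap _ C), g.Monic ∧ IsCoprime g f := by
  by_cases hR : Subsingleton R
  · refine ⟨0, zero_mem _, Subsingleton.elim _ _, 0, 0, Subsingleton.elim _ _⟩
  have hnt : Nontrivial R := not_subsingleton_iff_nontrivial.1 hR
  set J := I.comap (algebraMap (Polynomial R) C) with hJ
  have hJh : J.height = I.height := IsLocalization.height_under (Submonoid.powers f) I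
  obtain ⟨F0, hF0, hF0m⟩ : ∃ F0 ∈ J, F0.Monic := by
    have : (1 : R) ∈ J.leadingCoeff := by
      rw [← Ideal.eq_top_iff_one]
      by_contra hne
      have h1 := (Ideal.height_le_ringKrullDim_of_ne_top hne).trans hd
      have h2 := SD.height_lead J
      rw [hJh] at h2
      have h3 : ((d + 1 : ℕ) : ℕ∞) ≤ (d : ℕ∞) := by
        refine (hI.trans h2).trans ?_
        exact_mod_cast h1
      have := Nat.cast_le.1 h3
      omega
    rw [Ideal.mem_leadingCoeff] at this
    exact this
  have hcop : J ⊔ Ideal.span {f} = ⊤ := by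
    by_contra hne
    obtain ⟨m, hm, hle⟩ := Ideal.exists_le_maximal _ hne
    obtain ⟨q, hq, hqm⟩ := Ideal.exists_minimalPrimes_le (le_sup_left.trans hle)
    have hqp := hq.1.1
    have hfm : f ∈ m := hle (Ideal.mem_sup_right (Ideal.mem_span_singleton_self f))
    have hfq : f ∉ q := by
      have h1 := hq
      rw [hJ, IsLocalization.minimalPrimes_comap (Submonoid.powers f) C] at h1
      obtain ⟨q', hq', rfl⟩ := h1
      intro hf'
      exact hq'.1.1.ne_top (Ideal.eq_top_of_isUnit_mem _ hf' (IsLocalization.Away.algebraMap_isUnit f))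
    have hlt : q < m := lt_of_le_of_ne hqm (fun h => hfq (h ▸ hfm))
    have h1 := Ideal.height_add_one_le_of_lt_of_isPrime hlt
    have h2 : J.height ≤ q.height := Ideal.height_mono hq.1.2
    have h3 := Ideal.height_le_ringKrullDim_of_ne_top hm.ne_top
    rw [Polynomial.ringKrullDim_of_isNoetherianRing] at h3
    have h4 : ((m.height : ℕ∞) : WithBot ℕ∞) ≤ ((d + 1 : ℕ) : ℕ∞) := by
      refine h3.trans ?_
      push_cast
      exact add_le_add_left hd 1
    rw [hJh] at h2
    have h5 : ((d + 1 + 1 : ℕ) : ℕ∞) ≤ (d + 1 : ℕ) := by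
      refine le_trans ?_ (h1.trans (WithBot.coe_le_coe.1 h4))
      push_cast at hI ⊢
      exact add_le_add_left (hI.trans h2) 1
    have := Nat.cast_le.1 h5
    omega
  obtain ⟨u, hu, w, hw, huw⟩ := Submodule.mem_sup.1 ((Ideal.eq_top_iff_one _).1 hcop)
  obtain ⟨w, rfl⟩ := Ideal.mem_span_singleton.1 hw
  refine ⟨f * F0 * Polynomial.X ^ (u.natDegree + 1) + u, ?_, ?_, ?_⟩
  · exact add_mem (Ideal.mul_mem_right _ _ (Ideal.mul_mem_left _ _ hF0)) hu
  · refine Polynomial.Monic.add_of_left ((hf.mul hF0m).mul (Polynomial.monic_X_pow _)) ?_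
    apply Polynomial.degree_lt_degree
    rw [(hf.mul hF0m).natDegree_mul (Polynomial.monic_X_pow _), Polynomial.natDegree_X_pow]
    omega
  · refine ⟨1, w - F0 * Polynomial.X ^ (u.natDegree + 1), ?_⟩
    linear_combination huw



structure SD.Step {D A : Type u} [CommRing D] [CommRing A] (j : D →+* A) (h : Polynomial D) (x : A) : Prop where
  unit : IsUnit (h.eval₂ j x)
  ex : ∀ (E : Type u) [CommRing E] (g : D →+* E) (e : E), IsUnit (h.eval₂ g e) →
    ∃ k : A →+* E, k.comp j = g ∧ k x = e
  uniq : ∀ (E : Type u) [CommRing E] (k k' : A →+* E), k.comp j = k'.comp j → k x = k' x → k = k'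

section
variable {D A : Type u} [CommRing D] [CommRing A]

theorem SD.Step.of_loc [Algebra (Polynomial D) A] (h : Polynomial D) [IsLocalization.Away h A] :
    SD.Step ((algebraMap (Polynomial D) A).comp Polynomial.C) h (algebraMap (Polynomial D) A Polynomial.X) where
  unit := by
    have : h.eval₂ ((algebraMap (Polynomial D) A).comp Polynomial.C) (algebraMap (Polynomial D) A Polynomial.X) = algebraMap _ A h := by
      rw [← Polynomial.hom_eval₂, Polynomial.eval₂_C_X]
    rw [this]
    exact IsLocalization.Away.algebraMap_isUnit h
  ex := by
    intro E _ g e he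
    refine ⟨IsLocalization.Away.lift (S := A) (g := Polynomial.eval₂RingHom g e) h he, ?_, ?_⟩
    · ext d
      exact (IsLocalization.Away.lift_eq h he (Polynomial.C d)).trans (by simp)
    · exact (IsLocalization.Away.lift_eq h he Polynomial.X).trans (by simp)
  uniq := by
    intro E _ k k' h1 h2
    apply IsLocalization.ringHom_ext (Submonoid.powers h)
    apply Polynomial.ringHom_ext
    · intro a; exact RingHom.congr_fun h1 a
    · exact h2

theorem SD.Step.isLoc {j : D →+* A} {h : Polynomial D} {x : A} (H : SD.Step j h x) :
    let _ := (Polynomial.eval₂RingHom j x).toAlgebra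
    IsLocalization.Away h A := by
  intro _
  let L := Localization.Away h
  have HL := SD.Step.of_loc (A := L) h
  obtain ⟨k, hk1, hk2⟩ := HL.ex A j x H.unit
  obtain ⟨k', hk1', hk2'⟩ := H.ex L _ _ HL.unit
  have e1 : k.comp k' = RingHom.id A := H.uniq _ _ _ (by rw [RingHom.comp_assoc, hk1', hk1]; rfl) (by simp [hk2', hk2])
  have e2 : k'.comp k = RingHom.id L := HL.uniq _ _ _ (by rw [RingHom.comp_assoc, hk1, hk1']; rfl) (by simp [hk2', hk2])
  have hk : ∀ p : Polynomial D, k (algebraMap _ L p) = algebraMap _ A p := by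
    intro p
    have : k.comp (algebraMap _ L) = algebraMap (Polynomial D) A := by
      apply Polynomial.ringHom_ext
      · intro a
        have := RingHom.congr_fun hk1 a
        simpa [RingHom.algebraMap_toAlgebra] using this
      · simpa [RingHom.algebraMap_toAlgebra] using hk2
    exact RingHom.congr_fun this p
  let ee : L ≃ₐ[Polynomial D] A := AlgEquiv.ofRingEquiv (f := RingEquiv.ofRingHom k k' e1 e2) hk
  exact IsLocalization.isLocalization_of_algEquiv (Submonoid.powers h) ee

theorem SD.Step.noeth {j : D →+* A} {h : Polynomial D} {x : A} (H : SD.Step j h x) [IsNoetherianRing D] :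
    IsNoetherianRing A := by
  let _ := (Polynomial.eval₂RingHom j x).toAlgebra
  have := H.isLoc
  exact IsLocalization.isNoetherianRing (Submonoid.powers h) A inferInstance

theorem SD.Step.inv {j : D →+* A} {x x' : A} (H : SD.Step j Polynomial.X x) (hx : x * x' = 1) :
    SD.Step j Polynomial.X x' where
  unit := by rw [Polynomial.eval₂_X]; exact IsUnit.of_mul_eq_one _ ((mul_comm _ _).trans hx)
  ex := by
    intro E _ g e he
    rw [Polynomial.eval₂_X] at he
    obtain ⟨e', he'⟩ := he.exists_right_inv
    obtain ⟨k, h1, h2⟩ := H.ex E g e' (by rw [Polynomial.eval₂_X]; exact IsUnit.of_mul_eq_one _ ((mul_comm _ _).trans he'))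
    refine ⟨k, h1, ?_⟩
    have := congrArg k hx
    rw [map_mul, h2, map_one] at this
    linear_combination (-k x') * he' + e * this
  uniq := by
    intro E _ k k' h1 h2
    refine H.uniq E k k' h1 ?_
    have e1 := congrArg k hx
    have e2 := congrArg k' hx
    simp only [map_mul, map_one] at e1 e2
    rw [h2] at e1
    linear_combination (-k x) * e2 + (k' x) * e1

theorem SD.Step.comm {S S' : Type u} [CommRing S] [CommRing S'] {i : S →+* D} {f : Polynomial S} {y : D}
    (H1 : SD.Step i f y) {j : D →+* A} {h : Polynomial D} {x : A} (H2 : SD.Step j h x)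
    {k : S →+* S'} {h' : Polynomial S} {t : S'} (H3 : SD.Step k h' t) (ι : S' →+* A) (hι : ι.comp k = j.comp i)
    (hcase : (h = 1 ∧ ∃ w, x = ι t + j w) ∨ (h = Polynomial.X ∧ h' = Polynomial.X ∧ ∃ w, IsUnit w ∧ x = ι t * j w)) :
    SD.Step ι (f.map k) (j y) where
  unit := by
    rw [Polynomial.eval₂_map, hι, ← Polynomial.hom_eval₂]
    exact H1.unit.map j
  ex := by
    intro E _ g e he
    rw [Polynomial.eval₂_map] at he
    obtain ⟨g1, h1, h2⟩ := H1.ex E (g.comp k) e he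
    have fin : ∀ k2 : A →+* E, k2.comp j = g1 → k2 (ι t) = g t → ∃ k : A →+* E, k.comp ι = g ∧ k (j y) = e := by
      intro k2 h3 h4
      refine ⟨k2, ?_, ?_⟩
      · apply H3.uniq
        · rw [RingHom.comp_assoc, hι, ← RingHom.comp_assoc, h3, h1]
        · exact h4
      · rw [← h2, ← h3]; rfl
    rcases hcase with ⟨rfl, w, hw⟩ | ⟨rfl, rfl, w, hwu, hw⟩
    · obtain ⟨k2, h3, h4⟩ := H2.ex E g1 (g t + g1 w) (by simp)
      refine fin k2 h3 ?_
      rw [hw, map_add, ← h3] at h4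
      exact add_right_cancel h4
    · have ht : IsUnit t := by simpa using H3.unit
      obtain ⟨k2, h3, h4⟩ := H2.ex E g1 (g t * g1 w) (by rw [Polynomial.eval₂_X]; exact (ht.map g).mul (hwu.map g1))
      refine fin k2 h3 ?_
      rw [hw, map_mul, ← h3] at h4
      exact ((hwu.map j).map k2).mul_right_cancel h4
  uniq := by
    intro E _ k1 k2 h1 h2
    have h3 : k1.comp j = k2.comp j := by
      apply H1.uniq
      · rw [RingHom.comp_assoc, RingHom.comp_assoc, ← hι, ← RingHom.comp_assoc, ← RingHom.comp_assoc, h1]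
      · exact h2
    refine H2.uniq _ _ _ h3 ?_
    have h4 : k1 (ι t) = k2 (ι t) := RingHom.congr_fun h1 t
    have h5 : ∀ w, k1 (j w) = k2 (j w) := fun w => RingHom.congr_fun h3 w
    rcases hcase with ⟨rfl, w, hw⟩ | ⟨rfl, rfl, w, hwu, hw⟩
    · rw [hw, map_add, map_add, h4, h5]
    · rw [hw, map_mul, map_mul, h4, h5]

theorem SD.Step.congr {A' : Type u} [CommRing A'] {j : D →+* A} {h : Polynomial D} {x : A} (H : SD.Step j h x)
    (e : A ≃+* A') : SD.Step (e.toRingHom.comp j) h (e x) where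
  unit := by
    have := H.unit.map e.toRingHom
    rwa [Polynomial.hom_eval₂] at this
  ex := by
    intro E _ g a ha
    obtain ⟨k, h1, h2⟩ := H.ex E g a ha
    refine ⟨k.comp e.symm.toRingHom, ?_, by simpa using h2⟩
    rw [← h1]
    ext; simp
  uniq := by
    intro E _ k k' h1 h2
    have := H.uniq E (k.comp e.toRingHom) (k'.comp e.toRingHom) h1 h2
    ext a
    have := RingHom.congr_fun this (e.symm a)
    simpa using this

end

def SD.hpoly (D : Type u) [CommRing D] : Bool → Polynomial D
  | true => Polynomial.X
  | false => 1

def SD.Tow (R : Type u) [CommRing R] (f : Polynomial R) : List Bool → ∀ (A : Type u) [CommRing A] [Algebra R A], Prop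
  | [], A, _, _ => ∃ y, SD.Step (algebraMap R A) f y
  | b :: l, A, _, _ => ∃ (D : Type u) (_ : CommRing D) (_ : Algebra R D) (j : D →ₐ[R] A) (x : A),
      SD.Tow R f l D ∧ SD.Step j.toRingHom (SD.hpoly D b) x

theorem SD.Tow.noeth {R : Type u} [CommRing R] [IsNoetherianRing R] {f : Polynomial R} {l : List Bool} {A : Type u}
    [CommRing A] [Algebra R A] (H : SD.Tow R f l A) : IsNoetherianRing A := by
  induction l generalizing A with
  | nil => obtain ⟨y, hy⟩ := H; exact hy.noeth
  | cons b l ih =>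
    obtain ⟨D, _, _, j, x, h1, h2⟩ := H
    have := ih h1
    exact h2.noeth

theorem SD.Step.push {D A D' A' : Type u} [CommRing D] [CommRing A] [CommRing D'] [CommRing A']
    {j : D →+* A} {h : Polynomial D} {x : A} (H : SD.Step j h x) (δ : D →+* D') (α : A →+* A') (j' : D' →+* A')
    (hc : α.comp j = j'.comp δ)
    (hex : ∀ (E : Type u) [CommRing E] (g : D' →+* E) (k : A →+* E), k.comp j = g.comp δ →
      ∃ k' : A' →+* E, k'.comp j' = g ∧ k'.comp α = k)
    (huniq : ∀ (E : Type u) [CommRing E] (k k' : A' →+* E), k.comp j' = k'.comp j' → k.comp α = k'.comp α → k = k') :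
    SD.Step j' (h.map δ) (α x) where
  unit := by
    have := H.unit.map α
    rwa [Polynomial.hom_eval₂, hc, ← Polynomial.eval₂_map] at this
  ex := by
    intro E _ g e he
    rw [Polynomial.eval₂_map] at he
    obtain ⟨k, h1, h2⟩ := H.ex E _ e he
    obtain ⟨k', h3, h4⟩ := hex E g k h1
    refine ⟨k', h3, ?_⟩
    rw [← h2, ← h4]; rfl
  uniq := by
    intro E _ k k' h1 h2
    refine huniq E k k' h1 ?_
    apply H.uniq
    · rw [RingHom.comp_assoc, hc, ← RingHom.comp_assoc, h1, RingHom.comp_assoc, ← hc, RingHom.comp_assoc]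
    · exact h2

theorem SD.tensor_ex {R R' A E : Type u} [CommRing R] [CommRing R'] [Algebra R R'] [CommRing A] [Algebra R A]
    [CommRing E] (g : R' →+* E) (k : A →+* E) (h : k.comp (algebraMap R A) = g.comp (algebraMap R R')) :
    ∃ k' : R' ⊗[R] A →+* E, (∀ r, k' (r ⊗ₜ 1) = g r) ∧ (∀ a, k' (1 ⊗ₜ a) = k a) := by
  let _ : Algebra R' E := g.toAlgebra
  let _ : Algebra R E := (g.comp (algebraMap R R')).toAlgebra
  have : IsScalarTower R R' E := IsScalarTower.of_algebraMap_eq' rfl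
  let ka : A →ₐ[R] E := AlgHom.mk k (fun r => RingHom.congr_fun h r)
  refine ⟨(Algebra.TensorProduct.lift (Algebra.ofId R' E) ka (fun _ _ => Commute.all _ _)).toRingHom, ?_, ?_⟩
  · intro r
    change (Algebra.TensorProduct.lift (Algebra.ofId R' E) ka _) (r ⊗ₜ 1) = _
    rw [Algebra.TensorProduct.lift_tmul, map_one, mul_one]; rfl
  · intro a
    change (Algebra.TensorProduct.lift (Algebra.ofId R' E) ka _) (1 ⊗ₜ a) = _
    rw [Algebra.TensorProduct.lift_tmul, map_one, one_mul]; rfl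

theorem SD.tensor_ext {R R' A E : Type u} [CommRing R] [CommRing R'] [Algebra R R'] [CommRing A] [Algebra R A]
    [CommRing E] (k k' : R' ⊗[R] A →+* E) (h1 : ∀ r, k (r ⊗ₜ 1) = k' (r ⊗ₜ 1)) (h2 : ∀ a, k (1 ⊗ₜ a) = k' (1 ⊗ₜ a)) :
    k = k' := by
  apply Algebra.TensorProduct.ringHom_ext
  · ext r; exact h1 r
  · ext a; exact h2 a

theorem SD.Tow.tensor {R R' : Type u} [CommRing R] [CommRing R'] [Algebra R R'] {f : Polynomial R} {l : List Bool} {A : Type u}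
    [CommRing A] [Algebra R A] (H : SD.Tow R f l A) : SD.Tow R' (f.map (algebraMap R R')) l (R' ⊗[R] A) := by
  induction l generalizing A with
  | nil =>
    obtain ⟨y, hy⟩ := H
    refine ⟨1 ⊗ₜ y, hy.push (algebraMap R R') (Algebra.TensorProduct.includeRight : A →ₐ[R] R' ⊗[R] A).toRingHom
      (algebraMap R' (R' ⊗[R] A)) ?_ ?_ ?_⟩
    · ext r
      change (1 : R') ⊗ₜ[R] (algebraMap R A r) = (algebraMap R R' r) ⊗ₜ 1
      rw [Algebra.TensorProduct.tmul_one_eq_one_tmul]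
    · intro E _ g k h
      obtain ⟨k', h1, h2⟩ := SD.tensor_ex g k h
      exact ⟨k', RingHom.ext h1, RingHom.ext h2⟩
    · intro E _ k k' h1 h2
      exact SD.tensor_ext k k' (RingHom.congr_fun h1) (RingHom.congr_fun h2)
  | cons b l ih =>
    obtain ⟨D, _, _, j, x, h1, h2⟩ := H
    refine ⟨R' ⊗[R] D, inferInstance, inferInstance, Algebra.TensorProduct.map (AlgHom.id R' R') j, 1 ⊗ₜ x, ih h1, ?_⟩
    have := h2.push (Algebra.TensorProduct.includeRight : D →ₐ[R] R' ⊗[R] D).toRingHom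
      (Algebra.TensorProduct.includeRight : A →ₐ[R] R' ⊗[R] A).toRingHom
      (Algebra.TensorProduct.map (AlgHom.id R' R') j).toRingHom ?_ ?_ ?_
    · convert this using 1
      · cases b <;> simp [SD.hpoly]
      · rfl
    · ext d
      change (1 : R') ⊗ₜ[R] (j d) = Algebra.TensorProduct.map (AlgHom.id R' R') j (1 ⊗ₜ d)
      simp
    · intro E _ g k h
      obtain ⟨k', h1, h2⟩ := SD.tensor_ex (R := R) (g.comp (algebraMap R' (R' ⊗[R] D))) k (by
        ext r
        have := RingHom.congr_fun h (algebraMap R D r)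
        have e : k (j (algebraMap R D r)) = g ((1 : R') ⊗ₜ[R] (algebraMap R D r)) := this
        rw [j.commutes, ← Algebra.TensorProduct.tmul_one_eq_one_tmul] at e
        exact e)
      refine ⟨k', ?_, RingHom.ext h2⟩
      apply SD.tensor_ext
      · intro r
        change k' (Algebra.TensorProduct.map (AlgHom.id R' R') j (r ⊗ₜ 1)) = _
        rw [Algebra.TensorProduct.map_tmul, map_one]
        exact h1 r
      · intro d
        change k' (Algebra.TensorProduct.map (AlgHom.id R' R') j (1 ⊗ₜ d)) = _
        rw [Algebra.TensorProduct.map_tmul, map_one, h2]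
        exact RingHom.congr_fun h d
    · intro E _ k k' h1 h2
      refine SD.tensor_ext k k' (fun r => ?_) (RingHom.congr_fun h2)
      have : k (Algebra.TensorProduct.map (AlgHom.id R' R') j (r ⊗ₜ 1)) = k' (Algebra.TensorProduct.map (AlgHom.id R' R') j (r ⊗ₜ 1)) :=
        RingHom.congr_fun h1 (r ⊗ₜ 1)
      rwa [Algebra.TensorProduct.map_tmul, map_one] at this

/-- shift -/
theorem SD.Tow.shift {K : Type u} [CommRing K] {f : Polynomial K} (l : List Bool) (b : Bool) {A : Type u}
    [CommRing A] [Algebra K A] (H : SD.Tow K f (l ++ [b]) A) :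
    ∃ (C : Type u) (_ : CommRing C) (_ : Algebra K C) (_ : Algebra C A), SD.Tow K f [] C ∧ SD.Tow C (SD.hpoly C b) l A := by
  induction l generalizing A with
  | nil =>
    obtain ⟨D, _, _, j, x, h1, h2⟩ := H
    let _ := j.toRingHom.toAlgebra
    exact ⟨D, _, _, _, h1, x, h2⟩
  | cons c l ih =>
    obtain ⟨D, _, _, j, x, h1, h2⟩ := H
    obtain ⟨C, _, _, _, h3, h4⟩ := ih h1
    let _ : Algebra C A := (j.toRingHom.comp (algebraMap C D)).toAlgebra
    refine ⟨C, _, _, _, h3, D, _, _, ⟨j.toRingHom, fun _ => rfl⟩, x, h4, h2⟩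

theorem SD.Tow.congr {R : Type u} [CommRing R] {f : Polynomial R} {l : List Bool} {A A' : Type u}
    [CommRing A] [Algebra R A] [CommRing A'] [Algebra R A'] (e : A ≃ₐ[R] A') (H : SD.Tow R f l A) : SD.Tow R f l A' := by
  cases l with
  | nil =>
    obtain ⟨y, hy⟩ := H
    refine ⟨e y, ?_⟩
    have := hy.congr e.toRingEquiv
    convert this using 1
    · ext r
      exact (e.commutes r).symm
    · rfl
  | cons b l =>
    obtain ⟨D, _, _, j, x, h1, h2⟩ := H
    exact ⟨D, _, _, e.toAlgHom.comp j, e x, h1, h2.congr e.toRingEquiv⟩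

/-- existence -/
theorem SD.Tow.exist (R : Type u) [CommRing R] (f : Polynomial R) (l : List Bool) :
    ∃ (A : Type u) (_ : CommRing A) (_ : Algebra R A), SD.Tow R f l A := by
  induction l with
  | nil =>
    let A := Localization.Away f
    let _ : Algebra R A := ((algebraMap (Polynomial R) A).comp Polynomial.C).toAlgebra
    exact ⟨A, inferInstance, _, _, SD.Step.of_loc (A := A) f⟩
  | cons b l ih =>
    obtain ⟨D, _, _, h⟩ := ih
    let A := Localization.Away (SD.hpoly D b)
    let j := ((algebraMap (Polynomial D) A).comp Polynomial.C)
    let _ : Algebra R A := (j.comp (algebraMap R D)).toAlgebra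
    exact ⟨A, inferInstance, _, D, _, _, ⟨j, fun _ => rfl⟩, _, h, SD.Step.of_loc (A := A) _⟩



theorem SD.mul_deg {Q : Type*} [CommRing Q] {p q : Polynomial Q} {a b : ℕ} (hp : p.natDegree ≤ a) (hq : q.natDegree ≤ b) :
    (p * q).natDegree ≤ a + b ∧ (p * q).coeff (a + b) = p.coeff a * q.coeff b :=
  ⟨Polynomial.natDegree_mul_le_of_le hp hq, Polynomial.coeff_mul_add_eq_of_natDegree_le hp hq⟩

theorem SD.pow_deg {Q : Type*} [CommRing Q] {p : Polynomial Q} {a : ℕ} (hp : p.natDegree ≤ a) (n : ℕ) :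
    (p ^ n).natDegree ≤ n * a ∧ (p ^ n).coeff (n * a) = p.coeff a ^ n :=
  ⟨Polynomial.natDegree_pow_le_of_le n hp, Polynomial.coeff_pow_of_natDegree_le hp⟩

theorem SD.sum_deg {Q : Type*} [CommRing Q] {p : Polynomial Q} {m : ℕ} (s : ℕ → Polynomial Q) (n : ℕ)
    (hp : p.natDegree ≤ m) (hs : ∀ j < n, (s j).natDegree < m) :
    (p + ∑ j ∈ Finset.range n, s j).natDegree ≤ m ∧ (p + ∑ j ∈ Finset.range n, s j).coeff m = p.coeff m := by
  constructor
  · refine Polynomial.natDegree_add_le_of_degree_le hp ?_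
    exact Polynomial.natDegree_sum_le_of_forall_le _ _ (fun j hj => (hs j (Finset.mem_range.1 hj)).le)
  · rw [Polynomial.coeff_add, Polynomial.finsetSum_coeff, Finset.sum_eq_zero, add_zero]
    intro j hj
    exact Polynomial.coeff_eq_zero_of_natDegree_lt (hs j (Finset.mem_range.1 hj))


def SD.Special {S A : Type*} [CommRing S] [CommRing A] (f : Polynomial S) (ι : S →+* A) (y : A) (s : S) (a : A) : Prop :=
  ∃ (k E i j : ℕ) (g p q : Polynomial S) (u : S), IsUnit u ∧ g.natDegree ≤ E ∧ g.coeff E = u * s ^ i ∧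
    p * g + q * f = Polynomial.C (s ^ j) ∧ a * (f.eval₂ ι y) ^ k = g.eval₂ ι y

theorem SD.Special.const {S A : Type*} [CommRing S] [CommRing A] (f : Polynomial S) (ι : S →+* A) (y : A) (s : S) :
    SD.Special f ι y s (ι s) :=
  ⟨0, 0, 1, 1, Polynomial.C s, 1, 0, 1, isUnit_one, by simp, by simp, by simp, by simp⟩

section
variable {Q : Type*} [CommRing Q] (f : Polynomial Q) (δ : ℕ)

theorem SD.gz_deg (hf1 : f.natDegree ≤ δ) (hf2 : f.coeff δ = 1) : (Polynomial.X * f ^ 2 + 1 : Polynomial Q).natDegree ≤ 2 * δ + 1 ∧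
    (Polynomial.X * f ^ 2 + 1 : Polynomial Q).coeff (2 * δ + 1) = 1 := by
  have h2 := SD.pow_deg hf1 2
  have h3 := SD.mul_deg (p := Polynomial.X) (q := f ^ 2) (Polynomial.natDegree_X_le) h2.1
  have h4 : (Polynomial.X * f ^ 2 : Polynomial Q).natDegree ≤ 2 * δ + 1 := by rw [add_comm]; exact h3.1
  constructor
  · exact Polynomial.natDegree_add_le_of_degree_le h4 (by simp)
  · rw [Polynomial.coeff_add, add_comm (2 * δ) 1, h3.2, h2.2, hf2]
    simp [Polynomial.coeff_one]

theorem SD.W_deg (hf1 : f.natDegree ≤ δ) (hf2 : f.coeff δ = 1) (N : ℕ) (hN : 1 ≤ N) (τ : Q) :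
    (Polynomial.C τ * f ^ N + (Polynomial.X * f ^ 2 + 1) ^ N).natDegree ≤ N * (2 * δ + 1) ∧
    (Polynomial.C τ * f ^ N + (Polynomial.X * f ^ 2 + 1) ^ N).coeff (N * (2 * δ + 1)) = 1 := by
  have h1 := SD.gz_deg f δ hf1 hf2
  have h2 := SD.pow_deg h1.1 N
  have h3 : (Polynomial.C τ * f ^ N).natDegree < N * (2 * δ + 1) := by
    refine lt_of_le_of_lt (Polynomial.natDegree_C_mul_le _ _) (lt_of_le_of_lt (SD.pow_deg hf1 N).1 ?_)
    nlinarith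
  constructor
  · exact Polynomial.natDegree_add_le_of_degree_le h3.le h2.1
  · rw [Polynomial.coeff_add, Polynomial.coeff_eq_zero_of_natDegree_lt h3, h2.2, h1.2]; simp

theorem SD.W_mod (N : ℕ) (hN : 1 ≤ N) (τ : Q) :
    f ∣ (Polynomial.C τ * f ^ N + (Polynomial.X * f ^ 2 + 1) ^ N) - 1 := by
  have h1 : f ∣ (Polynomial.X * f ^ 2 + 1) ^ N - 1 ^ N := by
    refine dvd_trans ?_ (sub_dvd_pow_sub_pow _ _ N)
    exact ⟨Polynomial.X * f, by ring⟩
  rw [one_pow] at h1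
  rw [add_sub_assoc]
  exact dvd_add (Dvd.dvd.mul_left (dvd_pow_self f (by omega)) _) h1

theorem SD.poly_calc (hf1 : f.natDegree ≤ δ) (hf2 : f.coeff δ = 1)
    (g : Polynomial Q) (E : ℕ) (hg : g.natDegree ≤ E) (τ : Q) (e k K N : ℕ) (H : ℕ → Polynomial Q) (hK : K < N)
    (hH : ∀ j < e, (H j).natDegree + k * δ < N) (W : Polynomial Q)
    (hW : W = Polynomial.C τ * f ^ N + (Polynomial.X * f ^ 2 + 1) ^ N) :
    (g * W ^ e + ∑ j ∈ Finset.range e, H j * f ^ (N * (e - j) + k - K) * W ^ j).natDegree ≤ E + e * (N * (2 * δ + 1)) ∧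
    (g * W ^ e + ∑ j ∈ Finset.range e, H j * f ^ (N * (e - j) + k - K) * W ^ j).coeff (E + e * (N * (2 * δ + 1))) = g.coeff E ∧
    f ∣ (g * W ^ e + ∑ j ∈ Finset.range e, H j * f ^ (N * (e - j) + k - K) * W ^ j) - g := by
  have hN : 1 ≤ N := by omega
  have hWd := SD.W_deg f δ hf1 hf2 N hN τ
  have hWm := SD.W_mod f N hN τ
  rw [← hW] at hWd hWm
  have hp := SD.pow_deg hWd.1 e
  have hgp := SD.mul_deg hg hp.1
  have hs := SD.sum_deg (fun j => H j * f ^ (N * (e - j) + k - K) * W ^ j) e hgp.1 (by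
    intro j hj
    have h1 := (SD.mul_deg (SD.mul_deg (le_refl (H j).natDegree) (SD.pow_deg hf1 (N * (e - j) + k - K)).1).1 (SD.pow_deg hWd.1 j).1).1
    refine lt_of_le_of_lt h1 ?_
    have h2 := hH j hj
    obtain ⟨c, rfl⟩ := Nat.exists_eq_add_of_lt hj
    have h3 : j + c + 1 - j = c + 1 := by omega
    rw [h3]
    have h4 : (N * (c + 1) + k - K) * δ ≤ (N * (c + 1) + k) * δ := Nat.mul_le_mul_right _ (by omega)
    have h5 : N ≤ N * (c + 1) := Nat.le_mul_of_pos_right _ (by omega)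
    nlinarith [Nat.zero_le (N * (c+1) * δ)])
  refine ⟨hs.1, by rw [hs.2, hgp.2, hp.2, hWd.2]; simp, ?_⟩
  have h1 : f ∣ g * W ^ e - g := by
    have : f ∣ W ^ e - 1 ^ e := dvd_trans hWm (sub_dvd_pow_sub_pow _ _ e)
    rw [one_pow] at this
    have h2 : g * W ^ e - g = g * (W ^ e - 1) := by ring
    rw [h2]
    exact Dvd.dvd.mul_left this _
  rw [add_sub_right_comm]
  refine dvd_add h1 (Finset.dvd_sum fun j hj => ?_)
  refine Dvd.dvd.mul_right (Dvd.dvd.mul_left (dvd_pow_self f ?_) _) _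
  have hj := Finset.mem_range.1 hj
  have : N ≤ N * (e - j) := Nat.le_mul_of_pos_right _ (by omega)
  omega

theorem SD.laur_calc (hf1 : f.natDegree ≤ δ) (hf2 : f.coeff δ = 1) (hδ : 1 ≤ δ)
    (g g0 : Polynomial Q) (E : ℕ) (hg : g.natDegree ≤ E) (τ : Q) (e k k0 K N : ℕ) (H : ℕ → Polynomial Q) (hK : K < N)
    (hk : k < N)
    (hH : ∀ j < e, (H j).natDegree + k * δ < N) (hg0 : g0.natDegree + k * δ < N) :
    (g * f ^ (N * (e + 1) + k0 - k) * Polynomial.C τ ^ (e + 1) +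
      ∑ j ∈ Finset.range e, H j * f ^ (k0 + N * (j + 1) - K) * Polynomial.C τ ^ (j + 1) + g0).natDegree ≤ E + (N * (e + 1) + k0 - k) * δ ∧
    (g * f ^ (N * (e + 1) + k0 - k) * Polynomial.C τ ^ (e + 1) +
      ∑ j ∈ Finset.range e, H j * f ^ (k0 + N * (j + 1) - K) * Polynomial.C τ ^ (j + 1) + g0).coeff (E + (N * (e + 1) + k0 - k) * δ) = g.coeff E * τ ^ (e + 1) ∧
    f ∣ (g * f ^ (N * (e + 1) + k0 - k) * Polynomial.C τ ^ (e + 1) +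
      ∑ j ∈ Finset.range e, H j * f ^ (k0 + N * (j + 1) - K) * Polynomial.C τ ^ (j + 1) + g0) - g0 := by
  have hp := SD.pow_deg hf1 (N * (e + 1) + k0 - k)
  have hgp := SD.mul_deg hg hp.1
  have hC : ∀ n, (Polynomial.C τ ^ n).natDegree ≤ 0 := fun n => by rw [← Polynomial.C_pow]; exact (Polynomial.natDegree_C _).le
  have hgp2 := SD.mul_deg hgp.1 (hC (e + 1))
  rw [add_zero] at hgp2
  have key : ∀ (X j : ℕ), j < e + 1 → X + k * δ < N → X + (k0 + N * j) * δ < E + (N * (e + 1) + k0 - k) * δ := by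
    intro X j hj hX
    obtain ⟨c, hc⟩ := Nat.exists_eq_add_of_lt hj
    rw [hc]
    have h5 : N ≤ N * (c + 1) := Nat.le_mul_of_pos_right _ (by omega)
    have h6 : (N * (j + c + 1) + k0 - k) * δ + k * δ = (N * (j + c + 1) + k0) * δ := by
      rw [← add_mul]; congr 1
      have : N ≤ N * (j + c + 1) := Nat.le_mul_of_pos_right _ (by omega)
      omega
    have h7 : N * (c + 1) ≤ N * (c + 1) * δ := Nat.le_mul_of_pos_right _ (by omega)
    nlinarith
  have hs := SD.sum_deg (fun j => H j * f ^ (k0 + N * (j + 1) - K) * Polynomial.C τ ^ (j + 1)) e hgp2.1 (by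
    intro j hj
    have h1 := (SD.mul_deg (SD.mul_deg (le_refl (H j).natDegree) (SD.pow_deg hf1 (k0 + N * (j + 1) - K)).1).1 (hC (j + 1))).1
    refine lt_of_le_of_lt h1 ?_
    refine lt_of_le_of_lt ?_ (key _ (j + 1) (by omega) (hH j hj))
    rw [add_zero]
    exact Nat.add_le_add_left (Nat.mul_le_mul_right _ (by omega)) _)
  have h0 : g0.natDegree < E + (N * (e + 1) + k0 - k) * δ := by
    have := key _ 0 (by omega) hg0
    omega
  refine ⟨Polynomial.natDegree_add_le_of_degree_le hs.1 h0.le, ?_, ?_⟩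
  · rw [Polynomial.coeff_add, Polynomial.coeff_eq_zero_of_natDegree_lt h0, hs.2, hgp2.2, hgp.2, hp.2, hf2, ← Polynomial.C_pow, Polynomial.coeff_C_zero]
    simp
  · rw [add_sub_cancel_right]
    refine dvd_add ?_ (Finset.dvd_sum fun j hj => ?_)
    · refine Dvd.dvd.mul_right (Dvd.dvd.mul_left (dvd_pow_self f ?_) _) _
      have : N ≤ N * (e + 1) := Nat.le_mul_of_pos_right _ (by omega)
      omega
    · refine Dvd.dvd.mul_right (Dvd.dvd.mul_left (dvd_pow_self f ?_) _) _
      have : N ≤ N * (j + 1) := Nat.le_mul_of_pos_right _ (by omega)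
      omega

end



theorem SD.Step.clr {S D : Type u} [CommRing S] [CommRing D] {i : S →+* D} {f : Polynomial S} {y : D} (H : SD.Step i f y)
    (e : ℕ) (b : ℕ → D) : ∃ (K : ℕ) (h : ℕ → Polynomial S), ∀ j < e, b j * (f.eval₂ i y) ^ K = (h j).eval₂ i y := by
  let _ := (Polynomial.eval₂RingHom i y).toAlgebra
  have := H.isLoc
  obtain ⟨K, a, ha⟩ := SD.away_clr f (fun j : Fin e => b j)
  refine ⟨K, fun j => if hj : j < e then a ⟨j, hj⟩ else 0, fun j hj => ?_⟩
  have := ha ⟨j, hj⟩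
  simp only [hj, dif_pos]
  rw [mul_comm]
  exact this.symm

theorem SD.special_poly {S D A : Type u} [CommRing S] [CommRing D] [CommRing A] {i : S →+* D} (f : Polynomial S)
    (δ : ℕ) (hf1 : f.natDegree ≤ δ) (hf2 : f.coeff δ = 1) {y : D} (H1 : SD.Step i f y) (j : D →+* A) (z : D)
    (hz : z * f.eval₂ i y = y * f.eval₂ i y ^ 2 + 1) (s : S) (F : Polynomial D) (e : ℕ) (he : F.natDegree ≤ e)
    (hF : SD.Special f i y s (F.coeff e)) :
    ∃ N0 : ℕ, ∀ N ≥ N0, ∀ (S' : Type u) [CommRing S'] (κ : S →+* S') (ι : S' →+* A) (_ : ι.comp κ = j.comp i)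
      (t : S') (x : A), x = ι t + j z ^ N → SD.Special (f.map κ) ι (j y) (κ s) (F.eval₂ j x) := by
  obtain ⟨k, E, i1, j1, g, p, q, u, hu, hg1, hg2, hpq, hev⟩ := hF
  obtain ⟨K, H, hH⟩ := H1.clr e F.coeff
  refine ⟨K + 1 + ((Finset.range e).sup fun j => (H j).natDegree) + k * δ, ?_⟩
  intro N hN S' _ κ ι hι t x hx
  have hd1 : (f.map κ).natDegree ≤ δ := Polynomial.natDegree_map_le.trans hf1
  have hd2 : (f.map κ).coeff δ = 1 := by rw [Polynomial.coeff_map, hf2, map_one]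
  have hev2 : ∀ r : Polynomial S, (r.map κ).eval₂ ι (j y) = j (r.eval₂ i y) := by
    intro r
    rw [Polynomial.eval₂_map, hι, Polynomial.hom_eval₂]
  set W := Polynomial.C t * (f.map κ) ^ N + (Polynomial.X * (f.map κ) ^ 2 + 1) ^ N with hW
  obtain ⟨h1, h2, r, h3⟩ := SD.poly_calc (f.map κ) δ hd1 hd2 (g.map κ) E (Polynomial.natDegree_map_le.trans hg1) t e k K N
    (fun j => (H j).map κ) (by omega) (by
      intro j hj
      have h4 : ((H j).map κ).natDegree ≤ (H j).natDegree := Polynomial.natDegree_map_le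
      have h5 : (H j).natDegree ≤ ((Finset.range e).sup fun j => (H j).natDegree) :=
        Finset.le_sup (f := fun j => (H j).natDegree) (Finset.mem_range.2 hj)
      omega) W hW
  refine ⟨k + N * e, _, i1, j1, _, p.map κ, q.map κ - p.map κ * r, κ u, hu.map κ, h1, ?_, ?_, ?_⟩
  · rw [h2, Polynomial.coeff_map, hg2, map_mul, map_pow]
  · have h6 := congrArg (Polynomial.map κ) hpq
    simp only [Polynomial.map_add, Polynomial.map_mul, Polynomial.map_C] at h6
    rw [map_pow κ] at h6
    rw [← h6]
    linear_combination p.map κ * h3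
  · set φ := j (f.eval₂ i y) with hφ
    have hWe : W.eval₂ ι (j y) = x * φ ^ N := by
      rw [hW, hx]
      simp only [Polynomial.eval₂_add, Polynomial.eval₂_mul, Polynomial.eval₂_pow, Polynomial.eval₂_C, Polynomial.eval₂_X, Polynomial.eval₂_one, hev2]
      have := congrArg j hz
      simp only [map_mul, map_add, map_pow, map_one] at this
      rw [← hφ] at this ⊢
      rw [← this]; ring
    rw [hev2, ← hφ]
    simp only [Polynomial.eval₂_add, Polynomial.eval₂_mul, Polynomial.eval₂_pow, Polynomial.eval₂_finsetSum, hWe, hev2]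
    rw [← hφ, Polynomial.eval₂_eq_sum_range' j (Nat.lt_succ_of_le he), Finset.sum_range_succ, add_mul, add_comm, Finset.sum_mul, ← hev, map_mul, map_pow, ← hφ]
    congr 1
    · ring
    · refine Finset.sum_congr rfl fun l hl => ?_
      have hl := Finset.mem_range.1 hl
      rw [← hH l hl, map_mul, map_pow, ← hφ]
      have h7 : k + N * e = K + (N * (e - l) + k - K) + N * l := by
        obtain ⟨c, rfl⟩ := Nat.exists_eq_add_of_lt hl
        have h3 : l + c + 1 - l = c + 1 := by omega
        rw [h3]
        have h5 : N ≤ N * (c + 1) := Nat.le_mul_of_pos_right _ (by omega)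
        have : K + (N * (c + 1) + k - K) = N * (c + 1) + k := by omega
        rw [this]; ring
      rw [h7]; ring

theorem SD.special_laur {S D A : Type u} [CommRing S] [CommRing D] [CommRing A] {i : S →+* D} (f : Polynomial S)
    (δ : ℕ) (hf1 : f.natDegree ≤ δ) (hf2 : f.coeff δ = 1) (hδ : 1 ≤ δ) {y : D} (H1 : SD.Step i f y) (j : D →+* A)
    (s : S) (F : Polynomial D) (e : ℕ) (he : F.natDegree ≤ e + 1)
    (hF : SD.Special f i y s (F.coeff (e + 1))) (hF0 : SD.Special f i y s (F.coeff 0)) (b : ℕ) :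
    ∃ N0 : ℕ, ∀ N ≥ N0, ∀ (S' : Type u) [CommRing S'] (κ : S →+* S') (ι : S' →+* A) (_ : ι.comp κ = j.comp i)
      (t t' : S') (_ : t * t' = 1) (x a : A), x = ι t * j (f.eval₂ i y) ^ N → a * x ^ b = F.eval₂ j x →
      SD.Special (f.map κ) ι (j y) (κ s) a := by
  obtain ⟨k, E, i1, _, g, _, _, u, hu, hg1, hg2, _, hev⟩ := hF
  obtain ⟨k0, _, _, j1, g0, p, q, _, _, _, _, hpq, hev0⟩ := hF0
  obtain ⟨K, H, hH⟩ := H1.clr e (fun j => F.coeff (j + 1))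
  refine ⟨K + 1 + ((Finset.range e).sup fun j => (H j).natDegree) + k * δ + k + g0.natDegree, ?_⟩
  intro N hN S' _ κ ι hι t t' htt x a hx hax
  have hd1 : (f.map κ).natDegree ≤ δ := Polynomial.natDegree_map_le.trans hf1
  have hd2 : (f.map κ).coeff δ = 1 := by rw [Polynomial.coeff_map, hf2, map_one]
  have hev2 : ∀ r : Polynomial S, (r.map κ).eval₂ ι (j y) = j (r.eval₂ i y) := by
    intro r
    rw [Polynomial.eval₂_map, hι, Polynomial.hom_eval₂]
  have hg0' : (g0.map κ).natDegree ≤ g0.natDegree := Polynomial.natDegree_map_le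
  obtain ⟨h1, h2, r, h3⟩ := SD.laur_calc (f.map κ) δ hd1 hd2 hδ (g.map κ) (g0.map κ) E (Polynomial.natDegree_map_le.trans hg1) t e k k0 K N
    (fun j => (H j).map κ) (by omega) (by omega) (by
      intro j hj
      have h4 : ((H j).map κ).natDegree ≤ (H j).natDegree := Polynomial.natDegree_map_le
      have h5 : (H j).natDegree ≤ ((Finset.range e).sup fun j => (H j).natDegree) :=
        Finset.le_sup (f := fun j => (H j).natDegree) (Finset.mem_range.2 hj)
      omega) (by omega)
  have htb : t ^ b * t' ^ b = 1 := by rw [← mul_pow, htt, one_pow]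
  set φ := j (f.eval₂ i y) with hφ
  set G := (g.map κ * (f.map κ) ^ (N * (e + 1) + k0 - k) * Polynomial.C t ^ (e + 1) +
      ∑ j ∈ Finset.range e, (H j).map κ * (f.map κ) ^ (k0 + N * (j + 1) - K) * Polynomial.C t ^ (j + 1) + g0.map κ) with hG
  have hGe : G.eval₂ ι (j y) = F.eval₂ j x * φ ^ k0 := by
    rw [hG]
    simp only [Polynomial.eval₂_add, Polynomial.eval₂_mul, Polynomial.eval₂_pow, Polynomial.eval₂_finsetSum, Polynomial.eval₂_C, hev2]
    rw [← hφ, Polynomial.eval₂_eq_sum_range' j (Nat.lt_succ_of_le he), Finset.sum_range_succ, Finset.sum_range_succ', add_mul, add_mul,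
      Finset.sum_mul, ← hev, ← hev0, map_mul, map_mul, map_pow, map_pow, ← hφ, add_assoc, add_comm]
    congr 1
    · congr 1
      · refine Finset.sum_congr rfl fun l hl => ?_
        have hl := Finset.mem_range.1 hl
        rw [← hH l hl, map_mul, map_pow, ← hφ, hx]
        have h7 : K + (k0 + N * (l + 1) - K) = k0 + N * (l + 1) := by
          have h5 : N ≤ N * (l + 1) := Nat.le_mul_of_pos_right _ (by omega)
          omega
        calc _ = j (F.coeff (l + 1)) * φ ^ (K + (k0 + N * (l + 1) - K)) * ι t ^ (l + 1) := by ring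
          _ = _ := by rw [h7]; ring
      · ring
    · rw [hx]
      have h7 : k + (N * (e + 1) + k0 - k) = N * (e + 1) + k0 := by
        have h5 : N ≤ N * (e + 1) := Nat.le_mul_of_pos_right _ (by omega)
        omega
      calc _ = j (F.coeff (e + 1)) * φ ^ (k + (N * (e + 1) + k0 - k)) * ι t ^ (e + 1) := by ring
        _ = _ := by rw [h7]; ring
  refine ⟨k0 + N * b, _, i1, j1, Polynomial.C (t' ^ b) * G, p.map κ * Polynomial.C (t ^ b), q.map κ - p.map κ * r, t' ^ b * t ^ (e + 1) * κ u,
    ?_, (Polynomial.natDegree_C_mul_le _ _).trans h1, ?_, ?_, ?_⟩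
  · refine (IsUnit.mul (IsUnit.pow _ ?_) (IsUnit.pow _ ?_)).mul (hu.map κ)
    · exact IsUnit.of_mul_eq_one _ ((mul_comm _ _).trans htt)
    · exact IsUnit.of_mul_eq_one _ htt
  · rw [Polynomial.coeff_C_mul, h2, Polynomial.coeff_map, hg2, map_mul, map_pow]; ring
  · have h6 := congrArg (Polynomial.map κ) hpq
    simp only [Polynomial.map_add, Polynomial.map_mul, Polynomial.map_C] at h6
    rw [map_pow κ] at h6
    rw [← h6]
    have h8 : (Polynomial.C (t ^ b) * Polynomial.C (t' ^ b) : Polynomial S') = 1 := by rw [← Polynomial.C_mul, htb, Polynomial.C_1]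
    linear_combination p.map κ * h3 + p.map κ * G * h8
  · rw [Polynomial.eval₂_mul, hGe, ← hax, hev2, ← hφ, Polynomial.eval₂_C, hx]
    have h9 := congrArg ι htb
    simp only [map_mul, map_pow, map_one] at h9 ⊢
    linear_combination (-a * φ ^ (k0 + N * b)) * h9

theorem SD.special_base {S A : Type u} [CommRing S] [CommRing A] {i : S →+* A} (f : Polynomial S)
    (δ : ℕ) (hf1 : f.natDegree ≤ δ) (hf2 : f.coeff δ = 1) {y : A} (H1 : SD.Step i f y) (a : A) (s : S) :
    ∃ b, SD.Special f i y s (a + i s * b) := by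
  obtain ⟨K, H, hH⟩ := H1.clr 1 (fun _ => a)
  have hH := hH 0 zero_lt_one
  set h := H 0
  obtain ⟨v, hv⟩ := H1.unit.exists_right_inv
  set φ := f.eval₂ i y with hφ
  set M := K + h.natDegree + 1 with hM
  have hz : ((y * φ ^ 2 + 1) * v) * φ = y * φ ^ 2 + 1 := by linear_combination (y * φ ^ 2 + 1) * hv
  obtain ⟨w1, w2⟩ := SD.W_deg f δ hf1 hf2 M (by omega) 0
  have w3 := SD.W_mod f M (by omega) 0
  rw [map_zero, zero_mul, zero_add] at w1 w2 w3
  obtain ⟨r, hr⟩ := w3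
  have hlow : (h * f ^ (M - K)).natDegree < M * (2 * δ + 1) := by
    refine lt_of_le_of_lt (SD.mul_deg le_rfl (SD.pow_deg hf1 _).1).1 ?_
    have : (M - K) * δ ≤ M * δ := Nat.mul_le_mul_right _ (by omega)
    nlinarith
  have hMK : M - K = h.natDegree + 1 := by omega
  refine ⟨((y * φ ^ 2 + 1) * v) ^ M, M, M * (2 * δ + 1), 1, 1,
    Polynomial.C s * (Polynomial.X * f ^ 2 + 1) ^ M + h * f ^ (M - K), 1, -(Polynomial.C s * r + h * f ^ h.natDegree), 1, isUnit_one, ?_, ?_, ?_, ?_⟩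
  · exact Polynomial.natDegree_add_le_of_degree_le ((Polynomial.natDegree_C_mul_le _ _).trans w1) hlow.le
  · rw [Polynomial.coeff_add, Polynomial.coeff_eq_zero_of_natDegree_lt hlow, Polynomial.coeff_C_mul, w2]; ring
  · rw [hMK, pow_one]
    linear_combination Polynomial.C s * hr
  · simp only [Polynomial.eval₂_add, Polynomial.eval₂_mul, Polynomial.eval₂_pow, Polynomial.eval₂_C, Polynomial.eval₂_X, Polynomial.eval₂_one]
    rw [← hH, ← hφ, add_mul, mul_assoc (i s), ← mul_pow, hz]
    have : M = K + (M - K) := by omega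
    conv_lhs => rw [add_comm]; arg 2; rw [this]
    ring



theorem SD.Step.exist {S : Type u} [CommRing S] (h : Polynomial S) :
    ∃ (S' : Type u) (_ : CommRing S') (κ : S →+* S') (t : S'), SD.Step κ h t :=
  ⟨Localization.Away h, inferInstance, _, _, SD.Step.of_loc (A := Localization.Away h) h⟩

theorem SD.pres_poly {R S D A : Type u} [CommRing R] [CommRing S] [CommRing D] [CommRing A] [Algebra R S] [Algebra R D] [Algebra R A]
    {f : Polynomial R} (i : S →ₐ[R] D) {y : D} (H1 : SD.Step i.toRingHom (f.map (algebraMap R S)) y)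
    (j : D →ₐ[R] A) {x : A} (H2 : SD.Step j.toRingHom 1 x) (w : D) :
    ∃ (S' : Type u) (_ : CommRing S') (_ : Algebra R S') (κ : S →ₐ[R] S') (ι : S' →ₐ[R] A) (t : S'),
      ι.toRingHom.comp κ.toRingHom = j.toRingHom.comp i.toRingHom ∧ SD.Step ι.toRingHom (f.map (algebraMap R S')) (j y) ∧ x = ι t + j w := by
  obtain ⟨S', _, κ, t, H3⟩ := SD.Step.exist (1 : Polynomial S)
  obtain ⟨ι, hι, ht⟩ := H3.ex A (j.toRingHom.comp i.toRingHom) (x - j w) (by simp)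
  let _ : Algebra R S' := (κ.comp (algebraMap R S)).toAlgebra
  let κ' : S →ₐ[R] S' := ⟨κ, fun r => rfl⟩
  let ι' : S' →ₐ[R] A := ⟨ι, fun r => by
    have := RingHom.congr_fun hι (algebraMap R S r)
    exact this.trans (by simp)⟩
  refine ⟨S', inferInstance, inferInstance, κ', ι', t, hι, ?_, ?_⟩
  · have := SD.Step.comm H1 H2 H3 ι hι (Or.inl ⟨rfl, w, ?_⟩)
    · rw [Polynomial.map_map] at this
      exact this
    · rw [ht]; exact (sub_add_cancel _ _).symm
  · exact (sub_eq_iff_eq_add).1 ht.symm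

theorem SD.pres_laur {R S D A : Type u} [CommRing R] [CommRing S] [CommRing D] [CommRing A] [Algebra R S] [Algebra R D] [Algebra R A]
    {f : Polynomial R} (i : S →ₐ[R] D) {y : D} (H1 : SD.Step i.toRingHom (f.map (algebraMap R S)) y)
    (j : D →ₐ[R] A) {x : A} (H2 : SD.Step j.toRingHom Polynomial.X x) (w : D) (hw : IsUnit w) :
    ∃ (S' : Type u) (_ : CommRing S') (_ : Algebra R S') (κ : S →ₐ[R] S') (ι : S' →ₐ[R] A) (t t' : S'), t * t' = 1 ∧
      ι.toRingHom.comp κ.toRingHom = j.toRingHom.comp i.toRingHom ∧ SD.Step ι.toRingHom (f.map (algebraMap R S')) (j y) ∧ x = ι t * j w := by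
  obtain ⟨S', _, κ, t, H3⟩ := SD.Step.exist (Polynomial.X : Polynomial S)
  obtain ⟨w', hw'⟩ := hw.exists_right_inv
  have hx := H2.unit
  rw [Polynomial.eval₂_X] at hx
  have hjw : j w * j w' = 1 := by rw [← map_mul, hw', map_one]
  obtain ⟨ι, hι, ht⟩ := H3.ex A (j.toRingHom.comp i.toRingHom) (x * j w') (by
    rw [Polynomial.eval₂_X]
    exact hx.mul (IsUnit.of_mul_eq_one _ ((mul_comm _ _).trans hjw)))
  let _ : Algebra R S' := (κ.comp (algebraMap R S)).toAlgebra
  let κ' : S →ₐ[R] S' := ⟨κ, fun r => rfl⟩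
  let ι' : S' →ₐ[R] A := ⟨ι, fun r => by
    have := RingHom.congr_fun hι (algebraMap R S r)
    exact this.trans (by simp)⟩
  obtain ⟨t', ht'⟩ := H3.unit.exists_right_inv
  rw [Polynomial.eval₂_X] at ht'
  have hxx : x = ι t * j w := by rw [ht]; linear_combination (-x) * hjw
  refine ⟨S', inferInstance, inferInstance, κ', ι', t, t', ht', hι, ?_, hxx⟩
  have := SD.Step.comm H1 H2 H3 ι hι (Or.inr ⟨rfl, rfl, w, hw, hxx⟩)
  rw [Polynomial.map_map] at this
  exact this

def SD.NLc (R : Type u) [CommRing R] (f : Polynomial R) (d : ℕ) (A : Type u) [CommRing A] [Algebra R A] : Prop :=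
  ∀ (a : A) (s : R), ∃ b, ∀ I : Ideal A, (d + 1 : ℕ) ≤ I.height →
    ∃ (S : Type u) (_ : CommRing S) (_ : Algebra R S) (ι : S →ₐ[R] A) (y : A),
      SD.Step ι.toRingHom (f.map (algebraMap R S)) y ∧
      (∃ F ∈ I, SD.Special (f.map (algebraMap R S)) ι.toRingHom y 1 F) ∧
      SD.Special (f.map (algebraMap R S)) ι.toRingHom y (algebraMap R S s) (a + algebraMap R A s * b)

theorem SD.NL_base (R : Type u) [CommRing R] [IsNoetherianRing R] (d : ℕ) (hd : ringKrullDim R ≤ d) (f : Polynomial R) (hf : f.Monic)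
    (A : Type u) [CommRing A] [Algebra R A] (y : A) (H : SD.Step (algebraMap R A) f y) : SD.NLc R f d A := by
  intro a s
  obtain ⟨b, hb⟩ := SD.special_base f f.natDegree le_rfl hf H a s
  refine ⟨b, fun I hI => ?_⟩
  refine ⟨R, inferInstance, inferInstance, Algebra.ofId R A, y, ?_, ?_, ?_⟩
  · rw [Algebra.algebraMap_self, Polynomial.map_id]; exact H
  · let _ := (Polynomial.eval₂RingHom (algebraMap R A) y).toAlgebra
    have := H.isLoc
    obtain ⟨g, hg, hgm, p, q, hpq⟩ := SD.base_height f hf d hd I hI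
    refine ⟨_, hg, 0, g.natDegree, 0, 0, g, p, q, 1, isUnit_one, le_rfl, by rw [pow_zero, mul_one]; exact hgm, ?_, ?_⟩
    · rw [Algebra.algebraMap_self, Polynomial.map_id, hpq]; simp
    · rw [pow_zero, mul_one]; rfl
  · rw [Algebra.algebraMap_self, Polynomial.map_id]; exact hb

theorem SD.Step.height {D A : Type u} [CommRing D] [CommRing A] [IsNoetherianRing D] {j : D →+* A} {h : Polynomial D} {x : A}
    (H : SD.Step j h x) (I : Ideal A) (n : ℕ∞) (hn : n ≤ I.height) :
    n ≤ (I.comap (Polynomial.eval₂RingHom j x)).leadingCoeff.height := by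
  let _ := (Polynomial.eval₂RingHom j x).toAlgebra
  have := H.isLoc
  refine le_trans (hn.trans (le_of_eq ?_)) (SD.height_lead _)
  exact (IsLocalization.height_under (Submonoid.powers h) I).symm

theorem SD.deg_δ {R S : Type*} [CommRing R] [CommRing S] [Algebra R S] {f : Polynomial R} (hf : f.Monic) :
    (f.map (algebraMap R S)).natDegree ≤ f.natDegree ∧ (f.map (algebraMap R S)).coeff f.natDegree = 1 :=
  ⟨Polynomial.natDegree_map_le, by rw [Polynomial.coeff_map, hf.coeff_natDegree, map_one]⟩

theorem SD.NL_poly {R D A : Type u} [CommRing R] [CommRing D] [CommRing A] [Algebra R D] [Algebra R A] [IsNoetherianRing D]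
    (d : ℕ) (f : Polynomial R) (hf : f.Monic) (ih : SD.NLc R f d D)
    (j : D →ₐ[R] A) (x : A) (H2 : SD.Step j.toRingHom 1 x) : SD.NLc R f d A := by
  intro a s
  obtain ⟨Fa, hFa⟩ : ∃ Fa : Polynomial D, Fa.eval₂ j.toRingHom x = a := by
    obtain ⟨K, h, hh⟩ := H2.clr 1 (fun _ => a)
    exact ⟨h 0, by rw [← hh 0 zero_lt_one]; simp⟩
  set M := Fa.natDegree + 1
  refine ⟨x ^ M, fun I hI => ?_⟩
  obtain ⟨b, hb⟩ := ih 0 0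
  obtain ⟨S, _, _, i, y, H1, ⟨F0, hF0, hsp⟩, -⟩ := hb _ (H2.height I _ hI)
  rw [Ideal.mem_leadingCoeff] at hF0
  obtain ⟨F, hF, hFl⟩ := hF0
  obtain ⟨v, hv⟩ := H1.unit.exists_right_inv
  set φ := (f.map (algebraMap R S)).eval₂ i.toRingHom y with hφ
  have hz : ((y * φ ^ 2 + 1) * v) * φ = y * φ ^ 2 + 1 := by linear_combination (y * φ ^ 2 + 1) * hv
  obtain ⟨d1, d2⟩ := SD.deg_δ (S := S) hf
  obtain ⟨N1, hN1⟩ := SD.special_poly (f.map (algebraMap R S)) f.natDegree d1 d2 H1 j.toRingHom _ hz 1 F F.natDegree le_rfl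
    (by rw [Polynomial.leadingCoeff] at hFl; rw [hFl]; exact hsp)
  have hlow : Fa.coeff M = 0 := Polynomial.coeff_eq_zero_of_natDegree_lt (Nat.lt_succ_self _)
  obtain ⟨N2, hN2⟩ := SD.special_poly (f.map (algebraMap R S)) f.natDegree d1 d2 H1 j.toRingHom _ hz (algebraMap R S s)
    (Fa + Polynomial.C (algebraMap R D s) * Polynomial.X ^ M) M
    (Polynomial.natDegree_add_le_of_degree_le (Nat.le_succ _) (Polynomial.natDegree_C_mul_X_pow_le _ _))
    (by
      rw [Polynomial.coeff_add, hlow, Polynomial.coeff_C_mul_X_pow, if_pos rfl, zero_add]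
      have := SD.Special.const (f.map (algebraMap R S)) i.toRingHom y (algebraMap R S s)
      simpa using this)
  obtain ⟨S', _, _, κ, ι, t, hι, Hn, hx⟩ := SD.pres_poly i H1 j H2 (((y * φ ^ 2 + 1) * v) ^ (N1 + N2))
  rw [map_pow] at hx
  have e1 : (f.map (algebraMap R S)).map κ.toRingHom = f.map (algebraMap R S') := by
    rw [Polynomial.map_map]; congr 1; ext r; simp
  have r1 := hN1 (N1 + N2) (by omega) S' κ.toRingHom ι.toRingHom hι t x hx
  have r2 := hN2 (N1 + N2) (by omega) S' κ.toRingHom ι.toRingHom hι t x hx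
  rw [e1] at r1 r2
  refine ⟨S', inferInstance, inferInstance, ι, j y, Hn, ⟨_, hF, ?_⟩, ?_⟩
  · rw [map_one] at r1; exact r1
  · rw [Polynomial.eval₂_add, hFa] at r2
    simpa using r2

theorem SD.height_inf {D : Type*} [CommRing D] (I J : Ideal D) (n : ℕ∞) (h1 : n ≤ I.height) (h2 : n ≤ J.height) :
    n ≤ (I ⊓ J).height := by
  rw [(I ⊓ J).height_eq_inf_minimalPrimes]
  refine le_iInf₂ fun p hp => ?_
  have := hp.1.1
  rcases (Ideal.IsPrime.inf_le this).1 hp.1.2 with h | h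
  · exact h1.trans (Ideal.height_mono h)
  · exact h2.trans (Ideal.height_mono h)

theorem SD.NL_laur {R D A : Type u} [CommRing R] [CommRing D] [CommRing A] [Algebra R D] [Algebra R A] [IsNoetherianRing D]
    (d : ℕ) (f : Polynomial R) (hf : f.Monic) (hδ : 1 ≤ f.natDegree) (ih : SD.NLc R f d D)
    (j : D →ₐ[R] A) (x : A) (H2 : SD.Step j.toRingHom Polynomial.X x) : SD.NLc R f d A := by
  intro a s
  have hxu := H2.unit
  rw [Polynomial.eval₂_X] at hxu
  obtain ⟨x', hx'⟩ := hxu.exists_right_inv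
  obtain ⟨n, Fa, hFa⟩ : ∃ (n : ℕ) (Fa : Polynomial D), Fa.eval₂ j.toRingHom x = a * x ^ n := by
    obtain ⟨K, h, hh⟩ := H2.clr 1 (fun _ => a)
    exact ⟨K, h 0, by rw [← hh 0 zero_lt_one]; simp⟩
  set M := Fa.natDegree + n + 1 with hM
  refine ⟨x ^ M + x' ^ M, fun I hI => ?_⟩
  obtain ⟨b, hb⟩ := ih 0 0
  obtain ⟨S, _, _, i, y, H1, ⟨F0, hF0, hsp⟩, -⟩ := hb _ (SD.height_inf _ _ _ (H2.height I _ hI) ((H2.inv hx').height I _ hI))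
  obtain ⟨hF1, hF2⟩ := Ideal.mem_inf.1 hF0
  rw [Ideal.mem_leadingCoeff] at hF1 hF2
  obtain ⟨F1, hF1, hFl1⟩ := hF1
  obtain ⟨F2, hF2, hFl2⟩ := hF2
  obtain ⟨d1, d2⟩ := SD.deg_δ (S := S) hf
  set c := F2.natDegree + 1 with hc
  have hrev : F2.reverse.natDegree < c := lt_of_le_of_lt (Polynomial.reverse_natDegree_le _) (Nat.lt_succ_self _)
  obtain ⟨N1, hN1⟩ := SD.special_laur (f.map (algebraMap R S)) f.natDegree d1 d2 hδ H1 j.toRingHom 1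
    (F1 * Polynomial.X ^ c + F2.reverse) (F1.natDegree + F2.natDegree)
    (by
      refine Polynomial.natDegree_add_le_of_degree_le ?_ (by omega)
      exact (Polynomial.natDegree_mul_le_of_le le_rfl (Polynomial.natDegree_X_pow_le c)).trans (by omega))
    (by
      have : F1.natDegree + F2.natDegree + 1 = F1.natDegree + c := by omega
      rw [this, Polynomial.coeff_add, Polynomial.coeff_mul_X_pow, Polynomial.coeff_eq_zero_of_natDegree_lt (p := F2.reverse) (by omega), add_zero]
      rw [Polynomial.leadingCoeff] at hFl1; rw [hFl1]; exact hsp)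
    (by
      rw [Polynomial.coeff_add, Polynomial.coeff_mul_X_pow', if_neg (by omega), zero_add, Polynomial.coeff_zero_reverse, hFl2]
      exact hsp) 0
  have hconst := SD.Special.const (f.map (algebraMap R S)) i.toRingHom y (algebraMap R S s)
  have hconst : SD.Special (f.map (algebraMap R S)) i.toRingHom y (algebraMap R S s) (algebraMap R D s) := by simpa using hconst
  have hlow : (Fa * Polynomial.X ^ (M - n)).natDegree ≤ Fa.natDegree + (M - n) :=
    (Polynomial.natDegree_mul_le_of_le le_rfl (Polynomial.natDegree_X_pow_le _))
  have h2M : 2 * M - 1 + 1 = 2 * M := by omega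
  obtain ⟨N2, hN2⟩ := SD.special_laur (f.map (algebraMap R S)) f.natDegree d1 d2 hδ H1 j.toRingHom (algebraMap R S s)
    (Fa * Polynomial.X ^ (M - n) + Polynomial.C (algebraMap R D s) * Polynomial.X ^ (2 * M) + Polynomial.C (algebraMap R D s)) (2 * M - 1)
    (by
      rw [h2M]
      refine Polynomial.natDegree_add_le_of_degree_le (Polynomial.natDegree_add_le_of_degree_le (by omega) (Polynomial.natDegree_C_mul_X_pow_le _ _)) ?_
      rw [Polynomial.natDegree_C]; omega)
    (by
      rw [h2M, Polynomial.coeff_add, Polynomial.coeff_add, Polynomial.coeff_eq_zero_of_natDegree_lt (p := Fa * _) (by omega), Polynomial.coeff_C_mul_X_pow, if_pos rfl, zero_add,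
        Polynomial.coeff_C, if_neg (by omega), add_zero]
      exact hconst)
    (by
      rw [Polynomial.coeff_add, Polynomial.coeff_add, Polynomial.coeff_mul_X_pow', if_neg (by omega), Polynomial.coeff_C_mul_X_pow, if_neg (by omega),
        Polynomial.coeff_C, if_pos rfl, add_zero, zero_add]
      exact hconst) M
  obtain ⟨S', _, _, κ, ι, t, t', htt, hι, Hn, hx⟩ := SD.pres_laur i H1 j H2 (((f.map (algebraMap R S)).eval₂ i.toRingHom y) ^ (N1 + N2)) (H1.unit.pow _)
  rw [map_pow] at hx
  have e1 : (f.map (algebraMap R S)).map κ.toRingHom = f.map (algebraMap R S') := by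
    rw [Polynomial.map_map]; congr 1; ext r; simp
  have r1 := hN1 (N1 + N2) (by omega) S' κ.toRingHom ι.toRingHom hι t t' htt x _ hx (by rw [pow_zero, mul_one])
  have r2 := hN2 (N1 + N2) (by omega) S' κ.toRingHom ι.toRingHom hι t t' htt x (a + algebraMap R A s * (x ^ M + x' ^ M)) hx (by
    have e2 : x' ^ M * x ^ M = 1 := by rw [← mul_pow, mul_comm, hx', one_pow]
    have e3 : x ^ n * x ^ (M - n) = x ^ M := by rw [← pow_add]; congr 1; omega
    have e4 : j.toRingHom (algebraMap R D s) = algebraMap R A s := by simp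
    simp only [Polynomial.eval₂_add, Polynomial.eval₂_mul, Polynomial.eval₂_C, Polynomial.eval₂_X_pow]
    rw [hFa, e4, mul_assoc a, e3]
    linear_combination algebraMap R A s * e2)
  rw [e1] at r1 r2
  refine ⟨S', inferInstance, inferInstance, ι, j y, Hn, ⟨_, ?_, by rw [map_one] at r1; exact r1⟩, by simpa using r2⟩
  rw [Polynomial.eval₂_add, Polynomial.eval₂_mul]
  refine I.add_mem (I.mul_mem_right _ hF1) ?_
  let _ : Invertible x' := ⟨x, hx', (mul_comm _ _).trans hx'⟩
  have h8 := Polynomial.eval₂_reverse_mul_pow j.toRingHom x' F2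
  have h9 : F2.eval₂ j.toRingHom x' ∈ I := hF2
  change _ * x' ^ F2.natDegree = F2.eval₂ j.toRingHom x' at h8
  rw [← h8] at h9
  have := I.mul_mem_right (x ^ F2.natDegree) h9
  rwa [mul_assoc, ← mul_pow, mul_comm x' x, hx', one_pow, mul_one] at this

theorem SD.NL (R : Type u) [CommRing R] [IsNoetherianRing R] (d : ℕ) (hd : ringKrullDim R ≤ d) (f : Polynomial R) (hf : f.Monic)
    (l : List Bool) (hl : true ∈ l → 1 ≤ f.natDegree) (A : Type u) [CommRing A] [Algebra R A] (H : SD.Tow R f l A) : SD.NLc R f d A := by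
  induction l generalizing A with
  | nil =>
    obtain ⟨y, hy⟩ := H
    exact SD.NL_base R d hd f hf A y hy
  | cons b l ih =>
    obtain ⟨D, _, _, j, x, HD, hst⟩ := H
    have := HD.noeth
    have ih := ih (fun h => hl (List.mem_cons_of_mem _ h)) D HD
    cases b with
    | false => exact SD.NL_poly d f hf ih j x hst
    | true => exact SD.NL_laur d f hf (hl List.mem_cons_self) ih j x hst



theorem SD.avoid {A : Type*} [CommRing A] [IsNoetherianRing A] (σ : A) (I : Ideal A) (n : ℕ)
    (hI : ∀ Q : Ideal A, Q.IsPrime → I ≤ Q → σ ∉ Q → (n : ℕ∞) ≤ Q.height) (a : A) :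
    ∃ b, ∀ Q : Ideal A, Q.IsPrime → I ≤ Q → a + σ ^ 2 * b ∈ Q → σ ∉ Q → ((n + 1 : ℕ) : ℕ∞) ≤ Q.height := by
  classical
  set T0 := (Ideal.finite_minimalPrimes_of_isNoetherianRing A I).toFinset.filter (fun Q => σ ∉ Q) with hT0
  have hT0m : ∀ Q, Q ∈ T0 ↔ Q ∈ I.minimalPrimes ∧ σ ∉ Q := by intro Q; simp [hT0]
  obtain ⟨b, hb1, hb2⟩ : ∃ b : A, (∀ Q ∈ T0, a ∉ Q → b ∈ Q) ∧ (∀ Q ∈ T0, a ∈ Q → b ∉ Q) := by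
    have hne : ¬ ((((∏ Q ∈ T0.filter (fun Q => a ∉ Q), Q : Ideal A)) : Set A) ⊆ ⋃ Q ∈ ((T0.filter (fun Q => a ∈ Q) : Finset (Ideal A)) : Set (Ideal A)), ((Q : Ideal A) : Set A)) := by
      intro h
      rw [Ideal.subset_union_prime ⊥ ⊥] at h
      · obtain ⟨Q, hQ, hle⟩ := h
        obtain ⟨hQ1, hQ2⟩ := Finset.mem_filter.1 hQ
        have hQp := ((hT0m Q).1 hQ1).1.1.1
        obtain ⟨Q', hQ', hle'⟩ := (Ideal.IsPrime.prod_le hQp).1 hle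
        obtain ⟨hQ1', hQ2'⟩ := Finset.mem_filter.1 hQ'
        have := ((hT0m Q).1 hQ1).1.2 ((hT0m Q').1 hQ1').1.1 hle'
        exact hQ2' (this hQ2)
      · intro Q hQ _ _
        exact ((hT0m Q).1 (Finset.mem_filter.1 hQ).1).1.1.1
    rw [Set.not_subset] at hne
    obtain ⟨b, hb, hb'⟩ := hne
    refine ⟨b, fun Q hQ ha => ?_, fun Q hQ ha hbQ => hb' ?_⟩
    · exact (Ideal.prod_le_inf.trans (Finset.inf_le (f := fun Q => Q) (Finset.mem_filter.2 ⟨hQ, ha⟩))) hb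
    · exact Set.mem_biUnion (Finset.mem_coe.2 (Finset.mem_filter.2 ⟨hQ, ha⟩)) hbQ
  refine ⟨b, fun Q hQ hIQ haQ hσ => ?_⟩
  obtain ⟨Q', hQ', hle⟩ := Ideal.exists_minimalPrimes_le hIQ
  have hσ' : σ ∉ Q' := fun h => hσ (hle h)
  have hmem : Q' ∈ T0 := (hT0m Q').2 ⟨hQ', hσ'⟩
  have hp := hQ'.1.1
  have hn : a + σ ^ 2 * b ∉ Q' := by
    intro h
    by_cases ha : a ∈ Q'
    · have h1 : σ ^ 2 * b ∈ Q' := (Ideal.add_mem_iff_right _ ha).1 h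
      rcases hp.mem_or_mem h1 with h2 | h2
      · exact hσ' (hp.mem_of_pow_mem _ h2)
      · exact hb2 Q' hmem ha h2
    · exact ha ((Ideal.add_mem_iff_left _ (Q'.mul_mem_left _ (hb1 Q' hmem ha))).1 h)
  have hlt : Q' < Q := lt_of_le_of_ne hle (fun h => hn (h ▸ haQ))
  refine le_trans ?_ (Ideal.height_add_one_le_of_lt_of_isPrime hlt)
  push_cast
  gcongr
  exact hI Q' hp hQ'.1.2 hσ'

theorem SD.avoid_all {A : Type*} [CommRing A] [IsNoetherianRing A] (σ : A) (I : Ideal A) (n : ℕ)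
    (hI : ∀ Q : Ideal A, Q.IsPrime → I ≤ Q → σ ∉ Q → (n : ℕ∞) ≤ Q.height) (a : ℕ → A) (m : ℕ) :
    ∃ b : ℕ → A, ∀ Q : Ideal A, Q.IsPrime → I ≤ Q → (∀ i < m, a i + σ ^ 2 * b i ∈ Q) → σ ∉ Q → ((n + m : ℕ) : ℕ∞) ≤ Q.height := by
  induction m with
  | zero => exact ⟨0, fun Q h1 h2 _ h3 => hI Q h1 h2 h3⟩
  | succ m ih =>
    obtain ⟨b, hb⟩ := ih
    obtain ⟨c, hc⟩ := SD.avoid σ (I ⊔ Ideal.span ((fun i => a i + σ ^ 2 * b i) '' {i | i < m})) (n + m) (by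
      intro Q h1 h2 h3
      refine hb Q h1 (le_sup_left.trans h2) (fun i hi => ?_) h3
      exact h2 (Ideal.mem_sup_right (Ideal.subset_span ⟨i, hi, rfl⟩))) (a m)
    refine ⟨fun i => if i < m then b i else c, fun Q h1 h2 h3 h4 => ?_⟩
    have := hc Q h1 (sup_le h2 (Ideal.span_le.2 ?_)) (by simpa using h3 m (Nat.lt_succ_self m)) h4
    · exact this
    · rintro _ ⟨i, hi, rfl⟩
      have := h3 i (Nat.lt_succ_of_lt hi)
      have hi' : i < m := hi
      simpa [hi'] using this

theorem SD.special_min {S A : Type u} [CommRing S] [CommRing A] {ι : S →+* A} {f : Polynomial S} {y : A} (H : SD.Step ι f y)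
    (s : S) (a : A) (ha : SD.Special f ι y s a) (Q : Ideal A) [hQ : Q.IsPrime] (h0 : Q.height = 0) (hs : ι s ∉ Q) : a ∉ Q := by
  intro haQ
  obtain ⟨k, E, i, j, g, p, q, u, hu, hg1, hg2, hpq, hev⟩ := ha
  let _ := (Polynomial.eval₂RingHom ι y).toAlgebra
  have := H.isLoc
  have hh : (Q.under (Polynomial S)).height = 0 := (IsLocalization.height_under (Submonoid.powers f) Q).trans h0
  set Q' := Q.under (Polynomial S) with hQ'
  have hgQ : g ∈ Q' := by
    change g.eval₂ ι y ∈ Q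
    rw [← hev]; exact Q.mul_mem_right _ haQ
  rw [Ideal.height_eq_zero_iff] at hh
  have hle : (Q'.comap Polynomial.C).map Polynomial.C ≤ Q' := Ideal.map_comap_le
  have hp' : (Q'.comap (Polynomial.C : S →+* Polynomial S)).IsPrime := Ideal.IsPrime.comap _
  have hp : ((Q'.comap Polynomial.C).map Polynomial.C : Ideal (Polynomial S)).IsPrime := Ideal.isPrime_map_C_of_isPrime
  have := hh.2 ⟨hp, bot_le⟩ hle hgQ
  have h1 := Ideal.mem_map_C_iff.1 this E
  rw [hg2] at h1
  have h2 : Polynomial.C (u * s ^ i) ∈ Q' := h1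
  have h3 : (Polynomial.C (u * s ^ i)).eval₂ ι y ∈ Q := h2
  rw [Polynomial.eval₂_C, map_mul, map_pow] at h3
  rcases hQ.mem_or_mem h3 with h4 | h4
  · exact hQ.ne_top (Ideal.eq_top_of_isUnit_mem _ h4 (hu.map ι))
  · exact hs (hQ.mem_of_pow_mem _ h4)

theorem SD.special_int {S A : Type u} [CommRing S] [CommRing A] {ι : S →+* A} {f : Polynomial S} {y : A} (H : SD.Step ι f y)
    (I : Ideal A) (F : A) (hF : F ∈ I) (hsp : SD.Special f ι y 1 F) (s : S) (hs : ∃ c, 1 - ι s * c ∈ I) :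
    ∃ t c, t = 1 + s * c ∧ ι t ∈ I := by
  obtain ⟨k, E, i, j, g, p, q, u, hu, hg1, hg2, hpq, hev⟩ := hsp
  rw [one_pow, mul_one] at hg2
  rw [one_pow] at hpq
  obtain ⟨w, hw⟩ := hs
  let π := Ideal.Quotient.mk I
  have hgI : π (g.eval₂ ι y) = 0 := Ideal.Quotient.eq_zero_iff_mem.2 (by rw [← hev]; exact I.mul_mem_right _ hF)
  let _ : Algebra S (A ⧸ I) := (π.comp ι).toAlgebra
  obtain ⟨u', hu'⟩ := hu.exists_right_inv
  have hyint : IsIntegral S (π y) := by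
    refine ⟨Polynomial.C u' * g, ?_, ?_⟩
    · exact Polynomial.monic_of_natDegree_le_of_coeff_eq_one E ((Polynomial.natDegree_C_mul_le _ _).trans hg1)
        (by rw [Polynomial.coeff_C_mul, hg2, mul_comm, hu'])
    · have : (algebraMap S (A ⧸ I)) = π.comp ι := rfl
      rw [this, Polynomial.eval₂_mul, ← Polynomial.hom_eval₂ g, hgI, mul_zero]
  have hqf : π (q.eval₂ ι y) * π (f.eval₂ ι y) = 1 := by
    have := congrArg (fun r => π (Polynomial.eval₂ ι y r)) hpq
    simp only [Polynomial.eval₂_add, Polynomial.eval₂_mul, map_add, map_mul, hgI, mul_zero, zero_add, Polynomial.eval₂_one, map_one] at this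
    exact this
  have hpol : ∀ h : Polynomial S, IsIntegral S (π (h.eval₂ ι y)) := by
    intro h
    have e : π (h.eval₂ ι y) = Polynomial.aeval (π y) h := by
      rw [Polynomial.hom_eval₂]; rfl
    rw [e]
    have hle : Algebra.adjoin S {π y} ≤ integralClosure S (A ⧸ I) := Algebra.adjoin_le (Set.singleton_subset_iff.2 hyint)
    exact hle (Polynomial.aeval_mem_adjoin_singleton S (π y))
  have hwint : IsIntegral S (π w) := by
    obtain ⟨K, h, hh⟩ := H.clr 1 (fun _ => w)
    have := congrArg π (hh 0 zero_lt_one)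
    rw [map_mul, map_pow] at this
    have e : π w = π ((h 0).eval₂ ι y) * π (q.eval₂ ι y) ^ K := by
      rw [← this, mul_assoc, ← mul_pow, mul_comm (π (f.eval₂ ι y)), hqf, one_pow, mul_one]
    rw [e]
    exact (hpol _).mul ((hpol _).pow _)
  obtain ⟨m, hm, hm0⟩ := hwint
  have hsw : π (ι s) * π w = 1 := by
    rw [← map_mul, eq_comm, ← sub_eq_zero, ← map_one π, ← map_sub]
    exact Ideal.Quotient.eq_zero_iff_mem.2 hw
  let _ : Invertible (π w) := ⟨π (ι s), hsw, (mul_comm _ _).trans hsw⟩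
  have h8 := Polynomial.eval₂_reverse_mul_pow (algebraMap S (A ⧸ I)) (π w) m
  rw [hm0] at h8
  have h9 : m.reverse.eval₂ (π.comp ι) (π (ι s)) = 0 := by
    have h10 : m.reverse.eval₂ (π.comp ι) (π (ι s)) * π w ^ m.natDegree = 0 := h8
    have h11 := congrArg (fun r => r * π (ι s) ^ m.natDegree) h10
    simp only [mul_assoc, zero_mul] at h11
    rwa [← mul_pow, mul_comm (π w), hsw, one_pow, mul_one] at h11
  have h12 : m.reverse.eval₂ (π.comp ι) (π (ι s)) = π (ι (m.reverse.eval s)) := by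
    have := Polynomial.hom_eval₂ m.reverse (RingHom.id S) (π.comp ι) s
    rw [RingHom.comp_id] at this
    exact this.symm
  obtain ⟨c, hc⟩ := Polynomial.sub_dvd_eval_sub s 0 m.reverse
  rw [← Polynomial.coeff_zero_eq_eval_zero, Polynomial.coeff_zero_reverse, hm.leadingCoeff, sub_zero] at hc
  refine ⟨m.reverse.eval s, c, by linear_combination hc, ?_⟩
  exact Ideal.Quotient.eq_zero_iff_mem.1 (h12.symm.trans h9)

theorem SD.Step.loc {S A Q B : Type u} [CommRing S] [CommRing A] [CommRing Q] [CommRing B] {ι : S →+* A} {f : Polynomial S} {y : A}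
    (H : SD.Step ι f y) (q : S) [Algebra S Q] [IsLocalization.Away q Q] [Algebra A B] [IsLocalization.Away (ι q) B] :
    ∃ g : Q →+* B, g.comp (algebraMap S Q) = (algebraMap A B).comp ι ∧ SD.Step g (f.map (algebraMap S Q)) (algebraMap A B y) := by
  have hu : IsUnit (((algebraMap A B).comp ι) q) := IsLocalization.Away.algebraMap_isUnit (ι q)
  have hg : (IsLocalization.Away.lift (S := Q) q hu).comp (algebraMap S Q) = (algebraMap A B).comp ι := IsLocalization.Away.lift_comp q hu
  refine ⟨IsLocalization.Away.lift (S := Q) q hu, hg, ?_⟩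
  refine H.push _ _ _ hg.symm ?_ ?_
  · intro E _ g k hk
    have hu' : IsUnit (k (ι q)) := by
      have := RingHom.congr_fun hk q
      rw [RingHom.comp_apply, RingHom.comp_apply] at this
      rw [this]
      exact (IsLocalization.Away.algebraMap_isUnit q).map g
    refine ⟨IsLocalization.Away.lift (S := B) (ι q) hu', ?_, IsLocalization.Away.lift_comp _ hu'⟩
    apply IsLocalization.ringHom_ext (Submonoid.powers q)
    rw [RingHom.comp_assoc, hg, ← RingHom.comp_assoc, IsLocalization.Away.lift_comp, hk]
  · intro E _ k k' _ h2
    exact IsLocalization.ringHom_ext (Submonoid.powers (ι q)) h2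

theorem SD.core {R : Type u} [CommRing R] [IsNoetherianRing R] (d : ℕ) (hd : ringKrullDim R ≤ d) {f : Polynomial R} (hf : f.Monic)
    (l : List Bool) (hl : true ∈ l → 1 ≤ f.natDegree) {A : Type u} [CommRing A] [Algebra R A] (H : SD.Tow R f l A)
    {P : Type*} [AddCommGroup P] [Module A P] (s : R) (r : ℕ) (hr : d ≤ r) (hr2 : 1 ≤ r)
    (B : SD.SBasis (P := P) (algebraMap R A s) (Fin (r + 1))) (p : P) (ψ : P →ₗ[A] A) (hψ : ∃ c, 1 - algebraMap R A s * c = ψ p) :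
    ∃ (x : P) (θ : P →ₗ[A] A), θ x = 1 := by
  have hnA := H.noeth
  set σ := algebraMap R A s with hσ
  have hNL := SD.NL R d hd f hf l hl A H
  obtain ⟨b0, hb0⟩ := hNL (B.φ 0 p) (s ^ 2)
  rw [map_pow, ← hσ] at hb0
  -- minimal primes
  obtain ⟨b, hb⟩ := SD.avoid_all σ (Ideal.span {B.φ 0 p + σ ^ 2 * b0}) 1 (by
    intro Q hQ hle hσQ
    rw [Nat.cast_one, Order.one_le_iff_ne_zero]
    intro h0
    obtain ⟨S, _, _, ι, y, Hs, -, hsp⟩ := hb0 ⊤ (by simp)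
    refine SD.special_min Hs _ _ hsp Q h0 ?_ (hle (Ideal.mem_span_singleton_self _))
    intro h
    have h : algebraMap R A (s ^ 2) ∈ Q := by simpa using h
    rw [map_pow] at h
    exact hσQ (hQ.mem_of_pow_mem _ h)) (fun i => if hi : i + 1 < r + 1 then B.φ ⟨i + 1, hi⟩ p else 0) d
  let β : Fin (r + 1) → A := Fin.cons b0 (fun i => b i)
  set p' := p + ∑ i, (σ * β i) • B.p i with hp'
  have hφ : ∀ i, B.φ i p' = B.φ i p + σ ^ 2 * β i := by
    intro i
    rw [hp', map_add, map_sum]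
    simp only [map_smul, B.pair, smul_eq_mul, mul_ite, mul_zero, Finset.sum_ite_eq, Finset.mem_univ, if_true]
    ring
  let I : Ideal A := LinearMap.range (Module.Dual.eval A P p')
  have hImem : ∀ θ : P →ₗ[A] A, θ p' ∈ I := fun θ => ⟨θ, rfl⟩
  obtain ⟨c0, hc0⟩ := hψ
  have hψ' : ∃ c, 1 - σ * c = ψ p' := by
    refine ⟨c0 - ∑ i, β i * ψ (B.p i), ?_⟩
    rw [hp', map_add, map_sum, ← hc0]
    simp only [map_smul, smul_eq_mul, mul_sub, Finset.mul_sum, mul_assoc]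
    ring
  obtain ⟨c', hc'⟩ := hψ'
  have hIσ : ∀ Q : Ideal A, Q.IsPrime → I ≤ Q → σ ∉ Q := by
    intro Q hQ hle hσQ
    apply hQ.ne_top
    rw [Ideal.eq_top_iff_one]
    have h1 := hle (hImem ψ)
    rw [← hc'] at h1
    have := Q.add_mem h1 (Q.mul_mem_right c' hσQ)
    rwa [sub_add_cancel] at this
  have hht : ((d + 1 : ℕ) : ℕ∞) ≤ I.height := by
    rw [I.height_eq_inf_minimalPrimes]
    refine le_iInf₂ fun Q hQ => ?_
    have hQp := hQ.1.1
    have := hb Q hQp ?_ ?_ (hIσ Q hQp hQ.1.2)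
    · rwa [add_comm] at this
    · rw [Ideal.span_singleton_le_iff_mem]
      have := hQ.1.2 (hImem (B.φ 0))
      rwa [hφ 0] at this
    · intro i hi
      have hi' : i + 1 < r + 1 := by omega
      rw [dif_pos hi']
      have := hQ.1.2 (hImem (B.φ ⟨i + 1, hi'⟩))
      rw [hφ] at this
      exact this
  obtain ⟨S, _, _, ι, y, Hs, ⟨F, hFI, hF⟩, hsp⟩ := hb0 I hht
  have hιs : ι.toRingHom (algebraMap R S s) = σ := by simp [hσ]
  obtain ⟨t, c, htc, htI⟩ := SD.special_int Hs I F hFI hF (algebraMap R S s) ⟨c', by rw [hιs, hc']; exact hImem ψ⟩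
  obtain ⟨θ, hθ⟩ := htI
  have hθ : θ p' = ι t := hθ
  have hst : IsCoprime σ (ι t) := ⟨-ι c, 1, by rw [htc, map_add, map_mul, map_one]; simp [hσ]; ring⟩
  let Q := Localization.Away (algebraMap R S s * t)
  let Bq := Localization.Away (σ * ι t)
  have hq : ι.toRingHom (algebraMap R S s * t) = σ * ι t := by rw [map_mul, hιs]; rfl
  have hlocB : IsLocalization.Away (ι.toRingHom (algebraMap R S s * t)) Bq := by rw [hq]; infer_instance
  obtain ⟨κ, hκ, HQ⟩ := Hs.loc (Q := Q) (B := Bq) (algebraMap R S s * t)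
  let _ := (Polynomial.eval₂RingHom κ (algebraMap A Bq y)).toAlgebra
  have hlocf := HQ.isLoc
  obtain ⟨k, E, i, j, g, pp, qq, u, hu, hg1, hg2, hpq, hev⟩ := hsp
  set fS := f.map (algebraMap R S) with hfS
  obtain ⟨φ', hφ'⟩ := Hs.unit.exists_right_inv
  set ff := fS.eval₂ ι.toRingHom y with hff
  have hφk : ff ^ k * φ' ^ k = 1 := by rw [← mul_pow, hφ', one_pow]
  obtain ⟨u', hu'⟩ := hu.exists_right_inv
  have hιu : ι u * ι u' = 1 := by rw [← map_mul, hu', map_one]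
  have hsQ : IsUnit (algebraMap S Q (algebraMap R S s)) := by
    have : IsUnit (algebraMap S Q (algebraMap R S s * t)) := IsLocalization.Away.algebraMap_isUnit _
    rw [map_mul] at this
    exact isUnit_of_mul_isUnit_left this
  obtain ⟨s', hs'⟩ := hsQ.exists_right_inv
  set sQ := algebraMap S Q (algebraMap R S s) with hsQd
  have hBu : IsUnit (algebraMap A Bq (σ * ι t)) := IsLocalization.Away.algebraMap_isUnit _
  have hBs : IsUnit (algebraMap A Bq σ) := by
    rw [map_mul] at hBu
    exact isUnit_of_mul_isUnit_left hBu
  have hκ' : ∀ r : S, κ (algebraMap S Q r) = algebraMap A Bq (ι r) := fun r => RingHom.congr_fun hκ r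
  have halg : ∀ h : Polynomial S, algebraMap (Polynomial Q) Bq (h.map (algebraMap S Q)) = algebraMap A Bq (h.eval₂ ι.toRingHom y) := by
    intro h
    change (h.map (algebraMap S Q)).eval₂ κ (algebraMap A Bq y) = _
    rw [Polynomial.eval₂_map, hκ, Polynomial.hom_eval₂]
  have hss : sQ ^ (2 * i) * s' ^ (2 * i) = 1 := by rw [← mul_pow, hs', one_pow]
  have hss2 : sQ ^ (2 * j) * s' ^ (2 * j) = 1 := by rw [← mul_pow, hs', one_pow]
  have huQ : algebraMap S Q u * algebraMap S Q u' = 1 := by rw [← map_mul, hu', map_one]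
  set wq : Q := algebraMap S Q u' * s' ^ (2 * i) with hwq
  set wq' : Q := algebraMap S Q u * sQ ^ (2 * i) with hwq'
  have hww : wq' * wq = 1 := by
    rw [hwq, hwq']
    linear_combination algebraMap S Q u * algebraMap S Q u' * hss + huQ
  have hnt : Nontrivial (Fin (r + 1)) := Fin.nontrivial_iff_two_le.2 (by omega)
  have hιs2 : ι (algebraMap R S s) = σ := hιs
  obtain ⟨γ, hγ0, hγ⟩ := SD.row (S := Q) (A := Bq) (fS.map (algebraMap S Q)) (fun i => algebraMap A Bq (B.φ i p')) (by
      obtain ⟨m, hm⟩ := hBu.exists_left_inv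
      refine ⟨fun i => m * algebraMap A Bq (θ (B.p i)), ?_⟩
      have h1 := congrArg θ (B.sum p')
      rw [map_sum, map_smul, hθ] at h1
      simp only [map_smul, smul_eq_mul] at h1
      have h2 := congrArg (algebraMap A Bq) h1
      rw [map_sum] at h2
      refine Eq.trans ?_ ((congrArg (fun z => m * z) h2).trans hm)
      beta_reduce
      rw [Finset.mul_sum]
      refine Finset.sum_congr rfl fun i _ => ?_
      rw [map_mul]; ring) 0 (algebraMap A Bq (φ' ^ k * ι u * σ ^ (2 * i))) (by
      simp only [map_mul, map_pow]
      refine IsUnit.mul (IsUnit.mul (IsUnit.pow _ ?_) ?_) (hBs.pow _)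
      · exact (IsUnit.of_mul_eq_one _ ((mul_comm _ _).trans hφ')).map (algebraMap A Bq)
      · exact (hu.map ι).map (algebraMap A Bq))
    (Polynomial.C wq * g.map (algebraMap S Q)) (by
      refine Polynomial.monic_of_natDegree_le_of_coeff_eq_one E ((Polynomial.natDegree_C_mul_le _ _).trans (Polynomial.natDegree_map_le.trans hg1)) ?_
      rw [Polynomial.coeff_C_mul, Polynomial.coeff_map, hg2, map_mul, map_pow, map_pow, map_pow, ← pow_mul, ← hsQd, ← hwq', mul_comm, hww]) (by
      refine ⟨Polynomial.C (s' ^ (2 * j) * wq') * pp.map (algebraMap S Q), Polynomial.C (s' ^ (2 * j)) * qq.map (algebraMap S Q), ?_⟩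
      have h6 := congrArg (Polynomial.map (algebraMap S Q)) hpq
      simp only [Polynomial.map_add, Polynomial.map_mul, Polynomial.map_C] at h6
      rw [map_pow (algebraMap S Q), map_pow (algebraMap R S), map_pow (algebraMap S Q), ← pow_mul, ← hsQd] at h6
      have h7 : (Polynomial.C wq' * Polynomial.C wq : Polynomial Q) = 1 := by rw [← Polynomial.C_mul, hww, Polynomial.C_1]
      have h8 : (Polynomial.C (sQ ^ (2 * j)) * Polynomial.C (s' ^ (2 * j)) : Polynomial Q) = 1 := by rw [← Polynomial.C_mul, hss2, Polynomial.C_1]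
      rw [Polynomial.C_mul]
      linear_combination Polynomial.C (s' ^ (2 * j)) * h6 + h8 + Polynomial.C (s' ^ (2 * j)) * pp.map (algebraMap S Q) * g.map (algebraMap S Q) * h7) (by
      have e1 : algebraMap (Polynomial Q) Bq (Polynomial.C wq) = κ wq := by
        change (Polynomial.C wq).eval₂ κ _ = _
        rw [Polynomial.eval₂_C]
      have e2 : algebraMap A Bq (ι u * σ ^ (2 * i)) = κ wq' := by
        rw [hwq', map_mul κ, hκ', map_pow κ, hsQd, hκ', hιs2, map_mul, map_pow]
      have e3 : κ wq' * κ wq = 1 := by rw [← map_mul, hww, map_one]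
      have e4 : B.φ 0 p' = φ' ^ k * g.eval₂ ι.toRingHom y := by
        rw [← hev, hφ 0]
        have : β 0 = b0 := rfl
        rw [this]
        linear_combination (-(B.φ 0 p + σ ^ 2 * b0)) * hφk
      beta_reduce
      rw [map_mul (algebraMap (Polynomial Q) Bq), e1, halg, e4, mul_assoc (φ' ^ k), map_mul _ (φ' ^ k), map_mul _ (φ' ^ k), e2]
      linear_combination (-(algebraMap A Bq (φ' ^ k) * algebraMap A Bq (g.eval₂ ι.toRingHom y))) * e3)
  exact SD.patch (B := Bq) σ (ι t) hst B p' θ hθ (φ' ^ k * ι u * σ ^ (2 * i)) (ff ^ k * ι u') (2 * i) (by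
    linear_combination σ ^ (2 * i) * ι u * ι u' * hφk + σ ^ (2 * i) * hιu) 0 γ hγ0 hγ


theorem SD.clear {A B P : Type*} [CommRing A] [CommRing B] [Algebra A B] (S : Submonoid A) [IsLocalization S B]
    [AddCommGroup P] [Module A P] [Module.Finite A P] [Module.Projective A P] {r : ℕ}
    (b : Module.Basis (Fin r) B (B ⊗[A] P)) : ∃ s ∈ S, Nonempty (SD.SBasis (P := P) s (Fin r)) := by
  classical
  have := Module.finitePresentation_of_projective A P
  have hM : IsLocalizedModule S (TensorProduct.mk A B P 1) := inferInstance
  choose x hx using fun j => IsLocalizedModule.surj S (TensorProduct.mk A B P 1) (b j)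
  have hh : ∀ j, ∃ (h : P →ₗ[A] A) (n : S), Algebra.linearMap A B ∘ₗ h = n • (((b.coord j).restrictScalars A) ∘ₗ TensorProduct.mk A B P 1) :=
    fun j => Module.FinitePresentation.exists_lift_of_isLocalizedModule S (Algebra.linearMap A B) _
  choose h n hh using hh
  have hh : ∀ j q, algebraMap A B (h j q) = algebraMap A B (n j : A) * b.coord j (1 ⊗ₜ q) := by
    intro j q
    have := LinearMap.congr_fun (hh j) q
    rw [← Algebra.smul_def]
    exact this
  have hx : ∀ j, algebraMap A B ((x j).2 : A) • b j = 1 ⊗ₜ[A] (x j).1 := by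
    intro j
    have := hx j
    rw [algebraMap_smul]
    exact this
  let T : A := ∏ k, ((n k : A) * ((x k).2 : A))
  have hT : T ∈ S := Submonoid.prod_mem _ fun k _ => S.mul_mem (n k).2 (x k).2.2
  let W : Fin r → A := fun j => ∏ k ∈ Finset.univ.erase j, ((n k : A) * ((x k).2 : A))
  have hW : ∀ j, (n j : A) * ((x j).2 : A) * W j = T := fun j => Finset.mul_prod_erase _ (fun k => (n k : A) * ((x k).2 : A)) (Finset.mem_univ j)
  have h1 : ∀ j k, algebraMap A B (W j * h j (x k).1) = algebraMap A B (if j = k then T else 0) := by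
    intro j k
    rw [map_mul, hh, ← hx, map_smul, Module.Basis.coord_apply, Module.Basis.repr_self, Finsupp.single_apply, smul_eq_mul]
    rcases eq_or_ne j k with rfl | hne
    · rw [if_pos rfl, if_pos rfl, ← hW j, map_mul, map_mul]; ring
    · rw [if_neg hne, if_neg hne.symm, map_zero]; ring
  choose e he using fun j k => IsLocalization.exists_of_eq (M := S) (h1 j k)
  have h2 : TensorProduct.mk A B P 1 ∘ₗ (∑ j, (W j • h j).smulRight (x j).1) = TensorProduct.mk A B P 1 ∘ₗ (T • LinearMap.id) := by
    ext q
    simp only [LinearMap.comp_apply, LinearMap.sum_apply, map_sum, LinearMap.smulRight_apply, LinearMap.smul_apply, map_smul, LinearMap.id_apply, TensorProduct.mk_apply]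
    conv_rhs => rw [← b.sum_repr (1 ⊗ₜ q), Finset.smul_sum]
    refine Finset.sum_congr rfl fun j _ => ?_
    rw [← hx j, ← algebraMap_smul B (W j • h j q), ← algebraMap_smul B T, smul_eq_mul, map_mul, hh, ← hW j, Module.Basis.coord_apply]
    simp only [smul_smul, map_mul]
    congr 1; ring
  obtain ⟨g, hg⟩ := Module.Finite.exists_smul_of_comp_eq_of_isLocalizedModule S _ _ _ h2
  let E : A := ∏ j, ∏ k, (e j k : A)
  have hE : E ∈ S := Submonoid.prod_mem _ fun j _ => Submonoid.prod_mem _ fun k _ => (e j k).2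
  have hEd : ∀ j k, (e j k : A) ∣ E := fun j k => (Finset.dvd_prod_of_mem (fun k => (e j k : A)) (Finset.mem_univ k)).trans
    (Finset.dvd_prod_of_mem (fun j => ∏ k, (e j k : A)) (Finset.mem_univ j))
  refine ⟨E * g * T, S.mul_mem (S.mul_mem hE g.2) hT, ⟨⟨fun j => (x j).1, fun j => (E * g * W j) • h j, ?_, ?_⟩⟩⟩
  · intro j k
    obtain ⟨c, hc⟩ := hEd j k
    have := he j k
    rw [LinearMap.smul_apply, smul_eq_mul, hc]
    split_ifs at this ⊢
    · linear_combination c * g * this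
    · linear_combination c * g * this
  · intro q
    have := LinearMap.congr_fun hg q
    simp only [LinearMap.smul_apply, LinearMap.sum_apply, LinearMap.smulRight_apply, LinearMap.id_apply, Submonoid.smul_def] at this
    simp only [LinearMap.smul_apply, smul_eq_mul, mul_assoc, mul_smul, ← Finset.smul_sum] at this ⊢
    rw [this]

theorem SD.combine {R A P : Type*} [CommRing R] [IsNoetherianRing R] [IsReduced R] [CommRing A] [Algebra R A]
    [AddCommGroup P] [Module A P] (r : ℕ)
    (H : ∀ p ∈ minimalPrimes R, ∃ s ∉ p, Nonempty (SD.SBasis (P := P) (algebraMap R A s) (Fin r))) :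
    ∃ s ∈ nonZeroDivisors R, Nonempty (SD.SBasis (P := P) (algebraMap R A s) (Fin r)) := by
  classical
  have hfin : (minimalPrimes R).Finite := minimalPrimes.finite_of_isNoetherianRing R
  have hpr : ∀ p ∈ minimalPrimes R, p.IsPrime := fun p hp => hp.1.1
  have hzero : ∀ x : R, (∀ p ∈ minimalPrimes R, x ∈ p) → x = 0 := by
    intro x hx
    have : x ∈ nilradical R := by
      rw [nilradical, ← Ideal.sInf_minimalPrimes]
      exact Submodule.mem_sInf.2 hx
    exact (mem_nilradical.1 this).eq_zero
  have hav : ∀ p ∈ minimalPrimes R, ∃ t ∉ p, ∀ q ∈ minimalPrimes R, q ≠ p → t ∈ q := by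
    intro p hp
    have := hpr p hp
    have h1 : ¬ (hfin.toFinset.erase p).inf id ≤ p := by
      intro h
      obtain ⟨q, hq, hqp⟩ := (Ideal.IsPrime.inf_le' this).1 h
      rw [Finset.mem_erase, Set.Finite.mem_toFinset] at hq
      exact hq.1 (le_antisymm hqp (hp.2 hq.2.1 hqp))
    obtain ⟨t, ht, htp⟩ := Set.not_subset.1 h1
    refine ⟨t, htp, fun q hq hne => ?_⟩
    exact (Finset.inf_le (f := id) (Finset.mem_erase.2 ⟨hne, hfin.mem_toFinset.2 hq⟩) : _ ≤ q) ht
  have : Fintype (minimalPrimes R) := hfin.fintype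
  choose s hs hB using fun p : minimalPrimes R => H p.1 p.2
  choose t ht htq using fun p : minimalPrimes R => hav p.1 p.2
  let B := fun p => (hB p).some
  -- s' = t * s
  let w : minimalPrimes R → R := fun p => t p * s p
  have hw : ∀ p, w p ∉ p.1 := fun p h => ((hpr p.1 p.2).mem_or_mem h).elim (ht p) (hs p)
  have hw2 : ∀ p q, p ≠ q → w p ∈ q.1 := fun p q h => Ideal.mul_mem_right _ _ (htq p q.1 q.2 (fun h' => h (Subtype.ext h'.symm)))
  have hww : ∀ p q, p ≠ q → w p * w q = 0 := by
    intro p q h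
    refine hzero _ fun z hz => ?_
    by_cases hpz : p = ⟨z, hz⟩
    · exact Ideal.mul_mem_left _ _ (hw2 q ⟨z, hz⟩ (fun h' => h (hpz.trans h'.symm)))
    · exact Ideal.mul_mem_right _ _ (hw2 p ⟨z, hz⟩ hpz)
  refine ⟨∑ p, w p * w p * w p, ?_, ⟨⟨fun j => ∑ p, algebraMap R A (w p) • (B p).p j, fun j => ∑ p, algebraMap R A (w p * t p) • (B p).φ j, ?_, ?_⟩⟩⟩
  · rw [mem_nonZeroDivisors_iff_right]
    intro x hx
    refine hzero _ fun z hz => ?_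
    have hz' := hpr z hz
    refine (hz'.mem_or_mem (hx ▸ z.zero_mem : x * _ ∈ z)).resolve_right fun h => ?_
    rw [← Finset.add_sum_erase _ _ (Finset.mem_univ (⟨z, hz⟩ : minimalPrimes R))] at h
    have h2 := (Ideal.add_mem_iff_left z (Ideal.sum_mem _ fun q hq => ?_)).1 h
    · rcases hz'.mem_or_mem h2 with h3 | h3
      · rcases hz'.mem_or_mem h3 with h4 | h4 <;> exact hw ⟨z, hz⟩ h4
      · exact hw ⟨z, hz⟩ h3
    · exact Ideal.mul_mem_left _ _ (hw2 q ⟨z, hz⟩ (Finset.ne_of_mem_erase hq))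
  · intro i j
    simp only [LinearMap.sum_apply, LinearMap.smul_apply, map_sum, map_smul, smul_eq_mul]
    have : ∀ p, ∑ q, algebraMap R A (w p * t p) * (algebraMap R A (w q) * (B p).φ i ((B q).p j)) = if i = j then algebraMap R A (w p * w p * w p) else 0 := by
      intro p
      rw [Finset.sum_eq_single p]
      · rw [(B p).pair]
        split_ifs
        · simp only [← map_mul]; congr 1; simp only [w]; ring
        · ring
      · intro q _ hq
        have := congrArg (algebraMap R A) (hww p q hq.symm)
        rw [map_mul, map_zero] at this
        rw [map_mul]
        linear_combination (algebraMap R A (t p) * (B p).φ i ((B q).p j)) * this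
      · simp
    simp only [Finset.mul_sum]
    rw [Finset.sum_comm]
    simp only [mul_left_comm (algebraMap R A (w _)) (algebraMap R A (w _ * t _))]
    rw [Finset.sum_congr rfl fun p _ => this p]
    split_ifs <;> simp
  · intro x
    simp only [LinearMap.sum_apply, LinearMap.smul_apply, smul_eq_mul, Finset.smul_sum, Finset.sum_smul, smul_smul]
    rw [Finset.sum_comm]
    have : ∀ p, ∑ j, ∑ q, (algebraMap R A (w q * t q) * (B q).φ j x * algebraMap R A (w p)) • (B p).p j = algebraMap R A (w p * w p * w p) • x := by
      intro p
      have h1 : ∀ j, ∑ q, (algebraMap R A (w q * t q) * (B q).φ j x * algebraMap R A (w p)) • (B p).p j = algebraMap R A (w p * t p * w p) • ((B p).φ j x • (B p).p j) := by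
        intro j
        rw [Finset.sum_eq_single p]
        · rw [smul_smul, map_mul _ _ (w p)]; congr 1; ring
        · intro q _ hq
          have := congrArg (algebraMap R A) (hww q p hq)
          rw [map_mul, map_zero] at this
          have h0 : algebraMap R A (w q * t q) * (B q).φ j x * algebraMap R A (w p) = 0 := by
            rw [map_mul]
            linear_combination (algebraMap R A (t q) * (B q).φ j x) * this
          rw [h0, zero_smul]
        · simp
      rw [Finset.sum_congr rfl fun j _ => h1 j, ← Finset.smul_sum, (B p).sum, smul_smul, ← map_mul]
      congr 2; simp only [w]; ring
    rw [map_sum, Finset.sum_smul]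
    refine Finset.sum_congr rfl fun p _ => (this p).symm ▸ ?_
    refine Finset.sum_congr rfl fun j _ => ?_
    rw [Finset.sum_mul, Finset.sum_smul]


def SD.Uni (A P : Type*) [CommRing A] [AddCommGroup P] [Module A P] : Prop := ∃ (v : P) (φ : P →ₗ[A] A), φ v = 1

def SD.MainP (l : List Bool) (d : ℕ) : Prop :=
  ∀ (R : Type u) [CommRing R] [IsNoetherianRing R] (_ : ringKrullDim R ≤ d) (f : Polynomial R) (_ : f.Monic)
    (_ : true ∈ l → 1 ≤ f.natDegree) (A : Type u) [CommRing A] [Algebra R A] (_ : SD.Tow R f l A)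
    (P : Type u) [AddCommGroup P] [Module A P] [Module.Finite A P] [Module.Projective A P] (r : ℕ) (_ : d + 1 ≤ r)
    (_ : ∀ p : PrimeSpectrum A, Module.rankAtStalk P p = r), SD.Uni A P

def SD.QSP (l : List Bool) : Prop :=
  ∀ (K : Type u) [CommRing K] (_ : IsField K) (f : Polynomial K) (_ : f.Monic)
    (_ : true ∈ l → 1 ≤ f.natDegree) (A : Type u) [CommRing A] [Algebra K A] (_ : SD.Tow K f l A)
    (P : Type u) [AddCommGroup P] [Module A P] [Module.Finite A P] [Module.Projective A P] (r : ℕ)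
    (_ : ∀ p : PrimeSpectrum A, Module.rankAtStalk P p = r), Module.Free A P

theorem SD.lift_uni {A B P : Type*} [CommRing A] [CommRing B] [Algebra A B] (hs : Function.Surjective (algebraMap A B))
    [AddCommGroup P] [Module A P] [Module.Projective A P] (H : SD.Uni B (B ⊗[A] P)) :
    ∃ (v : P) (φ : P →ₗ[A] A), algebraMap A B (φ v) = 1 := by
  obtain ⟨v', φ', h⟩ := H
  obtain ⟨v, rfl⟩ := TensorProduct.mk_surjective A P B hs v'
  obtain ⟨φ, hφ⟩ := Module.projective_lifting_property (Algebra.linearMap A B) ((φ'.restrictScalars A) ∘ₗ TensorProduct.mk A B P 1) hs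
  refine ⟨v, φ, ?_⟩
  have := LinearMap.congr_fun hφ v
  exact this.trans h

attribute [local instance] Algebra.TensorProduct.rightAlgebra in
theorem SD.lift_quot {R A P : Type u} [CommRing R] [CommRing A] [Algebra R A] (I : Ideal R)
    [AddCommGroup P] [Module A P] [Module.Projective A P] (H : SD.Uni ((R ⧸ I) ⊗[R] A) (((R ⧸ I) ⊗[R] A) ⊗[A] P)) :
    ∃ (v : P) (φ : P →ₗ[A] A), 1 - φ v ∈ I.map (algebraMap R A) := by
  obtain ⟨v, φ, h⟩ := SD.lift_uni (TensorProduct.mk_surjective R A (R ⧸ I) Ideal.Quotient.mk_surjective) H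
  refine ⟨v, φ, ?_⟩
  have h1 : (1 : R ⧸ I) ⊗ₜ[R] (φ v) = 1 ⊗ₜ 1 := h
  have h2 := congrArg (TensorProduct.quotTensorEquivQuotSMul A I) h1
  rw [TensorProduct.quotTensorEquivQuotSMul_mk_one_tmul, TensorProduct.quotTensorEquivQuotSMul_mk_one_tmul, eq_comm,
    Submodule.Quotient.eq, Ideal.smul_top_eq_map] at h2
  exact h2

theorem SD.field_min {R : Type*} [CommRing R] [IsReduced R] (p : Ideal R) [p.IsPrime] (hp : p ∈ minimalPrimes R) :
    IsField (Localization.AtPrime p) := by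
  have : Ring.KrullDimLE 0 (Localization.AtPrime p) := by
    refine Ring.KrullDimLE.mk₀ fun I hI => ?_
    have h1 : I.comap (algebraMap R (Localization.AtPrime p)) ≤ p := by
      have := IsLocalRing.le_maximalIdeal hI.ne_top
      exact (Ideal.comap_mono this).trans (le_of_eq (IsLocalization.AtPrime.under_maximalIdeal _ p))
    have h2 : I.comap (algebraMap R (Localization.AtPrime p)) = p :=
      le_antisymm h1 (hp.2 ⟨hI.comap _, bot_le⟩ h1)
    have h3 : IsLocalRing.maximalIdeal (Localization.AtPrime p) ≤ I := by
      rw [← Localization.AtPrime.map_eq_maximalIdeal, Ideal.map_le_iff_le_comap, h2]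
    have := le_antisymm (IsLocalRing.le_maximalIdeal hI.ne_top) h3
    rw [this]
    infer_instance
  exact Ring.KrullDimLE.isField_of_isReduced

attribute [local instance] Algebra.TensorProduct.rightAlgebra in
theorem SD.main_red {l : List Bool} (Q : SD.QSP.{u} l) (R : Type u) [CommRing R] [IsNoetherianRing R] [IsReduced R] (f : Polynomial R) (hf : f.Monic)
    (hl : true ∈ l → 1 ≤ f.natDegree) (A : Type u) [CommRing A] [Algebra R A] (H : SD.Tow R f l A)
    (P : Type u) [AddCommGroup P] [Module A P] [Module.Finite A P] [Module.Projective A P] (r : ℕ)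
    (hr : ∀ p : PrimeSpectrum A, Module.rankAtStalk P p = r) :
    ∃ s ∈ nonZeroDivisors R, Nonempty (SD.SBasis (P := P) (algebraMap R A s) (Fin r)) := by
  refine SD.combine r fun p hp => ?_
  have := hp.1.1
  let K := Localization.AtPrime p
  have hfr : Module.Free (K ⊗[R] A) ((K ⊗[R] A) ⊗[A] P) :=
    Q K (SD.field_min p hp) (f.map (algebraMap R K)) (hf.map _) (fun h => by
      rw [hf.natDegree_map]; exact hl h) (K ⊗[R] A) H.tensor ((K ⊗[R] A) ⊗[A] P) r (fun q => by rw [Module.rankAtStalk_baseChange, hr])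
  have hb : Nonempty (Module.Basis (Fin r) (K ⊗[R] A) ((K ⊗[R] A) ⊗[A] P)) := by
    rcases subsingleton_or_nontrivial (K ⊗[R] A) with h | h
    · have := Module.subsingleton (K ⊗[R] A) ((K ⊗[R] A) ⊗[A] P)
      exact ⟨Module.Basis.ofEquivFun 0⟩
    · refine ⟨Module.finBasisOfFinrankEq _ _ ?_⟩
      obtain ⟨q⟩ : Nonempty (PrimeSpectrum (K ⊗[R] A)) := inferInstance
      have h1 := congrFun (Module.rankAtStalk_eq_finrank_of_free (R := K ⊗[R] A) (M := (K ⊗[R] A) ⊗[A] P)) q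
      rw [Module.rankAtStalk_baseChange, hr] at h1
      exact h1.symm
  obtain ⟨b⟩ := hb
  obtain ⟨s', hs', hB⟩ := SD.clear (Algebra.algebraMapSubmonoid A p.primeCompl) b
  obtain ⟨s, hs, rfl⟩ := hs'
  exact ⟨s, hs, hB⟩

attribute [local instance] Algebra.TensorProduct.rightAlgebra in
theorem SD.main_of {l : List Bool} (Q : SD.QSP.{u} l) (d : ℕ) : SD.MainP.{u} l d := by
  induction d using Nat.strong_induction_on with
  | _ d ih =>
  intro R _ _ hd f hf hl A _ _ H P _ _ _ _ r hr hrk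
  wlog hred : IsReduced R generalizing R A P
  · have hnt : Nontrivial R := by
      by_contra h
      rw [not_nontrivial_iff_subsingleton] at h
      exact hred inferInstance
    have hnt2 : Nontrivial (R ⧸ nilradical R) := by
      refine Ideal.Quotient.nontrivial_iff.2 fun h => ?_
      have := (Ideal.eq_top_iff_one _).1 h
      exact not_isNilpotent_one this
    obtain ⟨v, φ, h⟩ := SD.lift_quot (nilradical R) (this (R ⧸ nilradical R) ((ringKrullDim_quotient_le _).trans hd) (f.map (algebraMap R _)) (hf.map _)
      (fun h => by rw [hf.natDegree_map]; exact hl h) ((R ⧸ nilradical R) ⊗[R] A) H.tensor (((R ⧸ nilradical R) ⊗[R] A) ⊗[A] P)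
      (fun q => by rw [Module.rankAtStalk_baseChange, hrk]) ((Ideal.isRadical_iff_quotient_reduced _).1 (Ideal.radical_isRadical _)))
    have h2 : 1 - φ v ∈ nilradical A := by
      refine (Ideal.map_le_iff_le_comap.2 fun x hx => ?_ : (nilradical R).map (algebraMap R A) ≤ nilradical A) h
      exact (show IsNilpotent x from hx).map (algebraMap R A)
    have h3 : IsUnit (φ v) := by
      have := (show IsNilpotent (1 - φ v) from h2).isUnit_one_sub
      rwa [sub_sub_cancel] at this
    obtain ⟨w, hw⟩ := h3.exists_left_inv
    exact ⟨v, w • φ, hw⟩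
  obtain ⟨s, hs, ⟨B⟩⟩ := SD.main_red Q R f hf hl A H P r hrk
  obtain ⟨r, rfl⟩ : ∃ r', r = r' + 1 := ⟨r - 1, by omega⟩
  by_cases hu : IsUnit s
  · have := B.pair 0 0
    rw [if_pos rfl] at this
    obtain ⟨w, hw⟩ := (hu.map (algebraMap R A)).exists_left_inv
    exact ⟨B.p 0, w • B.φ 0, by rw [LinearMap.smul_apply, this, smul_eq_mul, hw]⟩
  have hnt : Nontrivial (R ⧸ Ideal.span {s}) := Ideal.Quotient.nontrivial_iff.2 fun h => hu (Ideal.span_singleton_eq_top.1 h)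
  have hdim := (ringKrullDim_quotient_succ_le_of_nonZeroDivisor hs).trans hd
  obtain ⟨d, rfl⟩ : ∃ d', d = d' + 1 := by
    refine ⟨d - 1, ?_⟩
    have h0 := ringKrullDim_nonneg_of_nontrivial (R := R ⧸ Ideal.span {s})
    rcases Nat.eq_zero_or_pos d with rfl | h
    · exfalso
      have : (0 : WithBot ℕ∞) + 1 ≤ 0 := (add_le_add_left h0 1).trans hdim
      exact absurd this (by decide)
    · omega
  have hdim' : ringKrullDim (R ⧸ Ideal.span {s}) ≤ d := by
    push_cast at hdim
    revert hdim
    generalize ringKrullDim (R ⧸ Ideal.span {s}) = z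
    intro hdim
    induction z with
    | bot => exact bot_le
    | coe z =>
      have h1 : z + 1 ≤ (d : ℕ∞) + 1 := by exact_mod_cast hdim
      have h2 : z ≤ (d : ℕ∞) := (ENat.add_le_add_iff_right (by simp)).1 h1
      exact_mod_cast h2
  obtain ⟨v, φ, h⟩ := SD.lift_quot (Ideal.span {s}) (ih d (by omega) (R ⧸ Ideal.span {s}) hdim' (f.map (algebraMap R _)) (hf.map _)
      (fun h => by rw [hf.natDegree_map]; exact hl h) ((R ⧸ Ideal.span {s}) ⊗[R] A) H.tensor (((R ⧸ Ideal.span {s}) ⊗[R] A) ⊗[A] P)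
      (r + 1) (by omega) (fun q => by rw [Module.rankAtStalk_baseChange, hrk]))
  rw [Ideal.map_span, Set.image_singleton, Ideal.mem_span_singleton] at h
  obtain ⟨c, hc⟩ := h
  exact SD.core (d + 1) (by exact_mod_cast hd) hf l hl H s r (by omega) (by omega) B v φ ⟨c, by rw [← hc]; ring⟩


theorem SD.pir_loc {R S : Type*} [CommRing R] [CommRing S] [Algebra R S] (M : Submonoid R) [IsLocalization M S]
    [IsPrincipalIdealRing R] : IsPrincipalIdealRing S := by
  constructor
  intro J
  obtain ⟨a, ha⟩ := (IsPrincipalIdealRing.principal (J.comap (algebraMap R S))).principal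
  refine ⟨⟨algebraMap R S a, ?_⟩⟩
  have h := IsLocalization.map_under M S J
  rw [Ideal.under, ha] at h
  rw [← h]
  change Ideal.map _ (Ideal.span {a}) = Ideal.span _
  rw [Ideal.map_span, Set.image_singleton]

theorem SD.Step.ufd {D A : Type u} [CommRing D] [CommRing A] {j : D →+* A} {h : Polynomial D} {x : A} (H : SD.Step j h x)
    (hD : IsDomain D) (hU : UniqueFactorizationMonoid D) (hh : h ≠ 0) : IsDomain A ∧ UniqueFactorizationMonoid A := by
  let _ := (Polynomial.eval₂RingHom j x).toAlgebra
  have := H.isLoc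
  exact ⟨IsLocalization.Away.isDomain A hh, UniqueFactorizationMonoid.of_isLocalization (Submonoid.powers h) A⟩

theorem SD.hpoly_ne {D : Type u} [CommRing D] [Nontrivial D] (b : Bool) : SD.hpoly D b ≠ 0 := by
  cases b
  · exact one_ne_zero
  · exact Polynomial.X_ne_zero

theorem SD.Tow.ufd {K : Type u} [CommRing K] (hK : IsField K) {f : Polynomial K} (hf : f ≠ 0) {l : List Bool} {A : Type u}
    [CommRing A] [Algebra K A] (H : SD.Tow K f l A) : IsDomain A ∧ UniqueFactorizationMonoid A := by
  induction l generalizing A with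
  | nil =>
    obtain ⟨y, hy⟩ := H
    let _ := hK.toField
    exact hy.ufd inferInstance inferInstance hf
  | cons b l ih =>
    obtain ⟨D, _, _, j, x, h1, h2⟩ := H
    obtain ⟨h3, h4⟩ := ih h1
    exact h2.ufd h3 h4 (SD.hpoly_ne b)

theorem SD.Tow.pid {K : Type u} [CommRing K] (hK : IsField K) {f : Polynomial K} {A : Type u}
    [CommRing A] [Algebra K A] (H : SD.Tow K f [] A) : IsPrincipalIdealRing A := by
  obtain ⟨y, hy⟩ := H
  let _ := hK.toField
  let _ := (Polynomial.eval₂RingHom (algebraMap K A) y).toAlgebra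
  have := hy.isLoc
  exact SD.pir_loc (Submonoid.powers f)

theorem SD.rank_one {A : Type*} [CommRing A] [IsDomain A] [UniqueFactorizationMonoid A] {P : Type*} [AddCommGroup P] [Module A P]
    [Module.Finite A P] [Module.Projective A P] (hr : ∀ p : PrimeSpectrum A, Module.rankAtStalk P p = 1) : Module.Free A P := by
  suffices h : Module.Invertible A P by
    have : IsGCDMonoid A := ⟨UniqueFactorizationMonoid.toGCDMonoid A⟩
    infer_instance
  constructor
  constructor
  · let F := FractionRing A
    have hb : Nonempty (Module.Basis (Fin 1) F (F ⊗[A] P)) := by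
      refine ⟨Module.finBasisOfFinrankEq _ _ ?_⟩
      obtain ⟨q⟩ : Nonempty (PrimeSpectrum F) := inferInstance
      have h1 := congrFun (Module.rankAtStalk_eq_finrank_of_free (R := F) (M := F ⊗[A] P)) q
      rw [Module.rankAtStalk_baseChange, hr] at h1
      exact h1.symm
    obtain ⟨b⟩ := hb
    obtain ⟨s, hs, ⟨B⟩⟩ := SD.clear (nonZeroDivisors A) b
    have hs0 : s ≠ 0 := nonZeroDivisors.ne_zero hs
    have h1 : ∀ x, B.φ 0 x • B.p 0 = s • x := by
      intro x
      have := B.sum x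
      simpa using this
    have key : ∀ t : Module.Dual A P ⊗[A] P, (s * s) • t = (s * contractLeft A P t) • (B.φ 0 ⊗ₜ[A] B.p 0) := by
      intro t
      induction t with
      | zero => simp
      | add x y hx hy => rw [smul_add, hx, hy, map_add, mul_add, add_smul]
      | tmul ψ x =>
        have h2 : s • ψ = ψ (B.p 0) • B.φ 0 := by
          ext z
          have := congrArg ψ (h1 z)
          rw [map_smul, map_smul] at this
          rw [LinearMap.smul_apply, LinearMap.smul_apply, ← this, smul_eq_mul, smul_eq_mul, mul_comm]
        have h3 := congrArg ψ (h1 x)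
        rw [map_smul, map_smul, smul_eq_mul, smul_eq_mul] at h3
        rw [contractLeft_apply, mul_smul, TensorProduct.smul_tmul', ← TensorProduct.tmul_smul, h2, ← h1, ← h3,
          TensorProduct.tmul_smul, ← TensorProduct.smul_tmul', smul_smul]
    rw [injective_iff_map_eq_zero]
    intro t ht
    have := key t
    rw [ht, mul_zero, zero_smul] at this
    exact (smul_eq_zero.1 this).resolve_left (mul_ne_zero hs0 hs0)
  · rw [← LinearMap.range_eq_top]
    by_contra hne
    obtain ⟨m, hm, hle⟩ := Ideal.exists_le_maximal _ hne
    let J : Ideal A := LinearMap.range (contractLeft A P)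
    have hJ : (⊤ : Submodule A P) ≤ J • ⊤ := by
      intro x _
      obtain ⟨n, π, σ, hπ, hσ, hc⟩ := Module.Finite.exists_comp_eq_id_of_projective A P
      have hx : x = ∑ i, (σ x i) • π (Pi.single i 1) := by
        conv_lhs => rw [← LinearMap.id_apply (R := A) x, ← hc, LinearMap.comp_apply, ← Finset.univ_sum_single (σ x)]
        rw [map_sum]
        refine Finset.sum_congr rfl fun i _ => ?_
        rw [← map_smul, ← Pi.single_smul, smul_eq_mul, mul_one]
      rw [hx]
      refine Submodule.sum_mem _ fun i _ => Submodule.smul_mem_smul ?_ trivial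
      exact ⟨(LinearMap.proj i ∘ₗ σ) ⊗ₜ x, rfl⟩
    obtain ⟨a, ha, ha2⟩ := Submodule.exists_sub_one_mem_and_smul_eq_zero_of_fg_of_le_smul J ⊤ Module.Finite.fg_top hJ
    have ham : a ∉ m := by
      intro h
      apply hm.ne_top
      rw [Ideal.eq_top_iff_one]
      have := m.sub_mem h (hle ha)
      rwa [sub_sub_cancel] at this
    have h0 : Module.rankAtStalk P (⟨m, hm.isPrime⟩ : PrimeSpectrum A) = 0 := by
      rw [Module.rankAtStalk_eq_zero_iff_notMem_support, Module.notMem_support_iff']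
      exact fun x => ⟨a, ham, ha2 x trivial⟩
    rw [hr] at h0
    exact one_ne_zero h0

theorem SD.free_of {A : Type u} [CommRing A] [IsDomain A] [UniqueFactorizationMonoid A]
    (H : ∀ (P : Type u) [AddCommGroup P] [Module A P] [Module.Finite A P] [Module.Projective A P] (r : ℕ) (_ : 2 ≤ r)
    (_ : ∀ p : PrimeSpectrum A, Module.rankAtStalk P p = r), SD.Uni A P)
    (P : Type u) [AddCommGroup P] [Module A P] [Module.Finite A P] [Module.Projective A P] (r : ℕ)
    (hr : ∀ p : PrimeSpectrum A, Module.rankAtStalk P p = r) : Module.Free A P := by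
  induction r generalizing P with
  | zero =>
    have : Subsingleton P := Module.rankAtStalk_eq_zero_iff_subsingleton.1 (funext hr)
    infer_instance
  | succ r ih =>
    rcases Nat.eq_zero_or_pos r with rfl | hpos
    · exact SD.rank_one hr
    · obtain ⟨v, φ, h⟩ := H P (r + 1) (by omega) hr
      let e : P ≃ₗ[A] (LinearMap.ker φ × A) :=
        { toFun := fun x => (⟨x - φ x • v, by simp [h]⟩, φ x)
          map_add' := fun x y => by
            refine Prod.ext (Subtype.ext ?_) ?_
            · simp only [map_add, add_smul, Prod.mk_add_mk, Submodule.coe_add]; abel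
            · simp
          map_smul' := fun c x => by
            refine Prod.ext (Subtype.ext ?_) ?_
            · simp [smul_sub, mul_smul]
            · simp
          invFun := fun y => y.1.1 + y.2 • v
          left_inv := fun x => by simp
          right_inv := fun y => by
            have := LinearMap.mem_ker.1 y.1.2
            refine Prod.ext (Subtype.ext ?_) ?_
            · simp [h, this]
            · simp [h, this] }
      have hpr : Module.Projective A (LinearMap.ker φ) :=
        Module.Projective.of_split (e.symm.toLinearMap ∘ₗ LinearMap.inl A _ _) (LinearMap.fst A _ _ ∘ₗ e.toLinearMap) (by
          ext x; simp)
      have hfi : Module.Finite A (LinearMap.ker φ) :=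
        Module.Finite.of_surjective (LinearMap.fst A _ _ ∘ₗ e.toLinearMap) (fun x => ⟨e.symm (x, 0), by simp⟩)
      have hrk : ∀ p : PrimeSpectrum A, Module.rankAtStalk (LinearMap.ker φ) p = r := by
        intro p
        have h1 := congrFun (Module.rankAtStalk_eq_of_equiv e) p
        rw [hr, Module.rankAtStalk_prod, Pi.add_apply, Module.rankAtStalk_self, Pi.one_apply] at h1
        omega
      have := ih (LinearMap.ker φ) hrk
      exact Module.Free.of_equiv e.symm

theorem SD.qs_zero : SD.QSP.{u} [] := by
  intro K _ hK f hf hl A _ _ H P _ _ _ _ r hr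
  have := H.pid hK
  have : Nontrivial K := hK.nontrivial
  have := (H.ufd hK hf.ne_zero).1
  infer_instance

theorem SD.qs_step (l : List Bool) (b : Bool) (hb : b = false → true ∉ l) (hM : SD.MainP.{u} l 1) : SD.QSP.{u} (l ++ [b]) := by
  intro K _ hK f hf hl A _ _ H
  have hn : Nontrivial K := hK.nontrivial
  obtain ⟨h1, h2⟩ := H.ufd hK hf.ne_zero
  obtain ⟨C, _, _, _, hC, hA⟩ := H.shift l b
  have h3 := (hC.ufd hK hf.ne_zero).1
  have h4 := hC.pid hK
  refine SD.free_of ?_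
  intro P _ _ _ _ r hr hrk
  refine hM C ((Ring.krullDimLE_iff).1 inferInstance) (SD.hpoly C b) ?_ ?_ A hA P r hr hrk
  · cases b
    · exact Polynomial.monic_one
    · exact Polynomial.monic_X
  · intro ht
    cases b
    · exact absurd ht (hb rfl)
    · exact Polynomial.natDegree_X.ge

theorem SD.qs_false (m : ℕ) : SD.QSP.{u} (List.replicate m false) := by
  induction m with
  | zero => exact SD.qs_zero
  | succ m ih =>
    rw [List.replicate_succ']
    exact SD.qs_step _ _ (fun _ => by simp) (SD.main_of ih 1)

theorem SD.qs (m n : ℕ) : SD.QSP.{u} (List.replicate m false ++ List.replicate n true) := by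
  induction n with
  | zero => simpa using SD.qs_false m
  | succ n ih =>
    rw [List.replicate_succ', ← List.append_assoc]
    exact SD.qs_step _ _ (by simp) (SD.main_of ih 1)

theorem SD.main (m n d : ℕ) : SD.MainP.{u} (List.replicate m false ++ List.replicate n true) d := SD.main_of (SD.qs m n) d


structure SD.UPI (R : Type u) [CommRing R] (f : Polynomial R) {ι : Type} (t : ι → Bool) (A : Type u) [CommRing A] [Algebra R A]
    (y : A) (v : ι → A) : Prop where
  unit : IsUnit (f.eval₂ (algebraMap R A) y)
  unitv : ∀ i, t i = true → IsUnit (v i)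
  ex : ∀ (E : Type u) [CommRing E] (g : R →+* E) (e : E) (w : ι → E), IsUnit (f.eval₂ g e) → (∀ i, t i = true → IsUnit (w i)) →
    ∃ k : A →+* E, k.comp (algebraMap R A) = g ∧ k y = e ∧ ∀ i, k (v i) = w i
  uniq : ∀ (E : Type u) [CommRing E] (k k' : A →+* E), k.comp (algebraMap R A) = k'.comp (algebraMap R A) → k y = k' y →
    (∀ i, k (v i) = k' (v i)) → k = k'

section
variable {R : Type u} [CommRing R] {f : Polynomial R}

theorem SD.UPI.equiv {ι : Type} {t : ι → Bool} {A A' : Type u} [CommRing A] [Algebra R A] [CommRing A'] [Algebra R A']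
    {y : A} {v : ι → A} {y' : A'} {v' : ι → A'} (H : SD.UPI R f t A y v) (H' : SD.UPI R f t A' y' v') : Nonempty (A ≃ₐ[R] A') := by
  obtain ⟨k, h1, h2, h3⟩ := H.ex A' (algebraMap R A') y' v' H'.unit H'.unitv
  obtain ⟨k', h1', h2', h3'⟩ := H'.ex A (algebraMap R A) y v H.unit H.unitv
  have hk : k.comp k' = RingHom.id _ := H'.uniq _ _ _ (by rw [RingHom.comp_assoc, h1', h1]; rfl) (by simp [h2, h2']) (by simp [h3, h3'])
  have hk' : k'.comp k = RingHom.id _ := H.uniq _ _ _ (by rw [RingHom.comp_assoc, h1, h1']; rfl) (by simp [h2, h2']) (by simp [h3, h3'])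
  exact ⟨AlgEquiv.ofRingEquiv (f := RingEquiv.ofRingHom k k' hk hk') (fun r => RingHom.congr_fun h1 r)⟩

theorem SD.UPI.reindex {ι κ : Type} {t : ι → Bool} {A : Type u} [CommRing A] [Algebra R A]
    {y : A} {v : ι → A} (H : SD.UPI R f t A y v) (e : κ ≃ ι) : SD.UPI R f (t ∘ e) A y (v ∘ e) where
  unit := H.unit
  unitv i hi := H.unitv _ hi
  ex E _ g z w h1 h2 := by
    obtain ⟨k, hk1, hk2, hk3⟩ := H.ex E g z (w ∘ e.symm) h1 (fun i hi => h2 _ (by simpa using hi))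
    exact ⟨k, hk1, hk2, fun i => by simpa using hk3 (e i)⟩
  uniq E _ k k' h1 h2 h3 := H.uniq E k k' h1 h2 (fun i => by simpa using h3 (e.symm i))

theorem SD.Tow.upi {l : List Bool} {A : Type u} [CommRing A] [Algebra R A] (H : SD.Tow R f l A) :
    ∃ y v, SD.UPI R f l.get A y v := by
  induction l generalizing A with
  | nil =>
    obtain ⟨y, hy⟩ := H
    refine ⟨y, fun i => i.elim0, hy.unit, fun i => i.elim0, ?_, ?_⟩
    · intro E _ g e w h1 h2
      obtain ⟨k, hk1, hk2⟩ := hy.ex E g e h1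
      exact ⟨k, hk1, hk2, fun i => i.elim0⟩
    · intro E _ k k' h1 h2 h3
      exact hy.uniq E k k' h1 h2
  | cons b l ih =>
    obtain ⟨D, _, _, j, x, h1, h2⟩ := H
    obtain ⟨y, v, h⟩ := ih h1
    have hj : j.toRingHom.comp (algebraMap R D) = algebraMap R A := j.comp_algebraMap
    refine ⟨j y, Fin.cons x (fun i => j (v i)), ?_, ?_, ?_, ?_⟩
    · have := h.unit.map j.toRingHom
      rw [Polynomial.hom_eval₂, hj] at this
      exact this
    · intro i
      refine Fin.cases ?_ (fun i => ?_) i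
      · intro hb
        have hb : b = true := hb
        subst hb
        have := h2.unit
        rw [SD.hpoly, Polynomial.eval₂_X] at this
        exact this
      · intro hi
        exact (h.unitv i hi).map j
    · intro E _ g e w hu hw
      obtain ⟨k, hk1, hk2, hk3⟩ := h.ex E g e (fun i => w i.succ) hu (fun i hi => hw i.succ hi)
      obtain ⟨k', hk1', hk2'⟩ := h2.ex E k (w 0) (by
        cases b
        · simp [SD.hpoly]
        · rw [SD.hpoly, Polynomial.eval₂_X]
          exact hw 0 rfl)
      have hc : ∀ z, k' (j z) = k z := fun z => RingHom.congr_fun hk1' z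
      refine ⟨k', by rw [← hj, ← RingHom.comp_assoc, hk1', hk1], (hc y).trans hk2, fun i => ?_⟩
      refine Fin.cases ?_ (fun i => ?_) i
      · exact hk2'
      · exact (hc _).trans (hk3 i)
    · intro E _ k k' e1 e2 e3
      refine h2.uniq E k k' ?_ (e3 0)
      refine h.uniq E _ _ ?_ e2 (fun i => e3 i.succ)
      rw [RingHom.comp_assoc, RingHom.comp_assoc, hj, e1]

theorem SD.upi_tow {A : Type u} [CommRing A] [Algebra R A] {m n : ℕ} {y : A} {v : Fin m ⊕ Fin n → A}
    (H : SD.UPI R f (Sum.elim (fun _ => false) (fun _ => true)) A y v) : SD.Tow R f (List.replicate m false ++ List.replicate n true) A := by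
  obtain ⟨T, _, _, hT⟩ := SD.Tow.exist R f (List.replicate m false ++ List.replicate n true)
  obtain ⟨y', v', h⟩ := hT.upi
  have hlen : m + n = (List.replicate m false ++ List.replicate n true).length := by simp
  have h2 := h.reindex (finSumFinEquiv.trans (finCongr hlen))
  have ht : (List.replicate m false ++ List.replicate n true).get ∘ (finSumFinEquiv.trans (finCongr hlen)) =
      Sum.elim (fun _ : Fin m => false) (fun _ : Fin n => true) := by
    funext s
    cases s with
    | inl i => simp
    | inr i => simp
  rw [ht] at h2
  obtain ⟨e⟩ := h2.equiv H
  exact hT.congr e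

theorem SD.upi_swap {A : Type u} [CommRing A] [Algebra R A] {m n : ℕ} {y : A} {v : Fin m ⊕ Fin (n + 1) → A}
    (H : SD.UPI R 1 (Sum.elim (fun _ => false) (fun _ => true)) A y v) :
    SD.UPI R Polynomial.X (Sum.elim (fun _ => false) (fun _ => true)) A (v (Sum.inr 0))
      (Sum.elim (Fin.cons y (fun i => v (Sum.inl i)) : Fin (m + 1) → A) (fun i : Fin n => v (Sum.inr i.succ))) where
  unit := by
    rw [Polynomial.eval₂_X]
    exact H.unitv _ rfl
  unitv i hi := by
    cases i with
    | inl i => cases hi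
    | inr i => exact H.unitv _ rfl
  ex E _ g e w h1 h2 := by
    rw [Polynomial.eval₂_X] at h1
    obtain ⟨k, hk1, hk2, hk3⟩ := H.ex E g (w (Sum.inl 0)) (Sum.elim (fun i => w (Sum.inl i.succ)) (Fin.cons e (fun i => w (Sum.inr i)))) (by simp) (by
      intro i hi
      cases i with
      | inl i => cases hi
      | inr i =>
        refine Fin.cases ?_ (fun i => ?_) i
        · exact h1
        · exact h2 _ rfl)
    refine ⟨k, hk1, hk3 (Sum.inr 0), fun i => ?_⟩
    cases i with
    | inl i =>
      refine Fin.cases ?_ (fun i => ?_) i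
      · exact hk2
      · exact hk3 (Sum.inl i)
    | inr i => exact hk3 (Sum.inr i.succ)
  uniq E _ k k' h1 h2 h3 := by
    refine H.uniq E k k' h1 (h3 (Sum.inl 0)) fun i => ?_
    cases i with
    | inl i => exact h3 (Sum.inl i.succ)
    | inr i =>
      refine Fin.cases ?_ (fun i => ?_) i
      · exact h2
      · exact h3 (Sum.inr i)

theorem SD.upi_loc (m n : ℕ) (f : Polynomial R) (B : Type u) [CommRing B] [Algebra R B] [Algebra (MvPolynomial (Fin m ⊕ Fin n) R) B]
    [IsScalarTower R (MvPolynomial (Fin m ⊕ Fin n) R) B]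
    [IsLocalization (Ymonoid R m n) B] (A : Type u) [CommRing A] [Algebra (Polynomial B) A]
    [IsLocalization.Away (f.map (algebraMap R B)) A] :
    let _ : Algebra R A := ((algebraMap (Polynomial B) A).comp (Polynomial.C.comp (algebraMap R B))).toAlgebra
    SD.UPI R f (Sum.elim (fun _ => false) (fun _ => true)) A (algebraMap (Polynomial B) A Polynomial.X)
      (fun i => algebraMap (Polynomial B) A (Polynomial.C (algebraMap (MvPolynomial (Fin m ⊕ Fin n) R) B (X i)))) := by
  intro _
  have hRB : algebraMap R B = (algebraMap (MvPolynomial (Fin m ⊕ Fin n) R) B).comp MvPolynomial.C :=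
    IsScalarTower.algebraMap_eq R (MvPolynomial (Fin m ⊕ Fin n) R) B
  have hRA : algebraMap R A = (algebraMap (Polynomial B) A).comp (Polynomial.C.comp (algebraMap R B)) := rfl
  refine ⟨?_, ?_, ?_, ?_⟩
  · have := IsLocalization.Away.algebraMap_isUnit (S := A) (f.map (algebraMap R B))
    rw [hRA, ← Polynomial.hom_eval₂]
    convert this using 2
    rw [← Polynomial.eval₂_map, Polynomial.eval₂_C_X]
  · intro i hi
    cases i with
    | inl i => cases hi
    | inr i =>
      have := IsLocalization.map_units B (⟨X (Sum.inr i), Submonoid.subset_closure ⟨i, rfl⟩⟩ : Ymonoid R m n)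
      exact (this.map Polynomial.C).map (algebraMap (Polynomial B) A)
  · intro E _ g e w h1 h2
    have hY : ∀ z : Ymonoid R m n, IsUnit (MvPolynomial.eval₂Hom g w z) := by
      intro z
      have : Ymonoid R m n ≤ (IsUnit.submonoid E).comap (MvPolynomial.eval₂Hom g w) := by
        refine (Submonoid.closure_le).2 ?_
        rintro _ ⟨i, rfl⟩
        change IsUnit (MvPolynomial.eval₂Hom g w (X (Sum.inr i)))
        rw [MvPolynomial.eval₂Hom_X']
        exact h2 _ rfl
      exact this z.2
    let kB : B →+* E := IsLocalization.lift hY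
    have hkB : ∀ z, kB (algebraMap _ B z) = MvPolynomial.eval₂Hom g w z := fun z => IsLocalization.lift_eq hY z
    have hkR : kB.comp (algebraMap R B) = g := by
      rw [hRB]
      ext r
      simp [hkB]
    have hu : IsUnit (Polynomial.eval₂RingHom kB e (f.map (algebraMap R B))) := by
      rw [Polynomial.coe_eval₂RingHom, Polynomial.eval₂_map, hkR]
      exact h1
    let k : A →+* E := IsLocalization.Away.lift (f.map (algebraMap R B)) hu
    have hk : ∀ z, k (algebraMap _ A z) = Polynomial.eval₂RingHom kB e z := fun z => IsLocalization.Away.lift_eq _ hu z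
    refine ⟨k, ?_, ?_, ?_⟩
    · rw [hRA]
      ext r
      have := RingHom.congr_fun hkR r
      simpa [hk] using this
    · simp [hk]
    · intro i
      simp [hk, hkB]
  · intro E _ k k' h1 h2 h3
    refine IsLocalization.ringHom_ext (Submonoid.powers (f.map (algebraMap R B))) ?_
    refine Polynomial.ringHom_ext' ?_ h2
    refine IsLocalization.ringHom_ext (Ymonoid R m n) ?_
    refine MvPolynomial.ringHom_ext ?_ h3
    intro r
    have := RingHom.congr_fun h1 r
    rw [hRA, hRB] at this
    exact this
end

theorem SD.final (R : Type u) [CommRing R] [IsNoetherianRing R] (d : ℕ) (hdim : ringKrullDim R ≤ d)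
    (m n : ℕ) (B : Type u) [CommRing B] [Algebra R B] [Algebra (MvPolynomial (Fin m ⊕ Fin n) R) B]
    [IsScalarTower R (MvPolynomial (Fin m ⊕ Fin n) R) B]
    [IsLocalization (Ymonoid R m n) B]
    (f : Polynomial R) (hf : f.Monic)
    (A : Type u) [CommRing A] [Algebra (Polynomial B) A]
    [IsLocalization.Away (f.map (algebraMap R B)) A]
    (P : Type u) [AddCommGroup P] [Module A P] [Module.Finite A P] [Module.Projective A P]
    (r : ℕ) (hr : d + 1 ≤ r)
    (hrk : ∀ p : PrimeSpectrum A, Module.rankAtStalk P p = r) : SD.Uni A P := by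
  let _ : Algebra R A := ((algebraMap (Polynomial B) A).comp (Polynomial.C.comp (algebraMap R B))).toAlgebra
  have H := SD.upi_loc m n f B A
  by_cases h : n = 0 ∨ 1 ≤ f.natDegree
  · refine SD.main m n d R hdim f hf ?_ A (SD.upi_tow H) P r hr hrk
    intro ht
    rcases h with rfl | h
    · simp at ht
    · exact h
  · push Not at h
    have hf1 : f = 1 := hf.natDegree_eq_zero.1 (by omega)
    obtain ⟨n, rfl⟩ : ∃ n', n = n' + 1 := ⟨n - 1, by omega⟩
    rcases subsingleton_or_nontrivial R with hR | hR
    · have : Subsingleton A := (algebraMap R A).codomain_trivial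
      exact ⟨0, 0, Subsingleton.elim _ _⟩
    subst hf1
    exact SD.main (m + 1) n d R hdim Polynomial.X Polynomial.monic_X (fun _ => Polynomial.natDegree_X.ge) A (SD.upi_tow (SD.upi_swap H)) P r hr hrk

/-- **Theorem (Serre dimension of `B[Y, f⁻¹]`, `f` monic).**
Let `R` be a commutative Noetherian ring of finite Krull dimension `d`,
`B = R[X_1,…,X_m,Y_1^{±1},…,Y_n^{±1}]` a Laurent polynomial ring over `R`,
`f ∈ R[Y]` a monic polynomial and `A = B[Y, f⁻¹]` the localization of `B[Y]` at the powers
of `f`.  Then every finitely generated projective `A`-module of constant rank `≥ d + 1`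
has a unimodular element. -/
theorem serre_dimension_of_laurent_overring
    (R : Type*) [CommRing R] [IsNoetherianRing R] (d : ℕ) (hdim : ringKrullDim R = d)
    (m n : ℕ)
    (B : Type*) [CommRing B] [Algebra R B] [Algebra (MvPolynomial (Fin m ⊕ Fin n) R) B]
    [IsScalarTower R (MvPolynomial (Fin m ⊕ Fin n) R) B]
    [IsLocalization (Ymonoid R m n) B]
    (f : Polynomial R) (hf : f.Monic)
    (A : Type*) [CommRing A] [Algebra (Polynomial B) A]
    [IsLocalization.Away (f.map (algebraMap R B)) A]
    (P : Type*) [AddCommGroup P] [Module A P] [Module.Finite A P] [Module.Projective A P]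
    (r : ℕ) (hr : d + 1 ≤ r)
    (hrank : ∀ p : PrimeSpectrum A,
      Module.finrank (Localization.AtPrime p.asIdeal) (LocalizedModule p.asIdeal.primeCompl P)
        = r) :
    ∃ (v : P) (φ : P →ₗ[A] A), φ v = 1 := by
  let B0 := Localization (Ymonoid R m n)
  let A0 := Localization.Away (f.map (algebraMap R B0))
  let eB : B ≃ₐ[MvPolynomial (Fin m ⊕ Fin n) R] B0 := IsLocalization.algEquiv (Ymonoid R m n) B B0
  let eP : Polynomial B ≃+* Polynomial B0 := Polynomial.mapEquiv eB.toRingEquiv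
  have heP : eP (f.map (algebraMap R B)) = f.map (algebraMap R B0) := by
    change Polynomial.map _ _ = _
    rw [Polynomial.map_map]
    congr 1
    ext x
    rw [IsScalarTower.algebraMap_eq R (MvPolynomial (Fin m ⊕ Fin n) R) B, IsScalarTower.algebraMap_eq R (MvPolynomial (Fin m ⊕ Fin n) R) B0]
    exact eB.commutes _
  let eA : A ≃+* A0 := IsLocalization.ringEquivOfRingEquiv (M := Submonoid.powers (f.map (algebraMap R B)))
    (T := Submonoid.powers (f.map (algebraMap R B0))) A A0 eP (by
      rw [Submonoid.map_powers]; exact congrArg _ heP)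
  let _ : Algebra A A0 := eA.toRingHom.toAlgebra
  have hrk : ∀ p : PrimeSpectrum A, Module.rankAtStalk P p = r := hrank
  have hU : SD.Uni A0 (A0 ⊗[A] P) := by
    obtain ⟨N, π, hπ⟩ := Module.Finite.exists_fin' A0 (A0 ⊗[A] P)
    let e := LinearMap.quotKerEquivOfSurjective π hπ
    have h1 : Module.Projective A0 ((Fin N → A0) ⧸ LinearMap.ker π) := Module.Projective.of_equiv e.symm
    obtain ⟨v, φ, h⟩ := SD.final R d hdim.le m n B0 f hf A0 ((Fin N → A0) ⧸ LinearMap.ker π) r hr (fun p => by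
      rw [Module.rankAtStalk_eq_of_equiv e, Module.rankAtStalk_baseChange, hrk])
    exact ⟨e v, φ ∘ₗ e.symm.toLinearMap, by simpa using h⟩
  obtain ⟨v, φ, h⟩ := SD.lift_uni (fun x => eA.surjective x) hU
  exact ⟨v, φ, eA.injective (h.trans (map_one eA).symm)⟩
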